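/- In the standing setup, suppose 0 is accessible from ℂ \ X. Then for each t ∈ [0,1] there exists an arc L^t ⊂ ℂ such that X^t ∩ L^t = {0}, 0 is an endpoint of L^t, and the map β : [0,1] → C(ℂ) defined by β(t) = L^t is continuous, where C(ℂ) is the space of compact subsets of ℂ with the Hausdorff metric. -/

import Mathlib

open Set Metric Topology Filter

/-- A point `x` is accessible from a set `U ⊆ ℂ` if there is an arc `γ : [0,1] → ℂ`
with `γ 1 = x` and `γ([0,1)) ⊆ U`. -/
def Accessible (U : Set ℂ) (x : ℂ) : Prop :=
  ∃ γ : ℝ → ℂ, ContinuousOn γ (Set.Icc 0 1) ∧ Set.InjOn γ (Set.Icc 0 1) ∧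
    γ 1 = x ∧ γ '' Set.Ico 0 1 ⊆ U

/-- The union of the unbounded connected components of the complement of `K`;
for compact `K` this is the (unique) unbounded component of `ℂ \ K`. -/
def unbddComp (K : Set ℂ) : Set ℂ :=
  {z : ℂ | z ∈ Kᶜ ∧ ¬ Bornology.IsBounded (connectedComponentIn Kᶜ z)}

/-- `X^t = ℂ \ U^t`, where `U^t` is the unbounded component of `ℂ \ h^t(Bd X)`. -/
def XtSet (h : ℂ → ℝ → ℂ) (X : Set ℂ) (t : ℝ) : Set ℂ :=
  (unbddComp ((fun z => h z t) '' frontier X))ᶜ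

/-- An arc with endpoints `a` and `b`: a homeomorphic image of `[0,1]`. -/
def IsArcEnds (A : Set ℂ) (a b : ℂ) : Prop :=
  ∃ γ : ℝ → ℂ, ContinuousOn γ (Set.Icc 0 1) ∧ Set.InjOn γ (Set.Icc 0 1) ∧
    γ '' Set.Icc 0 1 = A ∧ γ 0 = a ∧ γ 1 = b


section part1
/-- Homotopy lifting for the exponential, set version. -/
theorem HL {α : Type*} [TopologicalSpace α] (S : Set α) (F : α → ℝ → ℂ)
    (hF : ContinuousOn (fun p : α × ℝ => F p.1 p.2) (S ×ˢ Icc (0:ℝ) 1))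
    (hF0 : ∀ x ∈ S, ∀ t ∈ Icc (0:ℝ) 1, F x t ≠ 0)
    (g0 : α → ℂ) (hg0 : ContinuousOn g0 S) (he : ∀ x ∈ S, Complex.exp (g0 x) = F x 0) :
    ∃ G : α → ℝ → ℂ, ContinuousOn (fun p : α × ℝ => G p.1 p.2) (S ×ˢ Icc (0:ℝ) 1) ∧
      (∀ x ∈ S, ∀ t ∈ Icc (0:ℝ) 1, Complex.exp (G x t) = F x t) ∧
      ∀ x ∈ S, G x 0 = g0 x := by
  classical
  let H : C(unitInterval × S, {z : ℂ // z ≠ 0}) :=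
    ⟨fun p => ⟨F p.2 p.1, hF0 _ p.2.2 _ p.1.2⟩, by
      refine Continuous.subtype_mk ?_ _
      refine hF.comp_continuous (f := fun p : unitInterval × S => ((p.2 : α), (p.1 : ℝ))) (by fun_prop) ?_
      intro p
      exact ⟨p.2.2, p.1.2⟩⟩
  let f : C(S, ℂ) := ⟨fun x => g0 x, continuousOn_iff_continuous_domRestrict.mp hg0⟩
  have H0 : ∀ a, H (0, a) = (fun z : ℂ ↦ (⟨_, z.exp_ne_zero⟩ : {z : ℂ // z ≠ 0})) (f a) := by
    intro a
    apply Subtype.ext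
    exact (he a a.2).symm
  let G := Complex.isCoveringMap_exp.liftHomotopy H f H0
  refine ⟨fun x t => if hx : x ∈ S then if ht : t ∈ Icc (0:ℝ) 1 then G (⟨t, ht⟩, ⟨x, hx⟩) else 0 else 0, ?_, ?_, ?_⟩
  · rw [continuousOn_iff_continuous_domRestrict]
    have : Continuous fun p : (S ×ˢ Icc (0:ℝ) 1 : Set (α × ℝ)) =>
        G (⟨p.1.2, p.2.2⟩, ⟨p.1.1, p.2.1⟩) := by
      fun_prop
    convert this using 2 with p
    obtain ⟨⟨x, t⟩, hx, ht⟩ := p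
    simp only at hx ht
    simp [Set.domRestrict, hx, ht]
  · intro x hx t ht
    simp only [hx, ht, dif_pos]
    have := Complex.isCoveringMap_exp.liftHomotopy_lifts H f H0
    have := congrArg Subtype.val (congrFun this (⟨t, ht⟩, ⟨x, hx⟩))
    exact this
  · intro x hx
    have h0 : (0:ℝ) ∈ Icc (0:ℝ) 1 := by simp
    simp only [hx, h0, dif_pos]
    exact Complex.isCoveringMap_exp.liftHomotopy_zero H f H0 ⟨x, hx⟩

theorem exp_one_im {z : ℂ} (h : Complex.exp z = 1) (hi : |z.im| < 2 * Real.pi) : z = 0 := by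
  obtain ⟨n, hn⟩ := Complex.exp_eq_one_iff.mp h
  have him : z.im = n * (2 * Real.pi) := by rw [hn]; simp
  rw [him, abs_mul, abs_of_pos Real.two_pi_pos] at hi
  have : |(n:ℝ)| < 1 := by
    by_contra hc
    push Not at hc
    nlinarith [Real.two_pi_pos]
  have h2 : n = 0 := by
    have h3 : |n| < 1 := by exact_mod_cast this
    exact Int.abs_lt_one_iff.mp h3
  rw [hn, h2]; simp

theorem CONST {α : Type*} [TopologicalSpace α] {S : Set α} (hS : IsPreconnected S) {ψ : α → ℂ}
    (hψ : ContinuousOn ψ S) (he : ∀ x ∈ S, Complex.exp (ψ x) = 1) {x y : α} (hx : x ∈ S)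
    (hy : y ∈ S) : ψ x = ψ y := by
  refine Complex.isCoveringMap_exp.eqOn_of_comp_eqOn hS hψ (continuousOn_const (c := ψ y)) ?_ hy rfl hx
  intro z hz
  apply Subtype.ext
  simp [he z hz, he y hy]

theorem HALF {α : Type*} [TopologicalSpace α] {S : Set α} (hS : IsPreconnected S) {Λ : α → ℂ}
    (hΛ : ContinuousOn Λ S) (θ : ℝ) (he : ∀ x ∈ S, 0 < (Complex.exp (Λ x - θ * Complex.I)).re)
    {x y : α} (hx : x ∈ S) (hy : y ∈ S) (h : |(Λ x).im - θ| < Real.pi / 2) :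
    |(Λ y).im - θ| < Real.pi / 2 := by
  by_contra hc
  push Not at hc
  have hcont : ContinuousOn (fun x => |(Λ x).im - θ|) S := by
    have := Complex.continuous_im.comp_continuousOn hΛ
    exact (this.sub continuousOn_const).abs
  obtain ⟨z, hz, hz2⟩ := hS.intermediate_value hx hy hcont ⟨h.le, hc⟩
  have := he z hz
  rw [Complex.exp_re] at this
  have h2 : (Λ z - θ * Complex.I).im = (Λ z).im - θ := by simp
  rw [h2, ← Real.cos_abs] at this
  simp only at hz2
  rw [hz2] at this
  simp at this

/-- If `Re (exp (Λ - θ i)) > 0` along a path, then being near `θ` propagates. -/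
theorem HALFI {Λ : ℝ → ℂ} (hΛ : ContinuousOn Λ (Icc 0 1)) (θ : ℝ)
    (he : ∀ x ∈ Icc (0:ℝ) 1, 0 < (Complex.exp (Λ x - θ * Complex.I)).re) :
    |(Λ 0).im - θ| < Real.pi / 2 ↔ |(Λ 1).im - θ| < Real.pi / 2 := by
  constructor
  · exact HALF isPreconnected_Icc hΛ θ he (by simp) (by simp)
  · exact HALF isPreconnected_Icc hΛ θ he (by simp) (by simp)

theorem LOGCONV {H : Set ℂ} (hH : Convex ℝ H) {u : ℂ → ℂ} (hu : ContinuousOn u H)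
    (h0 : ∀ x ∈ H, u x ≠ 0) : ∃ φ : ℂ → ℂ, ContinuousOn φ H ∧ ∀ x ∈ H, Complex.exp (φ x) = u x := by
  rcases H.eq_empty_or_nonempty with rfl | ⟨x0, hx0⟩
  · exact ⟨0, by simp, by simp⟩
  have hmem : ∀ x ∈ H, ∀ t ∈ Icc (0:ℝ) 1, x0 + t • (x - x0) ∈ H := fun x hx t ht =>
    hH.add_smul_sub_mem hx0 hx ht
  obtain ⟨G, hG, hGe, -⟩ := HL H (fun x t => u (x0 + t • (x - x0)))
    (by
      refine hu.comp (f := fun p : ℂ × ℝ => x0 + p.2 • (p.1 - x0)) (by fun_prop) ?_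
      intro p hp
      exact hmem _ hp.1 _ hp.2)
    (fun x hx t ht => h0 _ (hmem x hx t ht)) (fun _ => Complex.log (u x0)) continuousOn_const
    (by intro x hx; simp [Complex.exp_log (h0 _ hx0)])
  refine ⟨fun x => G x 1, ?_, ?_⟩
  · refine hG.comp (f := fun x : ℂ => (x, (1:ℝ))) (by fun_prop) ?_
    intro x hx
    exact ⟨hx, by simp⟩
  · intro x hx
    rw [hGe x hx 1 (by simp)]
    simp

theorem UNIC {H P N E1 E2 : Set ℂ} (hH : Convex ℝ H) (hP : IsClosed P) (hN : IsClosed N)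
    (hPN : P ∪ N = H) (hE : P ∩ N = E1 ∪ E2) (h1 : IsClosed E1) (h2 : IsClosed E2)
    (hd : Disjoint E1 E2) :
    ∃ ψP ψN : ℂ → ℂ, ContinuousOn ψP P ∧ ContinuousOn ψN N ∧
      (∀ x ∈ P, Complex.exp (ψP x) = 1) ∧ (∀ x ∈ N, Complex.exp (ψN x) = 1) ∧
      (∀ x ∈ E1, ψP x = ψN x) ∧ (∀ x ∈ E2, ψN x = ψP x + 2 * Real.pi * Complex.I) := by
  classical
  obtain ⟨l, l0, l1, -⟩ := exists_continuous_zero_one_of_isClosed h1 h2 hd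
  set p : ℂ → ℂ := fun x => Complex.exp (Real.pi * (l x : ℂ) * Complex.I) with hp
  set n : ℂ → ℂ := fun x => Complex.exp (-(Real.pi * (l x : ℂ) * Complex.I)) with hn
  have hpc : Continuous p := by have := l.continuous; fun_prop
  have hnc : Continuous n := by have := l.continuous; fun_prop
  set u : ℂ → ℂ := fun x => if x ∈ P then p x else n x with hu
  have huP : EqOn u p P := fun x hx => by simp [hu, hx]
  have huN : EqOn u n N := by
    intro x hx
    by_cases hxP : x ∈ P
    · have : x ∈ E1 ∪ E2 := hE ▸ ⟨hxP, hx⟩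
      rw [huP hxP]
      rcases this with h | h
      · have := l0 h
        simp only [Pi.zero_apply] at this
        simp [hp, hn, this]
      · have := l1 h
        simp only [Pi.one_apply] at this
        simp [hp, hn, this, Complex.exp_neg]
    · simp [hu, hxP]
  have huc : ContinuousOn u H := by
    rw [← hPN]
    exact (hpc.continuousOn.congr huP).union_of_isClosed (hnc.continuousOn.congr huN) hP hN
  obtain ⟨φ, hφ, hφe⟩ := LOGCONV hH huc (by
    intro x hx
    rw [← hPN] at hx
    rcases hx with hx | hx
    · rw [huP hx]; exact Complex.exp_ne_zero _
    · rw [huN hx]; exact Complex.exp_ne_zero _)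
  have hlc := l.continuous
  have hPH : P ⊆ H := hPN ▸ subset_union_left
  have hNH : N ⊆ H := hPN ▸ subset_union_right
  refine ⟨fun x => φ x - Real.pi * (l x : ℂ) * Complex.I, fun x => φ x + Real.pi * (l x : ℂ) * Complex.I,
    (hφ.mono hPH).sub (by fun_prop), (hφ.mono hNH).add (by fun_prop), ?_, ?_, ?_, ?_⟩
  · intro x hx
    simp only
    rw [Complex.exp_sub, hφe x (hPH hx), huP hx, hp]
    simp
  · intro x hx
    simp only
    rw [Complex.exp_add, hφe x (hNH hx), huN hx]
    simp only [hn]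
    rw [← Complex.exp_add]
    simp
  · intro x hx
    have := l0 hx
    simp only [Pi.zero_apply] at this
    simp [this]
  · intro x hx
    have := l1 hx
    simp only [Pi.one_apply] at this
    simp [this]; ring

/-- The boundary of a non-separating continuum is connected. -/
theorem frontier_conn {X : Set ℂ} (hX : IsClosed X) (hc : IsPreconnected X)
    (hn : IsPreconnected Xᶜ) : IsPreconnected (frontier X) := by
  rw [isPreconnected_closed_iff]
  intro A B hA hB hAB hA1 hB1
  by_contra hemp
  have hd : Disjoint (frontier X ∩ A) (frontier X ∩ B) := by
    rw [Set.disjoint_left]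
    intro x hx hy
    exact hemp ⟨x, hx.1, hx.2, hy.2⟩
  have hE : X ∩ closure Xᶜ = (frontier X ∩ A) ∪ (frontier X ∩ B) := by
    rw [← Set.inter_union_distrib_left, Set.inter_eq_left.mpr hAB, frontier_eq_closure_inter_closure,
      hX.closure_eq]
  obtain ⟨ψP, ψN, c1, c2, e1, e2, a1, a2⟩ := UNIC (convex_univ) hX (isClosed_closure (s := Xᶜ))
    (by
      apply Set.eq_univ_of_forall
      intro x
      by_cases hx : x ∈ X
      · exact Or.inl hx
      · exact Or.inr (subset_closure hx)) hE (isClosed_frontier.inter hA) (isClosed_frontier.inter hB) hd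
  obtain ⟨a, ha⟩ := hA1
  obtain ⟨b, hb⟩ := hB1
  have hsub : frontier X ⊆ X ∩ closure Xᶜ := by
    rw [frontier_eq_closure_inter_closure, hX.closure_eq]
  have q1 := CONST hc c1 e1 (hsub ha.1).1 (hsub hb.1).1
  have q2 := CONST hn.closure c2 e2 (hsub ha.1).2 (hsub hb.1).2
  have q3 := a1 a ha
  have q4 := a2 b hb
  rw [← q1, ← q2, q3] at q4
  have : (2 * Real.pi * Complex.I : ℂ) = 0 := by
    linear_combination -q4
  simp at this

def Chain (Y : Set ℂ) : Prop := ∀ ψ : ℂ → ℂ, ContinuousOn ψ Y → (∀ y ∈ Y, Complex.exp (ψ y) = 1) →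
  (∃ M : ℝ, ∀ y ∈ Y, y.re < -M → ψ y = 0) → ∀ y ∈ Y, ψ y = 0
end part1

section part2
def ArcTo (U : Set ℂ) (p : ℂ) : Prop :=
  ∃ γ : ℝ → ℂ, ContinuousOn γ (Icc 0 1) ∧ InjOn γ (Icc 0 1) ∧
    γ 1 = 0 ∧ γ '' Ico 0 1 ⊆ U ∧ γ 0 = p

theorem ArcTo.join {U : Set ℂ} (h0 : (0:ℂ) ∉ U) {p q : ℂ} (hs : segment ℝ p q ⊆ U)
    (hq : ArcTo U q) : ArcTo U p := by
  obtain ⟨γ, hc, hi, h1, hU, hq0⟩ := hq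
  have hcl : IsCompact (Icc (0:ℝ) 1 ∩ γ ⁻¹' (segment ℝ p q)) := by
    refine isCompact_Icc.of_isClosed_subset ?_ inter_subset_left
    have hsc : IsClosed (segment ℝ p q) := by
      rw [segment_eq_image_lineMap]
      exact (isCompact_Icc.image (by fun_prop)).isClosed
    exact hc.preimage_isClosed_of_isClosed isClosed_Icc hsc
  obtain ⟨τ, ⟨hτ, hτs⟩, hmax⟩ := hcl.exists_isMaxOn ⟨0, by simp, by
    simp only [mem_preimage, hq0]; exact right_mem_segment ℝ p q⟩ continuousOn_id
  have hτ1 : τ < 1 := by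
    rcases hτ.2.lt_or_eq with h | h
    · exact h
    · exfalso
      rw [h] at hτs
      simp only [mem_preimage, h1] at hτs
      exact h0 (hs hτs)
  have hmax' : ∀ s ∈ Icc (0:ℝ) 1, γ s ∈ segment ℝ p q → s ≤ τ := fun s h h' => hmax ⟨h, h'⟩
  have hr : ∀ s ∈ Icc (0:ℝ) 1, τ + s * (1 - τ) ∈ Icc (0:ℝ) 1 := by
    intro s hs
    constructor
    · nlinarith [hs.1, hτ.1]
    · nlinarith [hs.2]
  by_cases hpx : γ τ = p
  · refine ⟨fun s => γ (τ + s * (1 - τ)), ?_, ?_, ?_, ?_, ?_⟩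
    · exact hc.comp (by fun_prop) hr
    · intro s hs s' hs' he
      have := hi (hr s hs) (hr s' hs') he
      have h2 : (s - s') * (1 - τ) = 0 := by linarith
      rcases mul_eq_zero.mp h2 with h | h <;> linarith
    · simp [h1]
    · rintro _ ⟨s, hs, rfl⟩
      apply hU
      refine ⟨_, ⟨(hr s ⟨hs.1, hs.2.le⟩).1, ?_⟩, rfl⟩
      nlinarith [hs.2]
    · simp [hpx]
  · set x := γ τ with hx
    have hsegx : segment ℝ p x ⊆ segment ℝ p q :=
      (convex_segment p q).segment_subset (left_mem_segment ℝ p q) hτs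
    have hA : ∀ s ∈ Icc (0:ℝ) (1/2), p + (2 * s) • (x - p) ∈ segment ℝ p x := by
      intro s hs
      rw [segment_eq_image']
      exact ⟨2 * s, ⟨by linarith [hs.1], by linarith [hs.2]⟩, rfl⟩
    have hB : ∀ s ∈ Icc (1/2:ℝ) 1, τ + (2 * s - 1) * (1 - τ) ∈ Icc (0:ℝ) 1 := by
      intro s hs
      exact hr (2 * s - 1) ⟨by linarith [hs.1], by linarith [hs.2]⟩
    set δ : ℝ → ℂ := fun s => if s ≤ 1/2 then p + (2 * s) • (x - p) else γ (τ + (2 * s - 1) * (1 - τ)) with hδ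
    have e1 : EqOn δ (fun s => p + (2 * s) • (x - p)) (Icc 0 (1/2)) := by
      intro s hs
      simp only [hδ, if_pos hs.2]
    have e2 : EqOn δ (fun s => γ (τ + (2 * s - 1) * (1 - τ))) (Icc (1/2) 1) := by
      intro s hs
      by_cases h : s ≤ 1/2
      · have : s = 1/2 := le_antisymm h hs.1
        subst this
        simp only [hδ, if_pos h]
        norm_num
        exact hx
      · simp only [hδ, if_neg h]
    have hun : Icc (0:ℝ) 1 = Icc 0 (1/2) ∪ Icc (1/2) 1 := by
      rw [Icc_union_Icc_eq_Icc] <;> norm_num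
    refine ⟨δ, ?_, ?_, ?_, ?_, ?_⟩
    · rw [hun]
      refine ContinuousOn.union_of_isClosed ?_ ?_ isClosed_Icc isClosed_Icc
      · refine ContinuousOn.congr ?_ e1
        fun_prop
      · refine ContinuousOn.congr ?_ e2
        exact hc.comp (by fun_prop) hB
    · have key : ∀ s ∈ Icc (0:ℝ) 1, ∀ s' ∈ Icc (0:ℝ) 1, s ≤ s' → δ s = δ s' → s = s' := by
        intro s hs s' hs' hle he
        by_cases h' : s' ≤ 1/2
        · rw [e1 ⟨hs.1, hle.trans h'⟩, e1 ⟨hs'.1, h'⟩] at he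
          simp only [add_right_inj] at he
          have := smul_left_injective ℝ (sub_ne_zero.mpr hpx) he
          linarith
        · push Not at h'
          by_cases h : s ≤ 1/2
          · exfalso
            rw [e1 ⟨hs.1, h⟩, e2 ⟨h'.le, hs'.2⟩] at he
            simp only at he
            have h3 := hmax' _ (hB s' ⟨h'.le, hs'.2⟩) (he ▸ hsegx (hA s ⟨hs.1, h⟩))
            nlinarith
          · push Not at h
            rw [e2 ⟨h.le, hs.2⟩, e2 ⟨h'.le, hs'.2⟩] at he
            have := hi (hB s ⟨h.le, hs.2⟩) (hB s' ⟨h'.le, hs'.2⟩) he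
            have h2 : (s - s') * (1 - τ) = 0 := by linarith
            rcases mul_eq_zero.mp h2 with h | h <;> linarith
      intro s hs s' hs' he
      rcases le_total s s' with h | h
      · exact key s hs s' hs' h he
      · exact (key s' hs' s hs h he.symm).symm
    · rw [e2 (by norm_num)]
      norm_num [h1]
    · rintro _ ⟨s, hs', rfl⟩
      by_cases h : s ≤ 1/2
      · rw [e1 ⟨hs'.1, h⟩]
        exact hs (hsegx (hA s ⟨hs'.1, h⟩))
      · push Not at h
        rw [e2 ⟨h.le, hs'.2.le⟩]
        apply hU
        refine ⟨_, ⟨(hB s ⟨h.le, hs'.2.le⟩).1, ?_⟩, rfl⟩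
        nlinarith [hs'.2]
    · rw [e1 (by norm_num)]
      simp

theorem ARC0 {X : Set ℂ} (hX : IsClosed X) (hn : IsPreconnected Xᶜ) (h0 : (0:ℂ) ∈ X)
    (hb : X ⊆ ball 0 1) (hacc : ∃ γ : ℝ → ℂ, ContinuousOn γ (Set.Icc 0 1) ∧ Set.InjOn γ (Set.Icc 0 1) ∧
    γ 1 = 0 ∧ γ '' Set.Ico 0 1 ⊆ Xᶜ) :
    ∃ γ : ℝ → ℂ, ContinuousOn γ (Icc 0 1) ∧ InjOn γ (Icc 0 1) ∧ γ 1 = 0 ∧ γ '' Ico 0 1 ⊆ Xᶜ ∧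
      ∃ R : ℝ, 1 ≤ R ∧ γ 0 = R ∧ ∀ r : ℝ, R < r → ∀ s ∈ Icc (0:ℝ) 1, γ s ≠ r := by
  have h0' : (0:ℂ) ∉ Xᶜ := fun h => h h0
  have h1X : (1:ℂ) ∈ Xᶜ := fun h => by simpa using hb h
  have harc : ArcTo Xᶜ 1 := by
    obtain ⟨γ, hc, hi, h1, hU⟩ := hacc
    have hA : ArcTo Xᶜ (γ 0) := ⟨γ, hc, hi, h1, hU, rfl⟩
    have hm : γ 0 ∈ Xᶜ := hU ⟨0, by simp, rfl⟩
    refine (hn.induction₂ (fun x y => ArcTo Xᶜ x ↔ ArcTo Xᶜ y) ?_ ?_ ?_ hm h1X).mp hA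
    · intro x hx
      obtain ⟨ε, hε, hball⟩ := Metric.isOpen_iff.mp hX.isOpen_compl x hx
      filter_upwards [mem_nhdsWithin_of_mem_nhds (Metric.ball_mem_nhds x hε)] with y hy
      have hs : segment ℝ x y ⊆ Xᶜ :=
        ((convex_ball x ε).segment_subset (mem_ball_self hε) hy).trans hball
      constructor
      · exact ArcTo.join h0' (by rwa [segment_symm])
      · exact ArcTo.join h0' hs
    · intro x y z _ _ _ h1 h2; exact h1.trans h2
    · intro x y _ _ h; exact h.symm
  obtain ⟨γ, hc, hi, h1, hU, hq0⟩ := harc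
  have hcl : IsCompact (Icc (0:ℝ) 1 ∩ γ ⁻¹' {z : ℂ | z.im = 0 ∧ 1 ≤ z.re}) := by
    refine isCompact_Icc.of_isClosed_subset ?_ inter_subset_left
    refine hc.preimage_isClosed_of_isClosed isClosed_Icc ?_
    exact (isClosed_eq Complex.continuous_im continuous_const).inter
      (isClosed_le continuous_const Complex.continuous_re)
  obtain ⟨τ, ⟨hτ, hτs⟩, hmax⟩ := hcl.exists_isMaxOn ⟨0, by simp, by
    simp [hq0]⟩ continuousOn_id
  have hτs' : (γ τ).im = 0 ∧ 1 ≤ (γ τ).re := hτs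
  have hτ1 : τ < 1 := by
    rcases hτ.2.lt_or_eq with h | h
    · exact h
    · exfalso
      rw [h, h1] at hτs'
      norm_num at hτs'
  have hr : ∀ s ∈ Icc (0:ℝ) 1, τ + s * (1 - τ) ∈ Icc (0:ℝ) 1 := by
    intro s hs
    constructor
    · nlinarith [hs.1, hτ.1]
    · nlinarith [hs.2]
  refine ⟨fun s => γ (τ + s * (1 - τ)), ?_, ?_, ?_, ?_, (γ τ).re, hτs'.2, ?_, ?_⟩
  · exact hc.comp (by fun_prop) hr
  · intro s hs s' hs' he
    have := hi (hr s hs) (hr s' hs') he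
    have h2 : (s - s') * (1 - τ) = 0 := by linarith
    rcases mul_eq_zero.mp h2 with h | h <;> linarith
  · simp [h1]
  · rintro _ ⟨s, hs, rfl⟩
    apply hU
    refine ⟨_, ⟨(hr s ⟨hs.1, hs.2.le⟩).1, ?_⟩, rfl⟩
    nlinarith [hs.2]
  · simp only [zero_mul, add_zero]
    apply Complex.ext <;> simp [hτs'.1]
  · intro r hr1 s hs he
    simp only at he
    have hm := hmax ⟨hr s hs, show (γ (τ + s * (1 - τ))).im = 0 ∧ 1 ≤ (γ (τ + s * (1 - τ))).re by
      rw [he]; simp only [Complex.ofReal_re, Complex.ofReal_im]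
      exact ⟨trivial, by linarith [hτs'.2]⟩⟩
    have hs0 : s = 0 := by
      have : s * (1 - τ) ≤ 0 := by
        have : τ + s * (1 - τ) ≤ τ := hm
        linarith
      nlinarith [hs.1]
    rw [hs0] at he
    have := congrArg Complex.re he
    simp only [zero_mul, add_zero, Complex.ofReal_re] at this
    linarith
end part2

section part3
theorem INVC {α β : Type*} [TopologicalSpace α] [TopologicalSpace β] [T2Space β] {K : Set α}
    (hK : IsCompact K) {f : α → β} (hf : ContinuousOn f K) (g : β → α)
    (hg : ∀ x ∈ K, g (f x) = x) : ContinuousOn g (f '' K) := by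
  rw [continuousOn_iff_isClosed]
  intro t ht
  refine ⟨f '' (K ∩ t), ((hK.inter_right ht).image_of_continuousOn (hf.mono inter_subset_left)).isClosed, ?_⟩
  ext y
  constructor
  · rintro ⟨hy, x, hx, rfl⟩
    rw [mem_preimage, hg x hx] at hy
    exact ⟨⟨x, ⟨hx, hy⟩, rfl⟩, ⟨x, hx, rfl⟩⟩
  · rintro ⟨⟨x, ⟨hx, hxt⟩, rfl⟩, _⟩
    refine ⟨?_, ⟨x, hx, rfl⟩⟩
    rw [mem_preimage, hg x hx]
    exact hxt

theorem CIRC {m : ℂ → ℂ} (hm : Continuous m) {ρ : ℝ} {a : ℂ} (ha : ‖a‖ < ρ)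
    (he : ∀ θ ∈ Icc (0:ℝ) (2 * Real.pi), Complex.exp (m (ρ * Complex.exp (θ * Complex.I))) =
      ρ * Complex.exp (θ * Complex.I) - a) : False := by
  have hsl : ∀ θ : ℝ, (ρ - a * Complex.exp (-(θ * Complex.I))) ∈ Complex.slitPlane := by
    intro θ
    left
    have : ‖a * Complex.exp (-(θ * Complex.I))‖ < ρ := by
      rw [norm_mul, Complex.norm_exp]; simpa using ha
    have h2 := (le_abs_self _).trans (Complex.abs_re_le_norm (a * Complex.exp (-(θ * Complex.I))))
    rw [Complex.sub_re, Complex.ofReal_re]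
    linarith
  set ψ : ℝ → ℂ := fun θ => m (ρ * Complex.exp (θ * Complex.I)) - θ * Complex.I
    - Complex.log (ρ - a * Complex.exp (-(θ * Complex.I))) with hψ
  have hc : Continuous ψ := by
    have : Continuous fun θ : ℝ => Complex.log (ρ - a * Complex.exp (-(θ * Complex.I))) := by
      rw [continuous_iff_continuousAt]
      intro θ
      exact ContinuousAt.clog (by fun_prop) (hsl θ)
    fun_prop
  have := CONST (S := Icc (0:ℝ) (2 * Real.pi)) isPreconnected_Icc hc.continuousOn (by
    intro θ hθ
    simp only [hψ]
    rw [Complex.exp_sub, Complex.exp_sub, he θ hθ, Complex.exp_log (Complex.slitPlane_ne_zero (hsl θ))]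
    rw [div_div, div_eq_one_iff_eq]
    · rw [mul_sub, Complex.exp_neg]
      field_simp
    · exact mul_ne_zero (Complex.exp_ne_zero _) (Complex.slitPlane_ne_zero (hsl θ)))
    (x := 0) (y := 2 * Real.pi) (by simp [Real.pi_pos.le]) (by simp [Real.pi_pos.le])
  simp only [hψ, Complex.ofReal_zero, zero_mul, Complex.exp_zero, Complex.ofReal_mul,
    Complex.ofReal_ofNat, Complex.exp_two_pi_mul_I, Complex.exp_neg] at this
  have h2 : (2 * Real.pi * Complex.I : ℂ) = 0 := by
    simp only [inv_one] at this
    linear_combination this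
  simp at h2

def rayR (R : ℝ) : Set ℂ := {z | z.im = 0 ∧ R ≤ z.re}

theorem BORSUK {γ : ℝ → ℂ} (hc : ContinuousOn γ (Icc 0 1)) (hi : InjOn γ (Icc 0 1)) {R : ℝ}
    (hR : γ 0 = R) (hr : ∀ r : ℝ, R < r → ∀ s ∈ Icc (0:ℝ) 1, γ s ≠ r) :
    IsPathConnected (γ '' Icc 0 1 ∪ rayR R)ᶜ := by
  classical
  have hrc : IsClosed (rayR R) :=
    (isClosed_eq Complex.continuous_im continuous_const).inter
      (isClosed_le continuous_const Complex.continuous_re)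
  have hγc : IsCompact (γ '' Icc 0 1) := isCompact_Icc.image_of_continuousOn hc
  set J := γ '' Icc 0 1 ∪ rayR R with hJ
  have hJc : IsClosed J := hγc.isClosed.union hrc
  have hinter : ∀ z ∈ γ '' Icc 0 1, z ∈ rayR R → z = R := by
    rintro z ⟨s, hs, rfl⟩ ⟨h1, h2⟩
    by_contra hne
    have hre : γ s = ((γ s).re : ℂ) := Complex.ext (by simp) (by simp [h1])
    refine hr (γ s).re (lt_of_le_of_ne h2 ?_) s hs hre
    intro h
    rw [← h] at hre
    exact hne hre
  obtain ⟨B, hB⟩ := hγc.isBounded.exists_norm_le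
  have hfar : ∀ ρ : ℝ, B < ρ → |R| < ρ → ∀ z : ℂ, ‖z‖ = ρ → z ∈ J → z = ρ := by
    intro ρ h1 h2 z hz hzJ
    rcases hzJ with h | h
    · have := hB z h; linarith
    · have h3 : z = z.re := Complex.ext (by simp) (by simp [h.1])
      rw [h3, Complex.norm_real, Real.norm_eq_abs] at hz
      have : 0 < z.re ∨ z.re ≤ 0 := lt_or_ge _ _
      rcases this with h4 | h4
      · rw [abs_of_pos h4] at hz
        rw [h3, hz]
      · exfalso
        have h5 : |z.re| ≤ |R| := abs_le_abs_of_nonpos h4 h.2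
        linarith
  rw [← hJc.isOpen_compl.isConnected_iff_isPathConnected]
  refine ⟨?_, ?_⟩
  · set ρ := max (max (B + 1) (|R| + 1)) 1 with hρ
    have a1 : B + 1 ≤ ρ := (le_max_left _ _).trans (le_max_left _ _)
    have a2 : |R| + 1 ≤ ρ := (le_max_right _ _).trans (le_max_left _ _)
    have a3 : 1 ≤ ρ := le_max_right _ _
    refine ⟨-(ρ:ℂ), fun h => ?_⟩
    have := hfar ρ (by linarith) (by linarith) (-(ρ:ℂ)) (by simp; linarith) h
    have := congrArg Complex.re this
    simp at this
    linarith
  · have hΩ : IsOpen Jᶜ := hJc.isOpen_compl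
    by_contra hnot
    obtain ⟨p, hp, p', hp', hpp⟩ : ∃ p ∈ Jᶜ, ∃ p' ∈ Jᶜ, p' ∉ connectedComponentIn Jᶜ p := by
      by_contra hcon
      push Not at hcon
      apply hnot
      rcases (Jᶜ).eq_empty_or_nonempty with he | ⟨p, hp⟩
      · rw [he]; exact isPreconnected_empty
      · have : connectedComponentIn Jᶜ p = Jᶜ :=
          Subset.antisymm (connectedComponentIn_subset _ _) (hcon p hp)
        rw [← this]
        exact isPreconnected_connectedComponentIn
    set W := connectedComponentIn Jᶜ p with hW
    have hWo : IsOpen W := hΩ.connectedComponentIn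
    have hpW : p ∈ W := mem_connectedComponentIn hp
    have hWΩ : W ⊆ Jᶜ := connectedComponentIn_subset _ _
    have hcl : ∀ z ∈ closure W, z ∉ W → z ∈ J := by
      intro z hz hzW
      by_contra hzJ
      have hz' : z ∈ connectedComponentIn Jᶜ z := mem_connectedComponentIn hzJ
      have : (connectedComponentIn Jᶜ z ∩ W).Nonempty :=
        mem_closure_iff.mp hz _ hΩ.connectedComponentIn hz'
      obtain ⟨y, hy1, hy2⟩ := this
      have e1 := connectedComponentIn_eq hy1
      have e2 := connectedComponentIn_eq hy2
      rw [e1, ← e2] at hz'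
      exact hzW hz'
    -- logarithm on J
    have hpJ : ∀ z ∈ J, z - p ≠ 0 := fun z hz h => hp (by rw [← sub_eq_zero.mp h]; exact hz)
    have hpJ' : ∀ z ∈ J, z - p' ≠ 0 := fun z hz h => hp' (by rw [← sub_eq_zero.mp h]; exact hz)
    have hqc : ContinuousOn (fun z => (z - p) / (z - p')) J :=
      ContinuousOn.div (by fun_prop) (by fun_prop) hpJ'
    have hq0 : ∀ z ∈ J, (z - p) / (z - p') ≠ 0 := fun z hz => div_ne_zero (hpJ z hz) (hpJ' z hz)
    have hγJ : ∀ s ∈ Icc (0:ℝ) 1, γ s ∈ J := fun s hs => Or.inl ⟨s, hs, rfl⟩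
    obtain ⟨G, hGc, hGe, -⟩ := HL (univ : Set Unit) (fun _ s => (γ s - p) / (γ s - p'))
      (by
        refine hqc.comp (f := fun x : Unit × ℝ => γ x.2) ?_ ?_
        · exact hc.comp (by fun_prop) (fun x hx => hx.2)
        · intro x hx; exact hγJ _ hx.2)
      (fun x _ t ht => hq0 _ (hγJ t ht)) (fun _ => Complex.log ((γ 0 - p) / (γ 0 - p'))) continuousOn_const
      (fun x _ => Complex.exp_log (hq0 _ (hγJ 0 (by simp))))
    set G1 : ℝ → ℂ := G () with hG1
    have hG1c : ContinuousOn G1 (Icc 0 1) :=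
      hGc.comp (f := fun s : ℝ => ((), s)) (by fun_prop) (fun s hs => ⟨trivial, hs⟩)
    set ι := Function.invFunOn γ (Icc 0 1) with hι
    have hιl : ∀ s ∈ Icc (0:ℝ) 1, ι (γ s) = s := fun s hs => hi.leftInvOn_invFunOn hs
    have hιc : ContinuousOn ι (γ '' Icc 0 1) := INVC isCompact_Icc hc ι hιl
    have hrconv : Convex ℝ (rayR R) := by
      intro x hx y hy a b ha hb hab
      refine ⟨by simp [hx.1, hy.1], ?_⟩
      simp only [Complex.add_re, Complex.smul_re, smul_eq_mul]
      have e1 := hx.2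
      have e2 := hy.2
      calc R = a * R + b * R := by rw [← add_mul, hab, one_mul]
        _ ≤ _ := by gcongr
    obtain ⟨φ, hφc, hφe⟩ := LOGCONV hrconv (hqc.mono subset_union_right) (fun x hx => hq0 x (Or.inr hx))
    have hRr : (R:ℂ) ∈ rayR R := by simp [rayR]
    set g : ℂ → ℂ := fun z => if z ∈ γ '' Icc 0 1 then G1 (ι z) else φ z - φ R + G1 0 with hg
    have g1 : EqOn g (fun z => G1 (ι z)) (γ '' Icc 0 1) := fun z hz => by simp only [hg, if_pos hz]
    have g2 : EqOn g (fun z => φ z - φ R + G1 0) (rayR R) := by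
      intro z hz
      by_cases h : z ∈ γ '' Icc 0 1
      · have := hinter z h hz
        rw [g1 h]
        simp only [this]
        rw [← hR, hιl 0 (by simp)]
        ring
      · simp only [hg, if_neg h]
    have hgc : ContinuousOn g J := by
      refine ContinuousOn.union_of_isClosed ?_ ?_ hγc.isClosed hrc
      · refine ContinuousOn.congr ?_ g1
        refine hG1c.comp hιc ?_
        rintro _ ⟨s, hs, rfl⟩
        rw [hιl s hs]; exact hs
      · refine ContinuousOn.congr ?_ g2
        exact (hφc.sub continuousOn_const).add continuousOn_const
    have hge : ∀ z ∈ J, Complex.exp (g z) = (z - p) / (z - p') := by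
      rintro z (h | h)
      · rw [g1 h]
        obtain ⟨s, hs, rfl⟩ := h
        simp only [hιl s hs]
        exact hGe () trivial s hs
      · rw [g2 h]
        simp only
        rw [Complex.exp_add, Complex.exp_sub, hφe z h, hφe R hRr, hGe () trivial 0 (by simp), hR]
        rw [div_mul_cancel₀]
        exact hq0 R (Or.inr hRr)
    obtain ⟨gt, hgt⟩ := ContinuousMap.exists_restrict_eq hJc
      (⟨J.domRestrict g, continuousOn_iff_continuous_domRestrict.mp hgc⟩ : C(J, ℂ))
    have hgt' : ∀ z ∈ J, gt z = g z := fun z hz => by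
      have := congrArg (fun f : C(J, ℂ) => f ⟨z, hz⟩) hgt
      simpa using this
    set v : ℂ → ℂ := fun z => if z ∈ W then (z - p') * Complex.exp (gt z) else z - p with hv
    have v1 : EqOn v (fun z => z - p) Wᶜ := fun z hz => by
      simp only [hv, if_neg (show z ∉ W from hz)]
    have v2 : EqOn v (fun z => (z - p') * Complex.exp (gt z)) (closure W) := by
      intro z hz
      by_cases h : z ∈ W
      · simp only [hv, if_pos h]
      · rw [v1 h]
        have hzJ := hcl z hz h
        simp only
        rw [hgt' z hzJ, hge z hzJ, mul_div_cancel₀]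
        exact hpJ' z hzJ
    have hvc : ContinuousOn v univ := by
      have : (univ : Set ℂ) = closure W ∪ Wᶜ := by
        symm
        apply eq_univ_of_forall
        intro z
        by_cases h : z ∈ W
        · exact Or.inl (subset_closure h)
        · exact Or.inr h
      rw [this]
      refine ContinuousOn.union_of_isClosed ?_ ?_ isClosed_closure hWo.isClosed_compl
      · refine ContinuousOn.congr ?_ v2
        have := gt.continuous
        fun_prop
      · refine ContinuousOn.congr ?_ v1
        fun_prop
    have hv0 : ∀ z ∈ (univ : Set ℂ), v z ≠ 0 := by
      intro z _
      by_cases h : z ∈ W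
      · simp only [hv, if_pos h]
        refine mul_ne_zero (fun h0 => ?_) (Complex.exp_ne_zero _)
        rw [sub_eq_zero.mp h0] at h
        exact hpp h
      · rw [v1 h]
        intro h0
        rw [sub_eq_zero.mp h0] at h
        exact h hpW
    obtain ⟨l, hlc, hle⟩ := LOGCONV convex_univ hvc hv0
    rw [continuousOn_univ] at hlc
    set ρ := max (max (B + 1) (|R| + 1)) (max (‖p‖ + 1) (‖p'‖ + 1)) with hρ
    have a1 : B + 1 ≤ ρ := (le_max_left _ _).trans (le_max_left _ _)
    have a2 : |R| + 1 ≤ ρ := (le_max_right _ _).trans (le_max_left _ _)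
    have a3 : ‖p‖ + 1 ≤ ρ := (le_max_left _ _).trans (le_max_right _ _)
    have a4 : ‖p'‖ + 1 ≤ ρ := (le_max_right _ _).trans (le_max_right _ _)
    have hρ0 : 0 < ρ := by linarith [norm_nonneg p]
    have hn : ∀ θ : ℝ, ‖(ρ * Complex.exp (θ * Complex.I) : ℂ)‖ = ρ := by
      intro θ
      rw [norm_mul, Complex.norm_exp_ofReal_mul_I, Complex.norm_real, Real.norm_eq_abs, abs_of_pos hρ0, mul_one]
    have hoff : ∀ θ ∈ Ioo (0:ℝ) (2 * Real.pi), (ρ * Complex.exp (θ * Complex.I) : ℂ) ∈ Jᶜ := by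
      intro θ hθ hmem
      have h1 := hfar ρ (by linarith) (by linarith) _ (hn θ) hmem
      have h2 : Complex.exp (θ * Complex.I) = 1 :=
        mul_left_cancel₀ (Complex.ofReal_ne_zero.mpr hρ0.ne') (h1.trans (mul_one _).symm)
      have h3 := exp_one_im h2 (by
        simp only [Complex.mul_im, Complex.ofReal_re, Complex.I_im, Complex.ofReal_im, Complex.I_re]
        rw [abs_lt]; constructor <;> linarith [hθ.1, hθ.2])
      have h4 := congrArg Complex.im h3
      simp at h4
      linarith [hθ.1]
    have hpre : IsPreconnected ((fun θ : ℝ => (ρ * Complex.exp (θ * Complex.I) : ℂ)) '' Ioo 0 (2 * Real.pi)) :=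
      isPreconnected_Ioo.image _ (by fun_prop)
    have hend : ∀ θ : ℝ, θ ∈ Icc (0:ℝ) (2 * Real.pi) → θ ∉ Ioo (0:ℝ) (2 * Real.pi) →
        (ρ * Complex.exp (θ * Complex.I) : ℂ) ∈ J := by
      intro θ h1 h2
      have : θ = 0 ∨ θ = 2 * Real.pi := by
        by_contra hcon
        push Not at hcon
        exact h2 ⟨lt_of_le_of_ne h1.1 (Ne.symm hcon.1), lt_of_le_of_ne h1.2 hcon.2⟩
      have h3 : Complex.exp (θ * Complex.I) = 1 := by
        rcases this with h | h
        · simp [h]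
        · rw [h]; push_cast; exact Complex.exp_two_pi_mul_I
      rw [h3, mul_one]
      right
      refine ⟨by simp, ?_⟩
      simp only [Complex.ofReal_re]
      linarith [le_abs_self R]
    by_cases hcase : (((fun θ : ℝ => (ρ * Complex.exp (θ * Complex.I) : ℂ)) '' Ioo 0 (2 * Real.pi)) ∩ W).Nonempty
    · obtain ⟨y, hy1, hy2⟩ := hcase
      have hsub : ((fun θ : ℝ => (ρ * Complex.exp (θ * Complex.I) : ℂ)) '' Ioo 0 (2 * Real.pi)) ⊆ W := by
        have := hpre.subset_connectedComponentIn hy1 (F := Jᶜ) (by rintro _ ⟨θ, hθ, rfl⟩; exact hoff θ hθ)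
        rwa [← connectedComponentIn_eq hy2] at this
      refine CIRC (m := fun z => l z - gt z) (hlc.sub gt.continuous) (a := p') (ρ := ρ) (by linarith) ?_
      intro θ hθ
      rw [Complex.exp_sub, hle _ trivial]
      by_cases h : θ ∈ Ioo (0:ℝ) (2 * Real.pi)
      · rw [v2 (subset_closure (hsub ⟨θ, h, rfl⟩))]
        simp
      · have hJm := hend θ hθ h
        rw [v1 (fun hw => hWΩ hw hJm), hgt' _ hJm, hge _ hJm]
        rw [div_div_cancel₀]
        exact hpJ _ hJm
    · refine CIRC (m := l) hlc (a := p) (ρ := ρ) (by linarith) ?_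
      intro θ hθ
      rw [hle _ trivial]
      apply v1
      intro hw
      by_cases h : θ ∈ Ioo (0:ℝ) (2 * Real.pi)
      · exact hcase ⟨_, ⟨θ, h, rfl⟩, hw⟩
      · exact hWΩ hw (hend θ hθ h)
end part3

section part4
def Dset (γ : ℝ → ℂ) (R : ℝ) : Set (ℂ × ℝ) :=
  {p | p.2 ∈ Icc (0:ℝ) 1 ∧ ((R:ℂ) - p.1) ∈ Complex.slitPlane ∧ ∀ s ∈ Icc (0:ℝ) p.2, p.1 ≠ γ s}

def Vset : Set ℂ := {v | ∃ k : ℕ, v = (2 * Real.pi * (k + 1) : ℝ) * Complex.I}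

theorem Dset_down {γ : ℝ → ℂ} {R : ℝ} {w : ℂ} {s s' : ℝ} (h : (w, s) ∈ Dset γ R) (h0 : 0 ≤ s')
    (hs : s' ≤ s) : (w, s') ∈ Dset γ R :=
  ⟨⟨h0, hs.trans h.1.2⟩, h.2.1, fun t ht => h.2.2 t ⟨ht.1, ht.2.trans hs⟩⟩

theorem Dset_mul {γ : ℝ → ℂ} {R : ℝ} {w : ℂ} {s u : ℝ} (h : (w, s) ∈ Dset γ R) (hu : u ∈ Icc (0:ℝ) 1) :
    (w, u * s) ∈ Dset γ R :=
  Dset_down h (mul_nonneg hu.1 h.1.1) (mul_le_of_le_one_left h.1.1 hu.2)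

theorem mem_Dset_one {γ : ℝ → ℂ} {R : ℝ} {w : ℂ} (h : w ∈ (γ '' Icc 0 1 ∪ rayR R)ᶜ) {s : ℝ}
    (hs : s ∈ Icc (0:ℝ) 1) : (w, s) ∈ Dset γ R := by
  refine ⟨hs, ?_, ?_⟩
  · by_contra hc
    apply h
    right
    rw [Complex.mem_slitPlane_iff] at hc
    push Not at hc
    simp only [Complex.sub_re, Complex.ofReal_re, Complex.sub_im, Complex.ofReal_im] at hc
    exact ⟨by linarith [hc.2], by linarith [hc.1]⟩
  · rintro t ht rfl
    exact h (Or.inl ⟨t, ⟨ht.1, ht.2.trans hs.2⟩, rfl⟩)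

theorem exp_eq_const {L : ℝ → ℂ} (hL : ContinuousOn L (Icc 0 1)) {c : ℂ}
    (he : ∀ u ∈ Icc (0:ℝ) 1, Complex.exp (L u) = c) : L 1 = L 0 := by
  have := CONST (S := Icc (0:ℝ) 1) (ψ := fun u => L u - L 0) isPreconnected_Icc
    (hL.sub continuousOn_const) (by
      intro u hu
      rw [Complex.exp_sub, he u hu, he 0 (by simp)]
      apply div_self
      rw [← he u hu]; exact Complex.exp_ne_zero _) (x := 1) (y := 0) (by simp) (by simp)
  simp only [sub_self] at this
  exact sub_eq_zero.mp this

theorem STAGE_L {γ : ℝ → ℂ} (hc : ContinuousOn γ (Icc 0 1)) {R : ℝ} (hR : γ 0 = R) :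
    ∃ l : ℂ → ℝ → ℂ, ContinuousOn (fun p : ℂ × ℝ => l p.1 p.2) (Dset γ R) ∧
      (∀ w s, (w, s) ∈ Dset γ R → Complex.exp (l w s) = w - γ s) ∧
      (∀ w, (w, (0:ℝ)) ∈ Dset γ R → l w 0 = Complex.log (R - w) + Real.pi * Complex.I) := by
  obtain ⟨G, hG, hGe, hG0⟩ := HL (Dset γ R) (fun p u => p.1 - γ (u * p.2))
    (by
      refine ContinuousOn.sub (by fun_prop) ?_
      refine hc.comp (f := fun q : (ℂ × ℝ) × ℝ => q.2 * q.1.2) (by fun_prop) ?_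
      intro q hq
      exact (Dset_mul (w := q.1.1) hq.1 hq.2).1)
    (fun x hx t ht => sub_ne_zero.mpr (hx.2.2 _ ⟨(Dset_mul (w := x.1) hx ht).1.1,
      mul_le_of_le_one_left hx.1.1 ht.2⟩))
    (fun p => Complex.log (R - p.1) + Real.pi * Complex.I)
    (by
      refine ContinuousOn.add ?_ continuousOn_const
      exact ContinuousOn.clog (by fun_prop) (fun p hp => hp.2.1))
    (by
      intro p hp
      rw [Complex.exp_add, Complex.exp_log (Complex.slitPlane_ne_zero hp.2.1), Complex.exp_pi_mul_I]
      simp [hR])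
  refine ⟨fun w s => G (w, s) 1, ?_, ?_, ?_⟩
  · refine hG.comp (f := fun p : ℂ × ℝ => (p, (1:ℝ))) (by fun_prop) (fun p hp => ⟨hp, by simp⟩)
  · intro w s h
    simp only
    rw [hGe _ h 1 (by simp), one_mul]
  · intro w h
    simp only
    rw [← hG0 _ h]
    refine exp_eq_const (L := fun u => G (w, 0) u) (c := w - γ 0) ?_ ?_
    · exact hG.comp (f := fun u : ℝ => ((w, (0:ℝ)), u)) (by fun_prop) (fun u hu => ⟨h, hu⟩)
    · intro u hu
      rw [hGe _ h u hu]
      simp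

theorem Vset_re {v : ℂ} (hv : v ∈ Vset) : v.re = 0 := by
  obtain ⟨k, rfl⟩ := hv
  simp [-Complex.ofReal_mul]

theorem Vset_im {v : ℂ} (hv : v ∈ Vset) : 2 * Real.pi ≤ v.im := by
  obtain ⟨k, rfl⟩ := hv
  simp only [Complex.mul_im, Complex.ofReal_re, Complex.I_im, Complex.ofReal_im, Complex.I_re]
  have : (0:ℝ) ≤ k := by positivity
  nlinarith [Real.pi_pos]

theorem Vset_exp {v : ℂ} (hv : v ∈ Vset) : Complex.exp v = 1 := by
  obtain ⟨k, rfl⟩ := hv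
  rw [Complex.exp_eq_one_iff]
  exact ⟨k + 1, by push_cast; ring⟩

def Dset4 (γ : ℝ → ℂ) (R : ℝ) : Set ((ℂ × ℂ × ℂ) × ℝ) :=
  {p | (p.1.1, p.2) ∈ Dset γ R ∧ (p.1.2.1, p.2) ∈ Dset γ R ∧ p.1.2.2 ∈ Vset}

theorem STAGE_LAM {γ : ℝ → ℂ} {R : ℝ}
    {l : ℂ → ℝ → ℂ} (hl : ContinuousOn (fun p : ℂ × ℝ => l p.1 p.2) (Dset γ R))
    (hle : ∀ w s, (w, s) ∈ Dset γ R → Complex.exp (l w s) = w - γ s)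
    (hl0 : ∀ w, (w, (0:ℝ)) ∈ Dset γ R → l w 0 = Complex.log (R - w) + Real.pi * Complex.I) :
    ∃ Λ : ℂ → ℂ → ℂ → ℝ → ℂ,
      ContinuousOn (fun p : (ℂ × ℂ × ℂ) × ℝ => Λ p.1.1 p.1.2.1 p.1.2.2 p.2) (Dset4 γ R) ∧
      (∀ z w v s, ((z, w, v), s) ∈ Dset4 γ R → Complex.exp (Λ z w v s) = l w s - l z s + v) ∧
      (∀ z w v, ((z, w, v), (0:ℝ)) ∈ Dset4 γ R → Λ z w v 0 = Complex.log (l w 0 - l z 0 + v) ∧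
        0 < (l w 0 - l z 0 + v).im) := by
  have hpos : ∀ z w v, ((z, w, v), (0:ℝ)) ∈ Dset4 γ R → 0 < (l w 0 - l z 0 + v).im := by
    intro z w v h
    rw [hl0 w h.2.1, hl0 z h.1]
    have hv := Vset_im h.2.2
    simp only at hv
    simp only [Complex.add_im, Complex.sub_im, Complex.log_im]
    have e1 := Complex.arg_le_pi (R - z)
    have e2 := Complex.neg_pi_lt_arg (R - w)
    linarith
  have hmul : ∀ p ∈ Dset4 γ R, ∀ u ∈ Icc (0:ℝ) 1, (p.1, u * p.2) ∈ Dset4 γ R := by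
    intro p hp u hu
    exact ⟨Dset_mul hp.1 hu, Dset_mul hp.2.1 hu, hp.2.2⟩
  have hcomp : ContinuousOn (fun q : ((ℂ × ℂ × ℂ) × ℝ) × ℝ =>
      l q.1.1.2.1 (q.2 * q.1.2) - l q.1.1.1 (q.2 * q.1.2) + q.1.1.2.2) (Dset4 γ R ×ˢ Icc (0:ℝ) 1) := by
    refine ContinuousOn.add (ContinuousOn.sub ?_ ?_) (by fun_prop)
    · exact hl.comp (f := fun q : ((ℂ × ℂ × ℂ) × ℝ) × ℝ => (q.1.1.2.1, q.2 * q.1.2)) (by fun_prop)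
        (fun q hq => (hmul _ hq.1 _ hq.2).2.1)
    · exact hl.comp (f := fun q : ((ℂ × ℂ × ℂ) × ℝ) × ℝ => (q.1.1.1, q.2 * q.1.2)) (by fun_prop)
        (fun q hq => (hmul _ hq.1 _ hq.2).1)
  have hne : ∀ z w v s, ((z, w, v), s) ∈ Dset4 γ R → l w s - l z s + v ≠ 0 := by
    intro z w v s h h0
    have h1 : l z s = l w s + v := by linear_combination -h0
    have h2 := congrArg Complex.exp h1
    rw [Complex.exp_add, Vset_exp h.2.2, hle _ _ h.1, hle _ _ h.2.1] at h2
    have h3 : z = w := by linear_combination h2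
    subst h3
    have h4 : v = 0 := by linear_combination h0
    have := Vset_im h.2.2
    simp only [h4] at this
    simp at this
    linarith [Real.pi_pos]
  have hd0 : ∀ p ∈ Dset4 γ R, (p.1, (0:ℝ)) ∈ Dset4 γ R := fun p hp => by
    have := hmul p hp 0 (by simp)
    rwa [zero_mul] at this
  obtain ⟨G, hG, hGe, hG0⟩ := HL (Dset4 γ R)
    (fun p u => l p.1.2.1 (u * p.2) - l p.1.1 (u * p.2) + p.1.2.2) hcomp
    (fun p hp u hu => hne _ _ _ _ (hmul p hp u hu))
    (fun p => Complex.log (l p.1.2.1 0 - l p.1.1 0 + p.1.2.2))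
    (by
      refine ContinuousOn.clog ?_ ?_
      · have := hcomp.comp (f := fun p : (ℂ × ℂ × ℂ) × ℝ => (p, (0:ℝ))) (s := Dset4 γ R) (by fun_prop)
          (fun p hp => ⟨hp, by simp⟩)
        refine this.congr ?_
        intro p hp
        simp
      · intro p hp
        right
        exact (hpos _ _ _ (hd0 p hp)).ne')
    (by
      intro p hp
      simp only [zero_mul]
      exact Complex.exp_log (hne _ _ _ _ (hd0 p hp)))
  refine ⟨fun z w v s => G ((z, w, v), s) 1, ?_, ?_, ?_⟩
  · refine hG.comp (f := fun p : (ℂ × ℂ × ℂ) × ℝ => (p, (1:ℝ))) (by fun_prop) (fun p hp => ⟨hp, by simp⟩)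
  · intro z w v s h
    simp only
    rw [hGe _ h 1 (by simp), one_mul]
  · intro z w v h
    refine ⟨?_, hpos _ _ _ h⟩
    simp only
    rw [← hG0 ((z, w, v), 0) h]
    refine exp_eq_const (L := fun u => G ((z, w, v), 0) u) (c := l w 0 - l z 0 + v) ?_ ?_
    · exact hG.comp (f := fun u : ℝ => (((z, w, v), (0:ℝ)), u)) (by fun_prop) (fun u hu => ⟨h, hu⟩)
    · intro u hu
      rw [hGe _ h u hu]
      simp
end part4

section part5
theorem re_of_exp {a b : ℂ} (h : Complex.exp a = b) : a.re = Real.log ‖b‖ := by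
  rw [← h, Complex.norm_exp, Real.log_exp]

theorem lt_dist_path {p : ℝ → ℂ} (hp : ContinuousOn p (Icc 0 1)) (h0 : ∀ u ∈ Icc (0:ℝ) 1, p u ≠ 0) :
    ∃ η > 0, ∀ u ∈ Icc (0:ℝ) 1, η ≤ ‖p u‖ := by
  obtain ⟨u, hu, hm⟩ := isCompact_Icc.exists_isMinOn (s := Icc (0:ℝ) 1) ⟨0, by simp⟩ hp.norm
  exact ⟨‖p u‖, norm_pos_iff.mpr (h0 u hu), fun x hx => hm hx⟩

theorem NORM0 {γ : ℝ → ℂ} (hc : ContinuousOn γ (Icc 0 1)) (hi : InjOn γ (Icc 0 1)) {R : ℝ}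
    (hR : γ 0 = R) (hR1 : 1 ≤ R) (hr : ∀ r : ℝ, R < r → ∀ s ∈ Icc (0:ℝ) 1, γ s ≠ r) (h1 : γ 1 = 0)
    {l : ℂ → ℝ → ℂ}
    (hle : ∀ w s, (w, s) ∈ Dset γ R → Complex.exp (l w s) = w - γ s)
    {w : ℂ} (hw : w ∈ (γ '' Icc 0 1 ∪ rayR R)ᶜ) :
    ∃ η > 0, ∀ z ∈ (γ '' Icc 0 1 ∪ rayR R)ᶜ, ‖z‖ < η → ∀ v : ℂ, v.re = 0 → ∀ G : ℂ → ℂ → ℝ → ℂ,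
      ContinuousOn (fun p : ℂ × ℂ × ℝ => G p.1 p.2.1 p.2.2)
        {p | (p.1, p.2.2) ∈ Dset γ R ∧ (p.2.1, p.2.2) ∈ Dset γ R} →
      (∀ z w s, (z, s) ∈ Dset γ R → (w, s) ∈ Dset γ R → Complex.exp (G z w s) = l w s - l z s + v) →
      (∀ z w, (z, (0:ℝ)) ∈ Dset γ R → (w, (0:ℝ)) ∈ Dset γ R → 0 < (l w 0 - l z 0 + v).re →
        |(G z w 0).im| < Real.pi / 2) → |(G z w 1).im| < Real.pi / 2 := by
  set Ω := (γ '' Icc 0 1 ∪ rayR R)ᶜ with hΩ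
  have hpc := BORSUK hc hi hR hr
  obtain ⟨B, hB⟩ := (isCompact_Icc.image_of_continuousOn hc).isBounded.exists_norm_le
  have hB' : ∀ s ∈ Icc (0:ℝ) 1, ‖γ s‖ ≤ B := fun s hs => hB _ ⟨s, hs, rfl⟩
  have hB0 : 0 ≤ B := (norm_nonneg _).trans (hB' 0 (by simp))
  set ρ := 2 * B + 1 with hρ
  have hw' : (-(ρ:ℂ)) ∈ Ω := by
    rintro (h | h)
    · have := hB _ h
      rw [norm_neg, Complex.norm_real, Real.norm_eq_abs, abs_of_pos (by linarith)] at this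
      linarith
    · have := h.2
      simp only [Complex.neg_re, Complex.ofReal_re] at this
      linarith
  obtain ⟨P⟩ := hpc.joinedIn w hw _ hw'
  rename_i hP
  set p : ℝ → ℂ := fun u => P.extend u with hpd
  have hpcont : Continuous p := P.continuous_extend
  have hp0 : p 0 = w := by simp [hpd]
  have hp1 : p 1 = -(ρ:ℂ) := by simp [hpd]
  have hpΩ : ∀ u ∈ Icc (0:ℝ) 1, p u ∈ Ω := by
    intro u hu
    simp only [hpd, P.extend_apply hu]
    exact hP _
  have h0Ω : (0:ℂ) ∉ Ω := fun h => h (Or.inl ⟨1, by simp, h1⟩)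
  obtain ⟨η1, hη1, hpη⟩ := lt_dist_path hpcont.continuousOn
    (fun u hu h => h0Ω (h ▸ hpΩ u hu))
  -- choose a parameter
  set η0 := η1 / 3 with hη0
  have hetapos : 0 < η0 := by positivity
  obtain ⟨s', hs'0, hs'1, hs'⟩ : ∃ s' : ℝ, 0 ≤ s' ∧ s' < 1 ∧ ∀ s ∈ Icc s' 1, ‖γ s‖ < η0 := by
    have := (Metric.continuousOn_iff.mp hc) 1 (by simp) η0 hetapos
    obtain ⟨δ, hδ, hd⟩ := this
    refine ⟨max 0 (1 - δ / 2), le_max_left _ _, max_lt (by norm_num) (by linarith), ?_⟩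
    intro s hs
    have hs1 := (le_max_left _ _).trans hs.1
    have hs2 := (le_max_right _ _).trans hs.1
    have := hd s ⟨hs1, hs.2⟩ (by rw [Real.dist_eq, abs_lt]; constructor <;> linarith [hs.2])
    rwa [h1, dist_zero_right] at this
  obtain ⟨η2, hη2, hη2'⟩ : ∃ η2 > 0, ∀ s ∈ Icc 0 s', η2 ≤ ‖γ s‖ := by
    obtain ⟨u, hu, hm⟩ := isCompact_Icc.exists_isMinOn (s := Icc (0:ℝ) s') ⟨0, by simp [hs'0]⟩
      (hc.mono (Icc_subset_Icc le_rfl hs'1.le)).norm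
    refine ⟨‖γ u‖, norm_pos_iff.mpr ?_, fun x hx => hm hx⟩
    intro h
    have := hi ⟨hu.1, hu.2.trans hs'1.le⟩ (show (1:ℝ) ∈ Icc (0:ℝ) 1 by simp) (h.trans h1.symm)
    linarith [hu.2]
  have hs'I : s' ∈ Icc (0:ℝ) 1 := ⟨hs'0, hs'1.le⟩
  have hD0 : ∀ z : ℂ, ‖z‖ < min η2 1 → (z, s') ∈ Dset γ R := by
    intro z hz
    refine ⟨hs'I, ?_, ?_⟩
    · left
      have h3 := (le_abs_self _).trans (Complex.abs_re_le_norm z)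
      have h4 := lt_of_lt_of_le hz (min_le_right _ _)
      simp only [Complex.sub_re, Complex.ofReal_re]
      linarith
    · rintro s hs rfl
      have h4 := lt_of_lt_of_le hz (min_le_left _ _)
      linarith [hη2' s hs]
  refine ⟨min η0 (min η2 1), lt_min hetapos (lt_min hη2 one_pos), ?_⟩
  intro z hz hzη v hv G hG hGe hbase
  have hz1 := lt_of_lt_of_le hzη (min_le_left _ _)
  have hz2 := lt_of_lt_of_le hzη (min_le_right _ _)
  have hre : ∀ z w s, (z, s) ∈ Dset γ R → (w, s) ∈ Dset γ R → ‖z - γ s‖ < ‖w - γ s‖ →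
      0 < (l w s - l z s + v).re := by
    intro z w s h1 h2 h3
    simp only [Complex.add_re, Complex.sub_re, hv, re_of_exp (hle w s h2), re_of_exp (hle z s h1)]
    have : 0 < ‖z - γ s‖ := norm_pos_iff.mpr (by rw [← hle z s h1]; exact Complex.exp_ne_zero _)
    have := Real.log_lt_log this h3
    linarith
  have hre' : ∀ z w s, (z, s) ∈ Dset γ R → (w, s) ∈ Dset γ R → ‖z - γ s‖ < ‖w - γ s‖ →
      0 < (Complex.exp (G z w s - (0:ℝ) * Complex.I)).re := by
    intro z w s h1 h2 h3
    rw [Complex.ofReal_zero, zero_mul, sub_zero, hGe z w s h1 h2]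
    exact hre z w s h1 h2 h3
  have far : ∀ s ∈ Icc s' 1, ∀ u ∈ Icc (0:ℝ) 1, ∀ y : ℂ, ‖y‖ < η0 → ‖y - γ s‖ < ‖p u - γ s‖ := by
    intro s hs u hu y hy
    have e1 := norm_sub_le y (γ s)
    have e2 := norm_sub_norm_le (p u) (γ s)
    have e3 := hs' s hs
    have e4 := hpη u hu
    linarith
  have hwD : ∀ s ∈ Icc (0:ℝ) 1, (w, s) ∈ Dset γ R := fun s hs => mem_Dset_one hw hs
  have h00 : ∀ s ∈ Icc (0:ℝ) s', ((0:ℂ), s) ∈ Dset γ R := fun s hs =>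
    Dset_down (hD0 0 (by simp [hη2])) hs.1 hs.2
  -- step 4
  have st4 : |(G 0 (-(ρ:ℂ)) s').im - 0| < Real.pi / 2 := by
    have hD : ∀ s ∈ Icc (0:ℝ) s', ((0:ℂ), s) ∈ Dset γ R ∧ ((-(ρ:ℂ)), s) ∈ Dset γ R := fun s hs =>
      ⟨h00 s hs, mem_Dset_one hw' ⟨hs.1, hs.2.trans hs'1.le⟩⟩
    have hlt : ∀ s ∈ Icc (0:ℝ) s', ‖(0:ℂ) - γ s‖ < ‖(-(ρ:ℂ)) - γ s‖ := by
      intro s hs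
      have e1 := hB' s ⟨hs.1, hs.2.trans hs'1.le⟩
      have e2 := norm_sub_norm_le (-(ρ:ℂ)) (γ s)
      rw [norm_neg, Complex.norm_real, Real.norm_eq_abs, abs_of_pos (by linarith)] at e2
      rw [zero_sub, norm_neg]
      linarith
    refine HALF (S := Icc (0:ℝ) s') isPreconnected_Icc (Λ := fun s => G 0 (-(ρ:ℂ)) s) ?_ 0 ?_
      (x := 0) (by simp [hs'0]) (by simp [hs'0]) ?_
    · exact hG.comp (f := fun s : ℝ => ((0:ℂ), -(ρ:ℂ), s)) (by fun_prop) hD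
    · intro s hs
      exact hre' _ _ _ (hD s hs).1 (hD s hs).2 (hlt s hs)
    · rw [sub_zero]
      have h00' : (0:ℝ) ∈ Icc (0:ℝ) s' := by simp [hs'0]
      exact hbase _ _ (hD 0 h00').1 (hD 0 h00').2 (hre _ _ _ (hD 0 h00').1 (hD 0 h00').2 (hlt 0 h00'))
  have st3 : |(G 0 w s').im - 0| < Real.pi / 2 := by
    have hD : ∀ u ∈ Icc (0:ℝ) 1, ((0:ℂ), s') ∈ Dset γ R ∧ (p u, s') ∈ Dset γ R := fun u hu =>
      ⟨h00 s' (by simp [hs'0]), mem_Dset_one (hpΩ u hu) hs'I⟩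
    have := HALFI (Λ := fun u => G 0 (p u) s') (hG.comp (f := fun u : ℝ => ((0:ℂ), p u, s')) (by fun_prop) hD)
      0 (fun u hu => hre' _ _ _ (hD u hu).1 (hD u hu).2 (far s' (by simp [hs'1.le]) u hu 0 (by simp [hetapos])))
    simp only [hp0, hp1] at this
    exact this.mpr st4
  have st2 : |(G z w s').im - 0| < Real.pi / 2 := by
    have hn : ∀ u ∈ Icc (0:ℝ) 1, ‖(u:ℂ) * z‖ ≤ ‖z‖ := by
      intro u hu
      rw [norm_mul, Complex.norm_real, Real.norm_eq_abs, abs_of_nonneg hu.1]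
      exact mul_le_of_le_one_left (norm_nonneg _) hu.2
    have hD : ∀ u ∈ Icc (0:ℝ) 1, ((u:ℂ) * z, s') ∈ Dset γ R ∧ (w, s') ∈ Dset γ R := fun u hu =>
      ⟨hD0 _ (lt_of_le_of_lt (hn u hu) hz2), hwD s' hs'I⟩
    have := HALFI (Λ := fun u => G ((u:ℂ) * z) w s')
      (hG.comp (f := fun u : ℝ => ((u:ℂ) * z, w, s')) (by fun_prop) hD)
      0 (fun u hu => hre' _ _ _ (hD u hu).1 (hD u hu).2 (by
        have := far s' (by simp [hs'1.le]) 0 (by simp) ((u:ℂ) * z) (lt_of_le_of_lt (hn u hu) hz1)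
        rwa [hp0] at this))
    simp only [Complex.ofReal_zero, zero_mul, Complex.ofReal_one, one_mul] at this
    exact this.mp st3
  have st1 : |(G z w 1).im - 0| < Real.pi / 2 := by
    have hD : ∀ s ∈ Icc s' 1, (z, s) ∈ Dset γ R ∧ (w, s) ∈ Dset γ R := fun s hs =>
      ⟨mem_Dset_one hz ⟨hs'0.trans hs.1, hs.2⟩, mem_Dset_one hw ⟨hs'0.trans hs.1, hs.2⟩⟩
    refine HALF (S := Icc s' 1) isPreconnected_Icc (Λ := fun s => G z w s) ?_ 0 ?_
      (x := s') (by simp [hs'1.le]) (by simp [hs'1.le]) st2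
    · exact hG.comp (f := fun s : ℝ => (z, w, s)) (by fun_prop) hD
    · intro s hs
      refine hre' _ _ _ (hD s hs).1 (hD s hs).2 ?_
      have := far s hs 0 (by simp) z hz1
      rwa [hp0] at this
  simpa using st1

theorem abs_arg_sub_pi {z : ℂ} (h1 : 0 < z.im) (h2 : z.re < 0) : |z.arg - Real.pi| < Real.pi / 2 := by
  have := Complex.abs_arg_lt_pi_div_two_iff (z := z)
  have h3 : ¬ |z.arg| < Real.pi / 2 := by
    rw [this]
    push Not
    refine ⟨h2.le, ?_⟩
    rintro rfl
    simp at h1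
  have h4 : Real.pi / 2 < z.arg := by
    have h5 : 0 ≤ z.arg := Complex.arg_nonneg_iff.mpr h1.le
    rw [abs_of_nonneg h5] at h3
    push Not at h3
    rcases h3.lt_or_eq with h | h
    · exact h
    · have := (Complex.arg_eq_pi_div_two_iff.mp h.symm).1
      linarith
  have h5 := Complex.arg_le_pi z
  rw [abs_lt]
  constructor <;> linarith [Real.pi_pos]

/-- Output of the first stage. -/
theorem STAGE1 {γ : ℝ → ℂ} (hc : ContinuousOn γ (Icc 0 1)) (hi : InjOn γ (Icc 0 1)) {R : ℝ}
    (hR : γ 0 = R) (hR1 : 1 ≤ R) (hr : ∀ r : ℝ, R < r → ∀ s ∈ Icc (0:ℝ) 1, γ s ≠ r) (h1 : γ 1 = 0) :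
    ∃ (l : ℂ → ℂ) (Λ : ℂ → ℂ → ℂ → ℂ),
      ContinuousOn l (γ '' Icc 0 1 ∪ rayR R)ᶜ ∧
      (∀ w ∈ (γ '' Icc 0 1 ∪ rayR R)ᶜ, Complex.exp (l w) = w) ∧
      ContinuousOn (fun p : ℂ × ℂ × ℂ => Λ p.1 p.2.1 p.2.2)
        ((γ '' Icc 0 1 ∪ rayR R)ᶜ ×ˢ (γ '' Icc 0 1 ∪ rayR R)ᶜ ×ˢ Vset) ∧
      (∀ z ∈ (γ '' Icc 0 1 ∪ rayR R)ᶜ, ∀ w ∈ (γ '' Icc 0 1 ∪ rayR R)ᶜ, ∀ v ∈ Vset,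
        Complex.exp (Λ z w v) = l w - l z + v) ∧
      (∀ w ∈ (γ '' Icc 0 1 ∪ rayR R)ᶜ, ∃ η > 0, ∀ z ∈ (γ '' Icc 0 1 ∪ rayR R)ᶜ, ‖z‖ < η → ∀ v ∈ Vset,
        |(Λ z w v).im| < Real.pi / 2) ∧
      (∀ z ∈ (γ '' Icc 0 1 ∪ rayR R)ᶜ, ∃ η > 0, ∀ w ∈ (γ '' Icc 0 1 ∪ rayR R)ᶜ, ‖w‖ < η → ∀ v ∈ Vset,
        |(Λ z w v).im - Real.pi| < Real.pi / 2) := by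
  obtain ⟨l, hl, hle, hl0⟩ := STAGE_L hc hR
  obtain ⟨Λ, hΛ, hΛe, hΛ0⟩ := STAGE_LAM hl hle hl0
  have m1 : ∀ w ∈ (γ '' Icc 0 1 ∪ rayR R)ᶜ, (w, (1:ℝ)) ∈ Dset γ R := fun w hw => mem_Dset_one hw (by simp)
  refine ⟨fun w => l w 1, fun z w v => Λ z w v 1, ?_, ?_, ?_, ?_, ?_, ?_⟩
  · exact hl.comp (f := fun w : ℂ => (w, (1:ℝ))) (by fun_prop) m1
  · intro w hw
    simp only
    rw [hle w 1 (m1 w hw), h1, sub_zero]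
  · exact hΛ.comp (f := fun p : ℂ × ℂ × ℂ => (p, (1:ℝ))) (by fun_prop)
      (fun p hp => ⟨m1 _ hp.1, m1 _ hp.2.1, hp.2.2⟩)
  · intro z hz w hw v hv
    exact hΛe z w v 1 ⟨m1 z hz, m1 w hw, hv⟩
  · intro w hw
    obtain ⟨η, hη, H⟩ := NORM0 hc hi hR hR1 hr h1 hle hw
    refine ⟨η, hη, fun z hz hzη v hv => ?_⟩
    refine H z hz hzη v (Vset_re hv) (fun z w s => Λ z w v s) ?_ ?_ ?_
    · exact hΛ.comp (f := fun p : ℂ × ℂ × ℝ => ((p.1, p.2.1, v), p.2.2)) (by fun_prop)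
        (fun p hp => ⟨hp.1, hp.2, hv⟩)
    · intro z w s h1 h2
      exact hΛe z w v s ⟨h1, h2, hv⟩
    · intro z w h1 h2 h3
      rw [(hΛ0 z w v ⟨h1, h2, hv⟩).1, Complex.log_im]
      exact Complex.abs_arg_lt_pi_div_two_iff.mpr (Or.inl h3)
  · intro z hz
    obtain ⟨η, hη, H⟩ := NORM0 hc hi hR hR1 hr h1 hle hz
    refine ⟨η, hη, fun w hw hwη v hv => ?_⟩
    have := H w hw hwη (-v) (by simp [Vset_re hv]) (fun z w s => Λ w z v s - Real.pi * Complex.I) ?_ ?_ ?_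
    · simpa using this
    · refine ContinuousOn.sub ?_ continuousOn_const
      exact hΛ.comp (f := fun p : ℂ × ℂ × ℝ => ((p.2.1, p.1, v), p.2.2)) (by fun_prop)
        (fun p hp => ⟨hp.2, hp.1, hv⟩)
    · intro z w s h1 h2
      rw [Complex.exp_sub, hΛe w z v s ⟨h2, h1, hv⟩, Complex.exp_pi_mul_I]
      ring
    · intro z w h1 h2 h3
      have h4 := hΛ0 w z v ⟨h2, h1, hv⟩
      simp only [Complex.sub_im, Complex.mul_im, Complex.ofReal_re, Complex.I_im, Complex.ofReal_im, Complex.I_re]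
      rw [h4.1, Complex.log_im]
      have h5 : (l z 0 - l w 0 + v).re < 0 := by
        simp only [Complex.add_re, Complex.sub_re, Complex.neg_re] at h3 ⊢
        linarith
      have := abs_arg_sub_pi h4.2 h5
      simpa using this
end part5

section part6
theorem pos_lb {α : Type*} [TopologicalSpace α] {S : Set α} (hS : IsCompact S) {f : α → ℝ}
    (hf : ContinuousOn f S) (hp : ∀ x ∈ S, 0 < f x) : ∃ η > 0, ∀ x ∈ S, η ≤ f x := by
  rcases S.eq_empty_or_nonempty with rfl | hne
  · exact ⟨1, one_pos, by simp⟩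
  · obtain ⟨u, hu, hm⟩ := hS.exists_isMinOn hne hf
    exact ⟨f u, hp u hu, fun x hx => hm hx⟩

section stage2
variable {Fr : Set ℂ} {h : ℂ → ℝ → ℂ}

theorem h_small (hFr : IsCompact Fr)
    (hcont : ContinuousOn (fun p : ℂ × ℝ => h p.1 p.2) (Fr ×ˢ Set.Icc 0 1))
    (hfix : ∀ t ∈ Set.Icc (0:ℝ) 1, h 0 t = 0) {ε : ℝ} (hε : 0 < ε) :
    ∃ δ > 0, ∀ z ∈ Fr, ‖z‖ < δ → ∀ t ∈ Icc (0:ℝ) 1, ‖h z t‖ < ε := by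
  have hcl : IsCompact ((Fr ×ˢ Icc (0:ℝ) 1) ∩ (fun p : ℂ × ℝ => ‖h p.1 p.2‖) ⁻¹' (Ici ε)) :=
    (hFr.prod isCompact_Icc).of_isClosed_subset
      (hcont.norm.preimage_isClosed_of_isClosed (hFr.prod isCompact_Icc).isClosed isClosed_Ici)
      inter_subset_left
  obtain ⟨δ, hδ, H⟩ := pos_lb hcl (f := fun p => ‖p.1‖) (by fun_prop) (by
    rintro ⟨z, t⟩ ⟨⟨hz, ht⟩, hp⟩
    simp only [norm_pos_iff]
    rintro rfl
    simp only [mem_preimage, mem_Ici, hfix t ht, norm_zero] at hp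
    linarith)
  refine ⟨δ, hδ, fun z hz hzδ t ht => ?_⟩
  by_contra hc
  push Not at hc
  have := H (z, t) ⟨⟨hz, ht⟩, hc⟩
  simp only at this
  linarith

theorem h_ne (h0 : (0:ℂ) ∈ Fr)
    (hinj : ∀ t ∈ Set.Icc (0:ℝ) 1, Set.InjOn (fun z => h z t) Fr)
    (hfix : ∀ t ∈ Set.Icc (0:ℝ) 1, h 0 t = 0) {z : ℂ} (hz : z ∈ Fr \ {0}) {t : ℝ}
    (ht : t ∈ Icc (0:ℝ) 1) : h z t ≠ 0 := by
  intro he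
  exact hz.2 (hinj t ht hz.1 h0 (he.trans (hfix t ht).symm))

theorem h_big (hFr : IsCompact Fr) (h0 : (0:ℂ) ∈ Fr)
    (hcont : ContinuousOn (fun p : ℂ × ℝ => h p.1 p.2) (Fr ×ˢ Set.Icc 0 1))
    (hinj : ∀ t ∈ Set.Icc (0:ℝ) 1, Set.InjOn (fun z => h z t) Fr)
    (hfix : ∀ t ∈ Set.Icc (0:ℝ) 1, h 0 t = 0) {δ : ℝ} (hδ : 0 < δ) :
    ∃ ε > 0, ∀ z ∈ Fr, ∀ t ∈ Icc (0:ℝ) 1, ‖h z t‖ < ε → ‖z‖ < δ := by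
  have hcl : IsCompact ((Fr ∩ {z | δ ≤ ‖z‖}) ×ˢ Icc (0:ℝ) 1) :=
    (hFr.inter_right (isClosed_le continuous_const continuous_norm)).prod isCompact_Icc
  obtain ⟨ε, hε, H⟩ := pos_lb hcl (f := fun p => ‖h p.1 p.2‖)
    (hcont.norm.mono (prod_mono inter_subset_left le_rfl)) (by
    rintro ⟨z, t⟩ ⟨⟨hz, hzδ⟩, ht⟩
    simp only [norm_pos_iff]
    refine h_ne h0 hinj hfix ⟨hz, ?_⟩ ht
    rintro rfl
    simp at hzδ
    linarith)
  refine ⟨ε, hε, fun z hz t ht hlt => ?_⟩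
  by_contra hc
  push Not at hc
  have := H (z, t) ⟨⟨hz, hc⟩, ht⟩
  simp only at this
  linarith

theorem STAGE2 (hFr : IsCompact Fr) (h0 : (0:ℂ) ∈ Fr)
    (hcont : ContinuousOn (fun p : ℂ × ℝ => h p.1 p.2) (Fr ×ˢ Set.Icc 0 1))
    (hinj : ∀ t ∈ Set.Icc (0:ℝ) 1, Set.InjOn (fun z => h z t) Fr)
    (hid : ∀ z ∈ Fr, h z 0 = z)
    (hfix : ∀ t ∈ Set.Icc (0:ℝ) 1, h 0 t = 0)
    {l : ℂ → ℂ} {Λ : ℂ → ℂ → ℂ → ℂ}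
    (hl : ContinuousOn l (Fr \ {0})) (hle : ∀ w ∈ Fr \ {0}, Complex.exp (l w) = w)
    (hΛ : ContinuousOn (fun p : ℂ × ℂ × ℂ => Λ p.1 p.2.1 p.2.2) ((Fr \ {0}) ×ˢ (Fr \ {0}) ×ˢ Vset))
    (hΛe : ∀ z ∈ Fr \ {0}, ∀ w ∈ Fr \ {0}, ∀ v ∈ Vset, Complex.exp (Λ z w v) = l w - l z + v)
    (hn1 : ∀ w ∈ Fr \ {0}, ∃ η > 0, ∀ z ∈ Fr \ {0}, ‖z‖ < η → ∀ v ∈ Vset,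
        |(Λ z w v).im| < Real.pi / 2)
    (hn2 : ∀ z ∈ Fr \ {0}, ∃ η > 0, ∀ w ∈ Fr \ {0}, ‖w‖ < η → ∀ v ∈ Vset,
        |(Λ z w v).im - Real.pi| < Real.pi / 2) :
    ∃ (f : ℂ → ℝ → ℂ) (Λt : ℂ → ℂ → ℂ → ℝ → ℂ),
      ContinuousOn (fun p : ℂ × ℝ => f p.1 p.2) ((Fr \ {0}) ×ˢ Icc (0:ℝ) 1) ∧
      (∀ z ∈ Fr \ {0}, ∀ t ∈ Icc (0:ℝ) 1, Complex.exp (f z t) = h z t) ∧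
      ContinuousOn (fun p : (ℂ × ℂ × ℂ) × ℝ => Λt p.1.1 p.1.2.1 p.1.2.2 p.2)
        (((Fr \ {0}) ×ˢ (Fr \ {0}) ×ˢ Vset) ×ˢ Icc (0:ℝ) 1) ∧
      (∀ z ∈ Fr \ {0}, ∀ w ∈ Fr \ {0}, ∀ v ∈ Vset, ∀ t ∈ Icc (0:ℝ) 1,
        Complex.exp (Λt z w v t) = f w t - f z t + v) ∧
      (∀ t ∈ Icc (0:ℝ) 1, ∀ w ∈ Fr \ {0}, ∃ η > 0, ∀ z ∈ Fr \ {0}, ‖h z t‖ < η → ∀ v ∈ Vset,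
        |(Λt z w v t).im| < Real.pi / 2) ∧
      (∀ t ∈ Icc (0:ℝ) 1, ∀ z ∈ Fr \ {0}, ∃ η > 0, ∀ w ∈ Fr \ {0}, ‖h w t‖ < η → ∀ v ∈ Vset,
        |(Λt z w v t).im - Real.pi| < Real.pi / 2) := by
  set K := Fr \ {0} with hK
  have hKF : K ⊆ Fr := sdiff_subset
  obtain ⟨f, hf, hfe, hf0⟩ := HL K h (hcont.mono (prod_mono hKF le_rfl))
    (fun z hz t ht => h_ne h0 hinj hfix hz ht) l hl
    (fun z hz => (hle z hz).trans (hid z (hKF hz)).symm)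
  have hne : ∀ z ∈ K, ∀ w ∈ K, ∀ v ∈ Vset, ∀ t ∈ Icc (0:ℝ) 1, f w t - f z t + v ≠ 0 := by
    intro z hz w hw v hv t ht h0
    have h1 : f z t = f w t + v := by linear_combination -h0
    have h2 := congrArg Complex.exp h1
    rw [Complex.exp_add, Vset_exp hv, hfe z hz t ht, hfe w hw t ht, mul_one] at h2
    have h3 : z = w := hinj t ht (hKF hz) (hKF hw) h2
    subst h3
    have h4 : v = 0 := by linear_combination h0
    have := Vset_im hv
    simp only [h4] at this
    simp at this
    linarith [Real.pi_pos]
  obtain ⟨G, hG, hGe, hG0⟩ := HL (K ×ˢ K ×ˢ Vset) (fun p t => f p.2.1 t - f p.1 t + p.2.2)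
    (by
      refine ContinuousOn.add (ContinuousOn.sub ?_ ?_) (by fun_prop)
      · exact hf.comp (f := fun q : (ℂ × ℂ × ℂ) × ℝ => (q.1.2.1, q.2)) (by fun_prop)
          (fun q hq => ⟨hq.1.2.1, hq.2⟩)
      · exact hf.comp (f := fun q : (ℂ × ℂ × ℂ) × ℝ => (q.1.1, q.2)) (by fun_prop)
          (fun q hq => ⟨hq.1.1, hq.2⟩))
    (fun p hp t ht => hne _ hp.1 _ hp.2.1 _ hp.2.2 t ht)
    (fun p => Λ p.1 p.2.1 p.2.2) hΛ
    (fun p hp => by rw [hΛe _ hp.1 _ hp.2.1 _ hp.2.2, hf0 _ hp.1, hf0 _ hp.2.1])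
  have hre : ∀ z ∈ K, ∀ w ∈ K, ∀ v ∈ Vset, ∀ t ∈ Icc (0:ℝ) 1, ‖h z t‖ < ‖h w t‖ →
      0 < (f w t - f z t + v).re := by
    intro z hz w hw v hv t ht hlt
    simp only [Complex.add_re, Complex.sub_re, Vset_re hv, re_of_exp (hfe w hw t ht), re_of_exp (hfe z hz t ht)]
    have := Real.log_lt_log (norm_pos_iff.mpr (h_ne h0 hinj hfix hz ht)) hlt
    linarith
  have hlb : ∀ w ∈ K, ∃ m > 0, ∀ t ∈ Icc (0:ℝ) 1, m ≤ ‖h w t‖ := by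
    intro w hw
    refine pos_lb isCompact_Icc ?_ (fun t ht => norm_pos_iff.mpr (h_ne h0 hinj hfix hw ht))
    exact (hcont.comp (f := fun t : ℝ => (w, t)) (by fun_prop) (fun t ht => ⟨hKF hw, ht⟩)).norm
  have hGp : ∀ z ∈ K, ∀ w ∈ K, ∀ v ∈ Vset, ContinuousOn (fun t => G (z, w, v) t) (Icc 0 1) := by
    intro z hz w hw v hv
    exact hG.comp (f := fun t : ℝ => ((z, w, v), t)) (by fun_prop) (fun t ht => ⟨⟨hz, hw, hv⟩, ht⟩)
  refine ⟨f, fun z w v t => G (z, w, v) t, hf, hfe, hG, ?_, ?_, ?_⟩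
  · intro z hz w hw v hv t ht
    exact hGe (z, w, v) ⟨hz, hw, hv⟩ t ht
  · intro t ht w hw
    obtain ⟨m, hm, hmw⟩ := hlb w hw
    obtain ⟨δ, hδ, hδ'⟩ := h_small hFr hcont hfix hm
    obtain ⟨η, hη, hη'⟩ := hn1 w hw
    obtain ⟨ε, hε, hε'⟩ := h_big hFr h0 hcont hinj hfix (lt_min hδ hη)
    refine ⟨ε, hε, fun z hz hlt v hv => ?_⟩
    have hzs := hε' z (hKF hz) t ht hlt
    have := HALF (S := Icc (0:ℝ) 1) isPreconnected_Icc (hGp z hz w hw v hv) 0 (by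
      intro s hs
      rw [Complex.ofReal_zero, zero_mul, sub_zero, hGe (z, w, v) ⟨hz, hw, hv⟩ s hs]
      refine hre z hz w hw v hv s hs ?_
      exact (hδ' z (hKF hz) (hzs.trans_le (min_le_left _ _)) s hs).trans_le (hmw s hs))
      (x := 0) (y := t) (by simp) ht (by
        rw [hG0 (z, w, v) ⟨hz, hw, hv⟩, sub_zero]
        exact hη' z hz (hzs.trans_le (min_le_right _ _)) v hv)
    simpa using this
  · intro t ht z hz
    obtain ⟨m, hm, hmw⟩ := hlb z hz
    obtain ⟨δ, hδ, hδ'⟩ := h_small hFr hcont hfix hm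
    obtain ⟨η, hη, hη'⟩ := hn2 z hz
    obtain ⟨ε, hε, hε'⟩ := h_big hFr h0 hcont hinj hfix (lt_min hδ hη)
    refine ⟨ε, hε, fun w hw hlt v hv => ?_⟩
    have hzs := hε' w (hKF hw) t ht hlt
    refine HALF (S := Icc (0:ℝ) 1) isPreconnected_Icc (hGp z hz w hw v hv) Real.pi (by
      intro s hs
      rw [Complex.exp_sub, Complex.exp_pi_mul_I, hGe (z, w, v) ⟨hz, hw, hv⟩ s hs]
      have h3 : ‖h w s‖ < ‖h z s‖ := (hδ' w (hKF hw) (hzs.trans_le (min_le_left _ _)) s hs).trans_le (hmw s hs)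
      have h4 := Real.log_lt_log (norm_pos_iff.mpr (h_ne h0 hinj hfix hw hs)) h3
      simp only [div_neg, div_one, Complex.neg_re, Complex.add_re, Complex.sub_re, Vset_re hv,
        re_of_exp (hfe w hw s hs), re_of_exp (hfe z hz s hs)]
      linarith)
      (x := 0) (y := t) (by simp) ht (by
        rw [hG0 (z, w, v) ⟨hz, hw, hv⟩]
        exact hη' w hw (hzs.trans_le (min_le_right _ _)) v hv)
end stage2
end part6

section part7
/-- point on the spoke from `d` to `q` -/
def spk (d q : ℂ) (s : ℝ) : ℂ := d + (s:ℂ) * (q - d)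

theorem spk_zero (d q : ℂ) : spk d q 0 = d := by simp [spk]
theorem spk_one (d q : ℂ) : spk d q 1 = q := by simp [spk]
theorem spk_self (d : ℂ) (s : ℝ) : spk d d s = d := by simp [spk]
theorem spk_cont (d q : ℂ) : Continuous (spk d q) := by unfold spk; fun_prop

theorem dist_spk_left (d q : ℂ) {s : ℝ} (hs : s ∈ Icc (0:ℝ) 1) : dist (spk d q s) d = s * dist q d := by
  rw [Complex.dist_eq, Complex.dist_eq]
  have : spk d q s - d = (s:ℂ) * (q - d) := by simp [spk]
  rw [this, norm_mul, Complex.norm_real, Real.norm_eq_abs, abs_of_nonneg hs.1]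

theorem dist_spk_right (d q : ℂ) {s : ℝ} (hs : s ∈ Icc (0:ℝ) 1) :
    dist q (spk d q s) = (1 - s) * dist q d := by
  rw [Complex.dist_eq, Complex.dist_eq]
  have : q - spk d q s = ((1 - s : ℝ):ℂ) * (q - d) := by simp [spk]; ring
  rw [this, norm_mul, Complex.norm_real, Real.norm_eq_abs, abs_of_nonneg (by linarith [hs.2])]

theorem spk_re_le {d q : ℂ} {m s : ℝ} (hs : s ∈ Icc (0:ℝ) 1) (hd : d.re < m) (hq : q.re < m) :
    (spk d q s).re < m := by
  have : (spk d q s).re = (1 - s) * d.re + s * q.re := by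
    simp [spk]; ring
  rw [this]
  rcases hs.1.eq_or_lt with h | h
  · subst h; linarith
  · have := hs.2
    nlinarith

/-- Points of a spoke are strictly closer to `B` than to `C`. -/
theorem SP {B C : Set ℂ} (hC : IsClosed C) (hCne : C.Nonempty) (hd : Disjoint B C)
    {q b : ℂ} (hb : b ∈ B) (hqb : dist q b = infDist q B) (hq : infDist q B ≤ infDist q C)
    {s : ℝ} (hs : s ∈ Ico (0:ℝ) 1) :
    infDist (spk b q s) B < infDist (spk b q s) C := by
  have hsI : s ∈ Icc (0:ℝ) 1 := ⟨hs.1, hs.2.le⟩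
  obtain ⟨c, hc, hcd⟩ := hC.exists_infDist_eq_dist hCne (spk b q s)
  have h1 : infDist (spk b q s) B ≤ dist (spk b q s) b := infDist_le_dist_of_mem hb
  rw [hcd]
  refine lt_of_le_of_lt h1 ?_
  by_contra hle
  push Not at hle
  have hbc : b ≠ c := fun h => (Set.disjoint_left.mp hd) hb (h ▸ hc)
  have hqc : dist q b ≤ dist q c := hqb ▸ hq.trans (infDist_le_dist_of_mem hc)
  have e1 := dist_spk_left b q hsI
  have e2 := dist_spk_right b q hsI
  have e3 := dist_triangle q (spk b q s) c
  have e4 : dist q (spk b q s) + dist (spk b q s) c = dist q c := by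
    apply le_antisymm _ e3
    nlinarith
  have e5 : dist q c = dist q b := by nlinarith
  have e6 : dist (spk b q s) c = s * dist q b := by nlinarith
  rcases eq_or_ne q b with rfl | hne
  · rw [dist_self] at e5
    exact hbc (dist_eq_zero.mp e5)
  have hpos : 0 < dist q b := dist_pos.mpr hne
  obtain ⟨r, hr, hrx⟩ := dist_add_dist_eq_iff.mp e4
  have e7 : dist q (spk b q s) = r * dist q c := by
    rw [← hrx, dist_left_lineMap, Real.norm_eq_abs, abs_of_nonneg hr.1]
  have hrs : r = 1 - s := by
    rw [e5, e2] at e7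
    exact (mul_right_cancel₀ hpos.ne' e7).symm
  apply hbc
  rw [AffineMap.lineMap_apply_module', hrs] at hrx
  have h3 : ((1 - s : ℝ):ℂ) * (c - b) = 0 := by
    have : ((1 - s : ℝ):ℂ) * (c - q) + q = spk b q s := by rw [← hrx]; simp
    rw [spk] at this
    push_cast at this ⊢
    linear_combination this
  rcases mul_eq_zero.mp h3 with h | h
  · have : (1 - s) = 0 := by exact_mod_cast h
    linarith [hs.2]
  · exact (sub_eq_zero.mp h).symm

theorem spk_nearest {B : Set ℂ} {q b : ℂ} (hb : b ∈ B) (hqb : dist q b = infDist q B)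
    {s : ℝ} (hs : s ∈ Icc (0:ℝ) 1) : dist (spk b q s) b = infDist (spk b q s) B := by
  apply le_antisymm _ (infDist_le_dist_of_mem hb)
  rw [le_infDist ⟨b, hb⟩]
  intro b' hb'
  have e0 : dist q b ≤ dist q b' := hqb ▸ infDist_le_dist_of_mem hb'
  have e1 := dist_spk_left b q hs
  have e2 := dist_spk_right b q hs
  have e3 := dist_triangle q (spk b q s) b'
  nlinarith

theorem EXT {D Q Y : Set ℂ} (hD : IsClosed D) (hDne : D.Nonempty) {ε : ℂ} {θ : ℝ}
    (hεθ : Complex.exp (θ * Complex.I) = -ε) (hε : ε = 1 ∨ ε = -1)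
    (hsp : ∀ q ∈ Q, ∀ d ∈ D, dist q d = infDist q D → ∀ s ∈ Icc (0:ℝ) 1, ∀ y ∈ Y, y ≠ q → y ≠ spk d q s)
    {Λ : ℂ → ℂ → ℂ} (hΛ : ContinuousOn (fun p : ℂ × ℂ => Λ p.1 p.2) (D ×ˢ Y))
    (hΛe : ∀ d ∈ D, ∀ y ∈ Y, Complex.exp (Λ d y) = ε * (y - d))
    (hn : ∀ d ∈ D, ∃ M : ℝ, ∀ y ∈ Y, y.re < -M → |(Λ d y).im - θ| < Real.pi / 2)
    (hch : ∀ q ∈ Q, Chain (Y \ {q})) :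
    ∃ Λ' : ℂ → ℂ → ℂ,
      ContinuousOn (fun p : ℂ × ℂ => Λ' p.1 p.2) {p | p.1 ∈ Q ∧ p.2 ∈ Y ∧ p.2 ≠ p.1} ∧
      (∀ q ∈ Q, ∀ y ∈ Y, y ≠ q → Complex.exp (Λ' q y) = ε * (y - q)) ∧
      (∀ d ∈ D ∩ Q, ∀ y ∈ Y, y ≠ d → Λ' d y = Λ d y) ∧
      (∀ q ∈ Q, ∃ M : ℝ, ∀ y ∈ Y, y ≠ q → y.re < -M → |(Λ' q y).im - θ| < Real.pi / 2) := by
  have hε0 : ε ≠ 0 := by rcases hε with h | h <;> simp [h]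
  set T : Set (ℂ × ℂ × ℂ) := {p | p.1 ∈ Q ∧ p.2.1 ∈ D ∧ dist p.1 p.2.1 = infDist p.1 D ∧ p.2.2 ∈ Y ∧ p.2.2 ≠ p.1} with hT
  obtain ⟨G, hG, hGe, hG0⟩ := HL T (fun p s => ε * (p.2.2 - spk p.2.1 p.1 s))
    (by unfold spk; fun_prop)
    (fun p hp s hs => mul_ne_zero hε0 (sub_ne_zero.mpr (hsp _ hp.1 _ hp.2.1 hp.2.2.1 s hs _ hp.2.2.2.1 hp.2.2.2.2)))
    (fun p => Λ p.2.1 p.2.2)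
    (hΛ.comp (f := fun p : ℂ × ℂ × ℂ => (p.2.1, p.2.2)) (by fun_prop) (fun p hp => ⟨hp.2.1, hp.2.2.2.1⟩))
    (fun p hp => by rw [spk_zero]; exact hΛe _ hp.2.1 _ hp.2.2.2.1)
  have hΓc : ContinuousOn (fun p => G p 1) T :=
    hG.comp (f := fun p : ℂ × ℂ × ℂ => (p, (1:ℝ))) (by fun_prop) (fun p hp => ⟨hp, by simp⟩)
  have hΓe : ∀ q d y, (q, d, y) ∈ T → Complex.exp (G (q, d, y) 1) = ε * (y - q) := by
    intro q d y h
    rw [hGe _ h 1 (by simp)]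
    simp only [spk_one]
  have hΓn : ∀ q ∈ Q, ∀ d ∈ D, dist q d = infDist q D → ∃ M : ℝ, ∀ y ∈ Y, y ≠ q → y.re < -M →
      |(G (q, d, y) 1).im - θ| < Real.pi / 2 := by
    intro q hq d hd hqd
    obtain ⟨M, hM⟩ := hn d hd
    refine ⟨max M (max (-q.re) (-d.re)), fun y hy hyq hre => ?_⟩
    have r1 : y.re < -M := by
      have := le_max_left M (max (-q.re) (-d.re)); linarith
    have r2 : y.re < q.re := by
      have := (le_max_left (-q.re) (-d.re)).trans (le_max_right M _); linarith
    have r3 : y.re < d.re := by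
      have := (le_max_right (-q.re) (-d.re)).trans (le_max_right M _); linarith
    have hmem : (q, d, y) ∈ T := ⟨hq, hd, hqd, hy, hyq⟩
    have := HALFI (Λ := fun s => G (q, d, y) s)
      (hG.comp (f := fun s : ℝ => ((q, d, y), s)) (by fun_prop) (fun s hs => ⟨hmem, hs⟩)) θ (by
        intro s hs
        rw [Complex.exp_sub, hGe _ hmem s hs, hεθ]
        have : ε * (y - spk d q s) / -ε = spk d q s - y := by field_simp; ring
        simp only [this]
        have h3 : -(spk d q s).re < -y.re := by
          have := spk_re_le (d := -d) (q := -q) (m := -y.re) hs (by simpa using r3) (by simpa using r2)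
          have e : spk (-d) (-q) s = - spk d q s := by simp only [spk]; ring
          rw [e] at this
          simpa using this
        simp only [Complex.sub_re]; linarith)
    refine this.mp ?_
    rw [hG0 _ hmem]
    exact hM y hy r1
  have hind : ∀ q ∈ Q, ∀ d ∈ D, dist q d = infDist q D → ∀ d' ∈ D, dist q d' = infDist q D → ∀ y ∈ Y, y ≠ q →
      G (q, d, y) 1 = G (q, d', y) 1 := by
    intro q hq d hd hqd d' hd' hqd' y hy hyq
    obtain ⟨M, hM⟩ := hΓn q hq d hd hqd
    obtain ⟨M', hM'⟩ := hΓn q hq d' hd' hqd'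
    have hm : ∀ y ∈ Y \ {q}, (q, d, y) ∈ T ∧ (q, d', y) ∈ T := fun y hy =>
      ⟨⟨hq, hd, hqd, hy.1, hy.2⟩, ⟨hq, hd', hqd', hy.1, hy.2⟩⟩
    have he : ∀ y ∈ Y \ {q}, Complex.exp (G (q, d, y) 1 - G (q, d', y) 1) = 1 := by
      intro y hy
      rw [Complex.exp_sub, hΓe _ _ _ (hm y hy).1, hΓe _ _ _ (hm y hy).2]
      exact div_self (mul_ne_zero hε0 (sub_ne_zero.mpr hy.2))
    have := hch q hq (fun y => G (q, d, y) 1 - G (q, d', y) 1) (by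
      refine ContinuousOn.sub ?_ ?_
      · exact hΓc.comp (f := fun y : ℂ => (q, d, y)) (by fun_prop) (fun y hy => (hm y hy).1)
      · exact hΓc.comp (f := fun y : ℂ => (q, d', y)) (by fun_prop) (fun y hy => (hm y hy).2)) he
      ⟨max M M', by
        intro y hy hre
        have r1 := hM y hy.1 hy.2 (by have := le_max_left M M'; linarith)
        have r2 := hM' y hy.1 hy.2 (by have := le_max_right M M'; linarith)
        apply exp_one_im (he y hy)
        rw [abs_lt] at *
        simp only [Complex.sub_im]
        constructor <;> linarith [Real.pi_pos, r1.1, r1.2, r2.1, r2.2]⟩ y ⟨hy, hyq⟩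
    exact sub_eq_zero.mp this
  choose n hnD hnd using fun q => hD.exists_infDist_eq_dist hDne q
  refine ⟨fun q y => G (q, n q, y) 1, ?_, ?_, ?_, ?_⟩
  · rintro ⟨q, y⟩ ⟨hq, hy, hyq⟩
    simp only at hq hy hyq
    refine tendsto_of_seq_tendsto ?_
    intro u hu
    rw [tendsto_nhdsWithin_iff] at hu
    obtain ⟨hu1, hu2⟩ := hu
    refine tendsto_of_subseq_tendsto ?_
    intro ns hns
    have hun := hu1.comp hns
    have hq1 : Tendsto (fun k => (u (ns k)).1) atTop (𝓝 q) := (continuous_fst.tendsto _).comp hun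
    have hy1 : Tendsto (fun k => (u (ns k)).2) atTop (𝓝 y) := (continuous_snd.tendsto _).comp hun
    have hid : Tendsto (fun k => infDist (u (ns k)).1 D) atTop (𝓝 (infDist q D)) :=
      ((continuous_infDist_pt D).tendsto q).comp hq1
    have hbd : ∃ r : ℝ, ∀ᶠ k in atTop, n (u (ns k)).1 ∈ closedBall q r := by
      refine ⟨(infDist q D + 1) + 1, ?_⟩
      have e1 := hid.eventually (gt_mem_nhds (show infDist q D < infDist q D + 1 by linarith))
      have e2 := hq1.eventually (Metric.ball_mem_nhds q one_pos)
      filter_upwards [e1, e2] with k k1 k2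
      rw [hnd] at k1
      rw [mem_closedBall]
      have := dist_triangle (n (u (ns k)).1) (u (ns k)).1 q
      have k2' : dist (u (ns k)).1 q < 1 := k2
      rw [dist_comm (n (u (ns k)).1) (u (ns k)).1] at this
      linarith
    obtain ⟨r, hr⟩ := hbd
    obtain ⟨d, -, ms, hms, hd⟩ := (isCompact_closedBall q r).tendsto_subseq' hr.frequently
    refine ⟨ms, ?_⟩
    have hdD : d ∈ D := hD.mem_of_tendsto hd (Eventually.of_forall fun k => hnD _)
    have hmt := hms.tendsto_atTop
    have hqd : dist q d = infDist q D := by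
      have t1 := (hq1.comp hmt).dist hd
      have t2 := hid.comp hmt
      refine tendsto_nhds_unique t1 (t2.congr ?_)
      intro k
      simp only [Function.comp]
      rw [hnd]
    have hmem : (q, d, y) ∈ T := ⟨hq, hdD, hqd, hy, hyq⟩
    have heq : G (q, n q, y) 1 = G (q, d, y) 1 :=
      hind q hq _ (hnD q) (hnd q).symm d hdD hqd y hy hyq
    simp only [heq]
    have hcont := hΓc (q, d, y) hmem
    refine Tendsto.comp (g := fun p => G p 1) (f := fun k => ((u (ns (ms k))).1, n (u (ns (ms k))).1, (u (ns (ms k))).2)) hcont ?_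
    rw [tendsto_nhdsWithin_iff]
    refine ⟨(hq1.comp hmt).prodMk_nhds (hd.prodMk_nhds (hy1.comp hmt)), ?_⟩
    have := (hns.comp hmt).eventually hu2
    filter_upwards [this] with k hk
    exact ⟨hk.1, hnD _, (hnd _).symm, hk.2.1, hk.2.2⟩
  · intro q hq y hy hyq
    exact hΓe q (n q) y ⟨hq, hnD q, (hnd q).symm, hy, hyq⟩
  · intro d hd y hy hyd
    have hnn : n d = d := by
      have := hnd d
      rw [infDist_zero_of_mem hd.1] at this
      exact (dist_eq_zero.mp this.symm).symm
    have hmem : (d, d, y) ∈ T := ⟨hd.2, hd.1, by rw [infDist_zero_of_mem hd.1, dist_self], hy, hyd⟩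
    simp only [hnn]
    have := hG0 _ hmem
    simp only at this
    rw [← this]
    refine exp_eq_const (L := fun s => G (d, d, y) s) (c := ε * (y - d)) ?_ ?_
    · exact hG.comp (f := fun s : ℝ => ((d, d, y), s)) (by fun_prop) (fun s hs => ⟨hmem, hs⟩)
    · intro s hs
      rw [hGe _ hmem s hs]
      simp only [spk_self]
  · intro q hq
    exact hΓn q hq (n q) (hnD q) (hnd q).symm
end part7

section part8
/-- points at least as close to `B` as to `C` -/
def PS (B C : Set ℂ) : Set ℂ := {x | infDist x B ≤ infDist x C}

structure Cfg (B C : Set ℂ) (Λ : ℂ → ℂ → ℂ) (r0 : ℝ) : Prop where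
  clB : IsClosed B
  clC : IsClosed C
  neB : B.Nonempty
  neC : C.Nonempty
  disj : Disjoint B C
  hΛ : ContinuousOn (fun p : ℂ × ℂ => Λ p.1 p.2) (B ×ˢ C)
  hΛe : ∀ b ∈ B, ∀ c ∈ C, Complex.exp (Λ b c) = c - b
  nL : ∀ c ∈ C, ∃ M : ℝ, ∀ b ∈ B, b.re < -M → |(Λ b c).im| < Real.pi / 2
  nU : ∀ b ∈ B, ∃ M : ℝ, ∀ c ∈ C, c.re < -M → |(Λ b c).im - Real.pi| < Real.pi / 2
  chB : Chain B
  chC : Chain C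
  near : ∀ q : ℂ, q.re ≤ 0 → infDist q B ≤ r0 ∨ infDist q C ≤ r0
  reB : ∀ b ∈ B, b.re < 0
  reC : ∀ c ∈ C, c.re < 0

theorem PS_right {B C : Set ℂ} (hB : IsClosed B) (hBn : B.Nonempty) (hd : Disjoint B C) {x : ℂ}
    (hx : x ∈ PS B C) : x ∉ C := by
  intro hc
  have h1 : infDist x B ≤ 0 := by
    have : infDist x B ≤ infDist x C := hx
    rwa [infDist_zero_of_mem hc] at this
  have h2 : infDist x B = 0 := le_antisymm h1 infDist_nonneg
  have := (hB.mem_iff_infDist_zero hBn).mpr h2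
  exact Set.disjoint_left.mp hd this hc

theorem PS_left {B C : Set ℂ} {x : ℂ} (hx : x ∈ B) : x ∈ PS B C := by
  show infDist x B ≤ infDist x C
  rw [infDist_zero_of_mem hx]; exact infDist_nonneg

theorem PS_spk {B C : Set ℂ} (hC : IsClosed C) (hCne : C.Nonempty) (hd : Disjoint B C)
    {q b : ℂ} (hb : b ∈ B) (hqb : dist q b = infDist q B) (hq : q ∈ PS B C)
    {s : ℝ} (hs : s ∈ Icc (0:ℝ) 1) : spk b q s ∈ PS B C := by
  rcases hs.2.eq_or_lt with h | h
  · subst h; rw [spk_one]; exact hq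
  · exact (SP hC hCne hd hb hqb hq ⟨hs.1, h⟩).le

theorem PS_spk_ne {B C : Set ℂ} (hC : IsClosed C) (hCne : C.Nonempty) (hd : Disjoint B C)
    {q b y : ℂ} (hb : b ∈ B) (hqb : dist q b = infDist q B) (hq : q ∈ PS B C)
    {s : ℝ} (hs : s ∈ Icc (0:ℝ) 1) (hy : y ∈ PS C B) (hyq : y ≠ q) : y ≠ spk b q s := by
  rcases hs.2.eq_or_lt with h | h
  · subst h; rw [spk_one]; exact hyq
  · rintro rfl
    have := SP hC hCne hd hb hqb hq ⟨hs.1, h⟩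
    have h2 : infDist (spk b q s) C ≤ infDist (spk b q s) B := hy
    linarith

/-- chain property passes from `B` to `PS B C` minus a point of `PS C B` -/
theorem PS_chain {B C : Set ℂ} (hB : IsClosed B) (hBn : B.Nonempty) (hC : IsClosed C) (hCne : C.Nonempty)
    (hd : Disjoint B C) (hch : Chain B) {q : ℂ} (hq : q ∈ PS C B) : Chain (PS B C \ {q}) := by
  intro ψ hψ he hM y hy
  have hsub : B ⊆ PS B C \ {q} := by
    intro b hb
    refine ⟨PS_left hb, ?_⟩
    rintro rfl
    exact PS_right hC hCne hd.symm hq hb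
  obtain ⟨M, hM⟩ := hM
  have h0 := hch ψ (hψ.mono hsub) (fun b hb => he b (hsub hb)) ⟨M, fun b hb => hM b (hsub hb)⟩
  obtain ⟨b, hb, hby⟩ := hB.exists_infDist_eq_dist hBn y
  have hm : ∀ s ∈ Icc (0:ℝ) 1, spk b y s ∈ PS B C \ {q} := fun s hs =>
    ⟨PS_spk hC hCne hd hb hby.symm hy.1 hs,
      fun h => PS_spk_ne hC hCne hd hb hby.symm hy.1 hs hq (Ne.symm hy.2) (Eq.symm h)⟩
  have := CONST (S := Icc (0:ℝ) 1) (ψ := fun s => ψ (spk b y s)) isPreconnected_Icc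
    (hψ.comp (f := spk b y) (spk_cont b y).continuousOn hm) (fun s hs => he _ (hm s hs))
    (x := 1) (y := 0) (by simp) (by simp)
  simp only [spk_one, spk_zero] at this
  rw [this, h0 b hb]

theorem near_re {B C : Set ℂ} {r0 : ℝ} {x b : ℂ} (h : infDist x B ≤ r0 ∨ infDist x C ≤ r0) (hx : x ∈ PS B C)
    (hb : infDist x B = dist x b) : b.re ≤ x.re + r0 ∧ dist x b ≤ r0 := by
  have h1 : infDist x B ≤ r0 := by
    rcases h with h | h
    · exact h
    · exact le_trans hx h
  rw [hb] at h1
  refine ⟨?_, h1⟩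
  have := Complex.abs_re_le_norm (x - b)
  rw [← Complex.dist_eq, Complex.sub_re] at this
  have := (abs_le.mp this).1
  linarith

/-- the extended data -/
structure Cfx (B C : Set ℂ) (L : ℂ → ℂ → ℂ) : Prop where
  hL : ContinuousOn (fun p : ℂ × ℂ => L p.1 p.2) {p | p.1 ∈ PS B C ∧ p.2 ∈ PS C B ∧ p.1 ≠ p.2}
  hLe : ∀ x ∈ PS B C, ∀ y ∈ PS C B, x ≠ y → Complex.exp (L x y) = y - x
  nL : ∀ y ∈ PS C B, ∃ M : ℝ, ∀ x ∈ PS B C, x ≠ y → x.re < -M → |(L x y).im| < Real.pi / 2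
  nU : ∀ x ∈ PS B C, ∃ M : ℝ, ∀ y ∈ PS C B, x ≠ y → y.re < -M → |(L x y).im - Real.pi| < Real.pi / 2
  tU : ∀ x ∈ PS B C, 0 < x.re → ∀ y ∈ PS C B, y.re < x.re → |(L x y).im - Real.pi| < Real.pi / 2
  tL : ∀ y ∈ PS C B, 0 < y.re → ∀ x ∈ PS B C, x.re < y.re → |(L x y).im| < Real.pi / 2

theorem CFG_OUT {B C : Set ℂ} {Λ : ℂ → ℂ → ℂ} {r0 : ℝ} (H : Cfg B C Λ r0) : ∃ L, Cfx B C L := by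
  obtain ⟨Λ1, h1c, h1e, h1a, h1n⟩ := EXT (D := B) (Q := PS B C) (Y := C) (ε := 1) (θ := Real.pi) H.clB H.neB
    (by simp) (Or.inl rfl)
    (fun q hq d hd hqd s hs y hy hyq => PS_spk_ne H.clC H.neC H.disj hd hqd hq hs (PS_left hy) hyq)
    H.hΛ (fun d hd y hy => by rw [H.hΛe d hd y hy, one_mul]) H.nU
    (fun q hq => by
      have : C \ {q} = C := by
        apply sdiff_singleton_eq_self
        exact PS_right H.clB H.neB H.disj hq
      rw [this]; exact H.chC)
  have h1a' : ∀ b ∈ B, ∀ c ∈ C, Λ1 b c = Λ b c := fun b hb c hc =>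
    h1a b ⟨hb, PS_left hb⟩ c hc (fun h => Set.disjoint_left.mp H.disj hb (h ▸ hc))
  have hne1 : ∀ x ∈ PS B C, ∀ c ∈ C, c ≠ x := fun x hx c hc h => PS_right H.clB H.neB H.disj hx (h ▸ hc)
  have hne2 : ∀ x ∈ PS C B, ∀ c ∈ B, c ≠ x := fun x hx c hc h => PS_right H.clC H.neC H.disj.symm hx (h ▸ hc)
  obtain ⟨Λ2, h2c, h2e, h2a, h2n⟩ := EXT (D := C) (Q := PS C B) (Y := PS B C) (ε := -1) (θ := 0)
    (Λ := fun c x => Λ1 x c) H.clC H.neC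
    (by simp) (Or.inr rfl)
    (fun q hq d hd hqd s hs y hy hyq => PS_spk_ne H.clB H.neB H.disj.symm hd hqd hq hs hy hyq)
    (h1c.comp (f := fun q : ℂ × ℂ => (q.2, q.1)) (by fun_prop)
      (fun q hq => ⟨hq.2, hq.1, hne1 _ hq.2 _ hq.1⟩))
    (fun d hd y hy => by rw [h1e y hy d hd (hne1 _ hy _ hd)]; ring)
    (by
      intro c hc
      obtain ⟨M, hM⟩ := H.nL c hc
      refine ⟨max 0 (max (M + r0) (r0 - c.re)) + |r0|, fun x hx hre => ?_⟩
      have i1 := le_max_left 0 (max (M + r0) (r0 - c.re))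
      have i2 := (le_max_left (M + r0) (r0 - c.re)).trans (le_max_right 0 _)
      have i3 := (le_max_right (M + r0) (r0 - c.re)).trans (le_max_right 0 _)
      have i4 := le_abs_self r0
      have i5 := abs_nonneg r0
      obtain ⟨b, hb, hbx⟩ := H.clB.exists_infDist_eq_dist H.neB x
      have hbr := near_re (H.near x (by linarith)) hx hbx
      have hr0 : 0 ≤ r0 := dist_nonneg.trans hbr.2
      have hm : ∀ s ∈ Icc (0:ℝ) 1, spk b x s ∈ PS B C := fun s hs =>
        PS_spk H.clC H.neC H.disj hb hbx.symm hx hs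
      have := HALFI (Λ := fun s => Λ1 (spk b x s) c)
        (h1c.comp (f := fun s => (spk b x s, c)) ((spk_cont b x).prodMk continuous_const).continuousOn
          (fun s hs => ⟨hm s hs, hc, hne1 _ (hm s hs) _ hc⟩)) 0 (by
          intro s hs
          simp only [Complex.ofReal_zero, zero_mul, sub_zero]
          rw [h1e _ (hm s hs) c hc (hne1 _ (hm s hs) _ hc)]
          have := spk_re_le (m := c.re) hs (show b.re < c.re by linarith [hbr.1]) (show x.re < c.re by linarith)
          simp; linarith)
      simp only [spk_zero, spk_one] at this
      rw [h1a' b hb c hc] at this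
      exact this.mp (by simpa using hM b hb (by linarith [hbr.1])))
    (fun q hq => PS_chain H.clB H.neB H.clC H.neC H.disj H.chB hq)
  simp only [sub_zero] at h2n
  have hLc : ContinuousOn (fun p : ℂ × ℂ => Λ2 p.2 p.1) {p | p.1 ∈ PS B C ∧ p.2 ∈ PS C B ∧ p.1 ≠ p.2} :=
    h2c.comp (f := fun q : ℂ × ℂ => (q.2, q.1)) (by fun_prop) (fun q hq => ⟨hq.2.1, hq.1, hq.2.2⟩)
  have hLe : ∀ x ∈ PS B C, ∀ y ∈ PS C B, x ≠ y → Complex.exp (Λ2 y x) = y - x := by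
    intro x hx y hy hxy
    rw [h2e y hy x hx hxy]; ring
  have hLa : ∀ x ∈ PS B C, ∀ c ∈ C, Λ2 c x = Λ1 x c := fun x hx c hc =>
    h2a c ⟨hc, PS_left hc⟩ x hx (hne1 x hx c hc).symm
  -- transfer along spokes of `C`
  have sC : ∀ x ∈ PS B C, ∀ y ∈ PS C B, ∀ c ∈ C, infDist y C = dist y c → c.re < x.re → y.re < x.re →
      |(Λ2 c x).im - Real.pi| < Real.pi / 2 → |(Λ2 y x).im - Real.pi| < Real.pi / 2 := by
    intro x hx y hy c hc hcy h1 h2 h3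
    have hm : ∀ s ∈ Icc (0:ℝ) 1, spk c y s ∈ PS C B := fun s hs =>
        PS_spk H.clB H.neB H.disj.symm hc hcy.symm hy hs
    have hre : ∀ s ∈ Icc (0:ℝ) 1, (spk c y s).re < x.re := fun s hs => spk_re_le hs h1 h2
    have hne : ∀ s ∈ Icc (0:ℝ) 1, x ≠ spk c y s := fun s hs h => by
      have := hre s hs
      rw [← h] at this; exact lt_irrefl _ this
    have := HALFI (Λ := fun s => Λ2 (spk c y s) x)
        (hLc.comp (f := fun s => (x, spk c y s)) (continuous_const.prodMk (spk_cont c y)).continuousOn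
          (fun s hs => ⟨hx, hm s hs, hne s hs⟩)) Real.pi (by
          intro s hs
          rw [Complex.exp_sub, hLe _ hx _ (hm s hs) (hne s hs), Complex.exp_pi_mul_I]
          have := hre s hs
          rw [div_neg, div_one, neg_sub, Complex.sub_re]; linarith)
    simp only [spk_zero, spk_one] at this
    exact this.mp h3
  have sB : ∀ x ∈ PS B C, ∀ y ∈ PS C B, ∀ b ∈ B, infDist x B = dist x b → b.re < y.re → x.re < y.re →
      |(Λ2 y b).im| < Real.pi / 2 → |(Λ2 y x).im| < Real.pi / 2 := by
    intro x hx y hy b hb hbx h1 h2 h3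
    have hm : ∀ s ∈ Icc (0:ℝ) 1, spk b x s ∈ PS B C := fun s hs =>
        PS_spk H.clC H.neC H.disj hb hbx.symm hx hs
    have hre : ∀ s ∈ Icc (0:ℝ) 1, (spk b x s).re < y.re := fun s hs => spk_re_le hs h1 h2
    have hne : ∀ s ∈ Icc (0:ℝ) 1, spk b x s ≠ y := fun s hs h => by
      have := hre s hs
      rw [h] at this; exact lt_irrefl _ this
    have := HALFI (Λ := fun s => Λ2 y (spk b x s))
        (hLc.comp (f := fun s => (spk b x s, y)) ((spk_cont b x).prodMk continuous_const).continuousOn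
          (fun s hs => ⟨hm s hs, hy, hne s hs⟩)) 0 (by
          intro s hs
          simp only [Complex.ofReal_zero, zero_mul, sub_zero]
          rw [hLe _ (hm s hs) _ hy (hne s hs)]
          have := hre s hs
          simp; linarith)
    simp only [spk_zero, spk_one, sub_zero] at this
    exact this.mp h3
  refine ⟨fun x y => Λ2 y x, hLc, hLe, h2n, ?_, ?_, ?_⟩
  · intro x hx
    obtain ⟨M, hM⟩ := h1n x hx
    refine ⟨max 0 (max (M + r0) (r0 - x.re)) + |r0|, fun y hy hxy hre => ?_⟩
    have i1 := le_max_left 0 (max (M + r0) (r0 - x.re))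
    have i2 := (le_max_left (M + r0) (r0 - x.re)).trans (le_max_right 0 _)
    have i3 := (le_max_right (M + r0) (r0 - x.re)).trans (le_max_right 0 _)
    have i4 := le_abs_self r0
    have i5 := abs_nonneg r0
    obtain ⟨c, hc, hcy⟩ := H.clC.exists_infDist_eq_dist H.neC y
    have hbr := near_re (H.near y (by linarith)).symm hy hcy
    have hr0 : 0 ≤ r0 := dist_nonneg.trans hbr.2
    refine sC x hx y hy c hc hcy (by linarith [hbr.1]) (by linarith) ?_
    rw [hLa x hx c hc]
    exact hM c hc (hne1 x hx c hc) (by linarith [hbr.1])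
  · intro x hx hx0 y hy hyx
    obtain ⟨c, hc, hcy⟩ := H.clC.exists_infDist_eq_dist H.neC y
    have hcx : ∀ c ∈ C, 0 < (x - c).re := fun c hc => by
      have := H.reC c hc
      simp; linarith
    have hne : ∀ c ∈ C, x - c ≠ 0 := fun c hc h => by
      have := hcx c hc
      rw [h] at this; simp at this
    refine sC x hx y hy c hc hcy (by linarith [H.reC c hc]) hyx ?_
    obtain ⟨M, hM⟩ := h1n x hx
    have hexp : ∀ c ∈ C, Complex.exp (Λ1 x c - Complex.log (x - c) - Real.pi * Complex.I) = 1 := by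
      intro c hc
      rw [Complex.exp_sub, Complex.exp_sub, h1e x hx c hc (hne1 x hx c hc), Complex.exp_log (hne c hc), Complex.exp_pi_mul_I]
      have := hne c hc
      field_simp; ring
    have hlog : ∀ c ∈ C, |(Complex.log (x - c)).im| < Real.pi / 2 := fun c hc => by
      rw [Complex.log_im, Complex.abs_arg_lt_pi_div_two_iff]
      exact Or.inl (hcx c hc)
    have := H.chC (fun c => Λ1 x c - Complex.log (x - c) - Real.pi * Complex.I)
      (by
        refine (ContinuousOn.sub ?_ ?_).sub continuousOn_const
        · exact h1c.comp (f := fun c => (x, c)) (by fun_prop) (fun c hc => ⟨hx, hc, hne1 x hx c hc⟩)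
        · exact ContinuousOn.clog (by fun_prop) (fun c hc => Or.inl (hcx c hc)))
      hexp
      ⟨M, fun c hc hre => by
        have r1 := hM c hc (hne1 x hx c hc) hre
        have r2 := hlog c hc
        apply exp_one_im (hexp c hc)
        rw [abs_lt] at *
        simp only [Complex.sub_im, Complex.im_ofReal_mul, Complex.I_im, mul_one]
        constructor <;> linarith [Real.pi_pos, r1.1, r1.2, r2.1, r2.2]⟩ c hc
    rw [hLa x hx c hc]
    have e : Λ1 x c = Complex.log (x - c) + Real.pi * Complex.I := by linear_combination this
    rw [e]
    have := hlog c hc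
    simpa using this
  · intro y hy hy0 x hx hxy
    obtain ⟨b, hb, hbx⟩ := H.clB.exists_infDist_eq_dist H.neB x
    have hcx : ∀ c ∈ B, 0 < (y - c).re := fun c hc => by
      have := H.reB c hc
      simp; linarith
    have hne : ∀ c ∈ B, y - c ≠ 0 := fun c hc h => by
      have := hcx c hc
      rw [h] at this; simp at this
    refine sB x hx y hy b hb hbx (by linarith [H.reB b hb]) hxy ?_
    obtain ⟨M, hM⟩ := h2n y hy
    have hexp : ∀ c ∈ B, Complex.exp (Λ2 y c - Complex.log (y - c)) = 1 := by
      intro c hc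
      rw [Complex.exp_sub, hLe c (PS_left hc) y hy (hne2 y hy c hc), Complex.exp_log (hne c hc)]
      exact div_self (hne c hc)
    have hlog : ∀ c ∈ B, |(Complex.log (y - c)).im| < Real.pi / 2 := fun c hc => by
      rw [Complex.log_im, Complex.abs_arg_lt_pi_div_two_iff]
      exact Or.inl (hcx c hc)
    have := H.chB (fun c => Λ2 y c - Complex.log (y - c))
      (by
        refine (ContinuousOn.sub ?_ ?_)
        · exact hLc.comp (f := fun c => (c, y)) (by fun_prop) (fun c hc => ⟨PS_left hc, hy, hne2 y hy c hc⟩)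
        · exact ContinuousOn.clog (by fun_prop) (fun c hc => Or.inl (hcx c hc)))
      hexp
      ⟨M, fun c hc hre => by
        have r1 := hM c (PS_left hc) (hne2 y hy c hc) hre
        have r2 := hlog c hc
        apply exp_one_im (hexp c hc)
        rw [abs_lt] at *
        simp only [Complex.sub_im]
        constructor <;> linarith [Real.pi_pos, r1.1, r1.2, r2.1, r2.2]⟩ b hb
    have e : Λ2 y b = Complex.log (y - b) := by linear_combination this
    rw [e]
    exact hlog b hb
end part8

section part9
structure Dat (Fr : Set ℂ) (h f : ℂ → ℝ → ℂ) : Prop where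
  cpt : IsCompact Fr
  conn : IsPreconnected Fr
  zero : (0:ℂ) ∈ Fr
  ne : (Fr \ {0}).Nonempty
  hcont : ContinuousOn (fun p : ℂ × ℝ => h p.1 p.2) (Fr ×ˢ Set.Icc 0 1)
  hinj : ∀ t ∈ Set.Icc (0:ℝ) 1, Set.InjOn (fun z => h z t) Fr
  hfix : ∀ t ∈ Set.Icc (0:ℝ) 1, h 0 t = 0
  hf : ContinuousOn (fun p : ℂ × ℝ => f p.1 p.2) ((Fr \ {0}) ×ˢ Icc (0:ℝ) 1)
  hfe : ∀ z ∈ Fr \ {0}, ∀ t ∈ Icc (0:ℝ) 1, Complex.exp (f z t) = h z t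
  hb : ∀ z ∈ Fr, ∀ t ∈ Icc (0:ℝ) 1, ‖h z t‖ < 1

/-- `2πik` -/
noncomputable def tpi (k : ℤ) : ℂ := (2 * Real.pi * k : ℝ) * Complex.I

theorem tpi_re (k : ℤ) : (tpi k).re = 0 := by simp [tpi]
theorem tpi_im (k : ℤ) : (tpi k).im = 2 * Real.pi * k := by simp [tpi]
theorem tpi_exp (k : ℤ) : Complex.exp (tpi k) = 1 := by
  rw [Complex.exp_eq_one_iff]; exact ⟨k, by simp [tpi]; ring⟩
theorem tpi_add (k l : ℤ) : tpi (k + l) = tpi k + tpi l := by simp [tpi]; ring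
theorem tpi_neg (k : ℤ) : tpi (-k) = - tpi k := by simp [tpi]
theorem tpi_sub (k l : ℤ) : tpi (k - l) = tpi k - tpi l := by simp [tpi]; ring

theorem exp_eq_tpi {a b : ℂ} (h : Complex.exp a = Complex.exp b) : ∃ k : ℤ, a = b + tpi k := by
  obtain ⟨k, hk⟩ := Complex.exp_eq_exp_iff_exists_int.mp h
  exact ⟨k, by rw [hk]; simp [tpi]; ring⟩

def Sh (Fr : Set ℂ) (f : ℂ → ℝ → ℂ) (t : ℝ) (k : ℤ) : Set ℂ := {x | ∃ z ∈ Fr \ {0}, x = f z t + tpi k}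
def Bs (Fr : Set ℂ) (f : ℂ → ℝ → ℂ) (t : ℝ) : Set ℂ := {x | ∃ z ∈ Fr \ {0}, ∃ k : ℤ, k ≤ 0 ∧ x = f z t + tpi k}
def Cs (Fr : Set ℂ) (f : ℂ → ℝ → ℂ) (t : ℝ) : Set ℂ := {x | ∃ z ∈ Fr \ {0}, ∃ k : ℤ, 0 < k ∧ x = f z t + tpi k}

variable {Fr : Set ℂ} {h f : ℂ → ℝ → ℂ}

theorem ZINV (D : Dat Fr h f) : ∃ (S : Set (ℂ × ℝ)) (Z : ℂ → ℝ → ℂ), IsClosed S ∧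
    ContinuousOn (fun p : ℂ × ℝ => Z p.1 p.2) S ∧
    (∀ p ∈ S, p.2 ∈ Icc (0:ℝ) 1 ∧ Z p.1 p.2 ∈ Fr \ {0} ∧ h (Z p.1 p.2) p.2 = Complex.exp p.1) ∧
    (∀ z ∈ Fr \ {0}, ∀ t ∈ Icc (0:ℝ) 1, ∀ x, Complex.exp x = h z t → (x, t) ∈ S ∧ Z x t = z) := by
  classical
  set H : ℂ × ℝ → ℂ × ℝ := fun p => (h p.1 p.2, p.2) with hH
  have hHc : ContinuousOn H (Fr ×ˢ Icc 0 1) := D.hcont.prodMk continuousOn_snd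
  have hcp := D.cpt.prod (isCompact_Icc (a := (0:ℝ)) (b := 1))
  have hHi : InjOn H (Fr ×ˢ Icc 0 1) := by
    rintro ⟨z, t⟩ hz ⟨w, s⟩ hw he
    simp only [hH, Prod.mk.injEq] at he
    obtain ⟨h1, rfl⟩ := he
    exact Prod.ext (D.hinj t hz.2 hz.1 hw.1 h1) rfl
  set g := Function.invFunOn H (Fr ×ˢ Icc 0 1) with hg
  have hgl : ∀ p ∈ Fr ×ˢ Icc (0:ℝ) 1, g (H p) = p := fun p hp => hHi.leftInvOn_invFunOn hp
  have hgc := INVC hcp hHc g hgl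
  set E : ℂ × ℝ → ℂ × ℝ := fun p => (Complex.exp p.1, p.2) with hE
  have hEc : Continuous E := by fun_prop
  refine ⟨E ⁻¹' (H '' (Fr ×ˢ Icc 0 1)), fun x t => (g (Complex.exp x, t)).1,
    (hcp.image_of_continuousOn hHc).isClosed.preimage hEc, ?_, ?_, ?_⟩
  · exact continuous_fst.comp_continuousOn (hgc.comp (f := E) hEc.continuousOn (fun p hp => hp))
  · rintro ⟨x, t⟩ ⟨⟨z, s⟩, hz, he⟩
    have he2 := he
    simp only [hH, hE, Prod.mk.injEq] at he
    obtain ⟨h1, rfl⟩ := he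
    simp only
    have : g (Complex.exp x, s) = (z, s) := by
      rw [← h1]; exact hgl (z, s) hz
    rw [this]
    refine ⟨hz.2, ⟨hz.1, ?_⟩, h1⟩
    rintro hz0
    have hz0' : z = 0 := hz0
    rw [hz0', D.hfix s hz.2] at h1
    exact Complex.exp_ne_zero x h1.symm
  · intro z hz t ht x hx
    refine ⟨⟨(z, t), ⟨hz.1, ht⟩, by simp [hH, hE, hx]⟩, ?_⟩
    show (g (Complex.exp x, t)).1 = z
    rw [hx]
    have := hgl (z, t) ⟨hz.1, ht⟩
    simp only [hH] at this
    simp only [this]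

/-- joint closedness of the two families -/
theorem BC_closed (D : Dat Fr h f) : IsClosed {p : ℂ × ℝ | p.2 ∈ Icc (0:ℝ) 1 ∧ p.1 ∈ Bs Fr f p.2} ∧
    IsClosed {p : ℂ × ℝ | p.2 ∈ Icc (0:ℝ) 1 ∧ p.1 ∈ Cs Fr f p.2} := by
  obtain ⟨S, Z, hS, hZc, hZ1, hZ2⟩ := ZINV D
  have hFc : ContinuousOn (fun p : ℂ × ℝ => (p.1 - f (Z p.1 p.2) p.2).im) S := by
    refine Complex.continuous_im.comp_continuousOn (continuousOn_fst.sub ?_)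
    exact D.hf.comp (f := fun p : ℂ × ℝ => (Z p.1 p.2, p.2)) (hZc.prodMk continuousOn_snd)
      (fun p hp => ⟨(hZ1 p hp).2.1, (hZ1 p hp).1⟩)
  have key : ∀ p ∈ S, ∃ k : ℤ, p.1 = f (Z p.1 p.2) p.2 + tpi k := by
    intro p hp
    obtain ⟨h1, h2, h3⟩ := hZ1 p hp
    exact exp_eq_tpi (by rw [← h3, D.hfe _ h2 _ h1])
  have key2 : ∀ z ∈ Fr \ {0}, ∀ t ∈ Icc (0:ℝ) 1, ∀ k, (f z t + tpi k, t) ∈ S ∧ Z (f z t + tpi k) t = z := by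
    intro z hz t ht k
    exact hZ2 z hz t ht _ (by rw [Complex.exp_add, tpi_exp, mul_one, D.hfe z hz t ht])
  have hp2 : 0 < 2 * Real.pi := by positivity
  constructor
  · convert hFc.preimage_isClosed_of_isClosed hS (isClosed_Iic (a := (0:ℝ))) using 1
    ext ⟨x, t⟩
    constructor
    · rintro ⟨ht, z, hz, k, hk, he⟩
      simp only at ht he
      subst he
      obtain ⟨a1, a2⟩ := key2 z hz t ht k
      refine ⟨a1, ?_⟩
      simp only [mem_preimage, mem_Iic, a2]
      have : (f z t + tpi k - f z t).im = 2 * Real.pi * k := by rw [add_sub_cancel_left, tpi_im]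
      rw [this]
      have : (k:ℝ) ≤ 0 := by exact_mod_cast hk
      nlinarith
    · rintro ⟨hp, him⟩
      obtain ⟨k, hk⟩ := key _ hp
      obtain ⟨h1, h2, h3⟩ := hZ1 _ hp
      simp only [mem_preimage, mem_Iic] at him hk h1 h2 h3
      refine ⟨h1, Z x t, h2, k, ?_, hk⟩
      have : (x - f (Z x t) t).im = 2 * Real.pi * k := by
        rw [← tpi_im]; congr 1; linear_combination hk
      rw [this] at him
      have : (k:ℝ) ≤ 0 := by
        by_contra hc
        push Not at hc
        have := mul_pos hp2 hc
        linarith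
      exact_mod_cast this
  · convert hFc.preimage_isClosed_of_isClosed hS (isClosed_Ici (a := (2 * Real.pi:ℝ))) using 1
    ext ⟨x, t⟩
    constructor
    · rintro ⟨ht, z, hz, k, hk, he⟩
      simp only at ht he
      subst he
      obtain ⟨a1, a2⟩ := key2 z hz t ht k
      refine ⟨a1, ?_⟩
      simp only [mem_preimage, mem_Ici, a2]
      have : (f z t + tpi k - f z t).im = 2 * Real.pi * k := by rw [add_sub_cancel_left, tpi_im]
      rw [this]
      have : (1:ℝ) ≤ k := by exact_mod_cast hk
      nlinarith
    · rintro ⟨hp, him⟩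
      obtain ⟨k, hk⟩ := key _ hp
      obtain ⟨h1, h2, h3⟩ := hZ1 _ hp
      simp only [mem_preimage, mem_Ici] at him hk h1 h2 h3
      refine ⟨h1, Z x t, h2, k, ?_, hk⟩
      have : (x - f (Z x t) t).im = 2 * Real.pi * k := by
        rw [← tpi_im]; congr 1; linear_combination hk
      rw [this] at him
      have : (0:ℝ) < k := by
        by_contra hc
        push Not at hc
        nlinarith
      exact_mod_cast this

theorem Bs_closed (D : Dat Fr h f) {t : ℝ} (ht : t ∈ Icc (0:ℝ) 1) : IsClosed (Bs Fr f t) := by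
  have := (BC_closed D).1.preimage (f := fun x : ℂ => (x, t)) (by fun_prop)
  convert this using 1
  ext x; simp [ht.1, ht.2]

theorem Cs_closed (D : Dat Fr h f) {t : ℝ} (ht : t ∈ Icc (0:ℝ) 1) : IsClosed (Cs Fr f t) := by
  have := (BC_closed D).2.preimage (f := fun x : ℂ => (x, t)) (by fun_prop)
  convert this using 1
  ext x; simp [ht.1, ht.2]

theorem f_uniq (D : Dat Fr h f) {t : ℝ} (ht : t ∈ Icc (0:ℝ) 1) {z w : ℂ} (hz : z ∈ Fr \ {0}) (hw : w ∈ Fr \ {0})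
    {k l : ℤ} (he : f z t + tpi k = f w t + tpi l) : z = w ∧ k = l := by
  have h1 : z = w := by
    apply D.hinj t ht hz.1 hw.1
    simp only
    rw [← D.hfe z hz t ht, ← D.hfe w hw t ht]
    have := congrArg Complex.exp he
    simpa only [Complex.exp_add, tpi_exp, mul_one] using this
  subst h1
  refine ⟨rfl, ?_⟩
  have h2 := congrArg Complex.im (add_left_cancel he)
  rw [tpi_im, tpi_im] at h2
  have : (k:ℝ) = l := mul_left_cancel₀ (by positivity) h2
  exact_mod_cast this

theorem BC_disj (D : Dat Fr h f) {t : ℝ} (ht : t ∈ Icc (0:ℝ) 1) : Disjoint (Bs Fr f t) (Cs Fr f t) := by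
  rw [Set.disjoint_left]
  rintro x ⟨z, hz, k, hk, rfl⟩ ⟨w, hw, l, hl, he⟩
  have := (f_uniq D ht hz hw he).2
  omega

theorem f_re (D : Dat Fr h f) {t : ℝ} (ht : t ∈ Icc (0:ℝ) 1) {z : ℂ} (hz : z ∈ Fr \ {0}) : (f z t).re < 0 := by
  rw [re_of_exp (D.hfe z hz t ht)]
  exact Real.log_neg (norm_pos_iff.mpr (h_ne D.zero D.hinj D.hfix hz ht)) (D.hb z hz.1 t ht)

theorem Sh_chain (D : Dat Fr h f) {t : ℝ} (ht : t ∈ Icc (0:ℝ) 1) (k : ℤ) : Chain (Sh Fr f t k) := by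
  intro ψ hψ he ⟨M, hM⟩ y hy
  obtain ⟨z, hz, rfl⟩ := hy
  classical
  set Ψ : ℂ → ℂ := fun z => if z = 0 then 0 else ψ (f z t + tpi k) with hΨ
  have hΨ0 : Ψ 0 = 0 := by simp [hΨ]
  have hΨ1 : ∀ z ∈ Fr \ {0}, Ψ z = ψ (f z t + tpi k) := fun z hz => by
    have : z ≠ 0 := hz.2
    simp [hΨ, this]
  obtain ⟨δ, hδ, hs⟩ := h_small D.cpt D.hcont D.hfix (Real.exp_pos (-M))
  have hnear : ∀ z ∈ Fr, ‖z‖ < δ → Ψ z = 0 := by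
    intro z hz hzn
    rcases eq_or_ne z 0 with rfl | hz0
    · exact hΨ0
    · have hzK : z ∈ Fr \ {0} := ⟨hz, hz0⟩
      rw [hΨ1 z hzK]
      refine hM _ ⟨z, hzK, rfl⟩ ?_
      rw [Complex.add_re, tpi_re, add_zero, re_of_exp (D.hfe z hzK t ht)]
      rw [Real.log_lt_iff_lt_exp (norm_pos_iff.mpr (h_ne D.zero D.hinj D.hfix hzK ht))]
      exact hs z hz hzn t ht
  have hKc : ContinuousOn (fun z => ψ (f z t + tpi k)) (Fr \ {0}) := by
    refine hψ.comp (f := fun z => f z t + tpi k) (ContinuousOn.add ?_ continuousOn_const) (fun z hz => ⟨z, hz, rfl⟩)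
    exact D.hf.comp (f := fun z => (z, t)) (by fun_prop) (fun z hz => ⟨hz, ht⟩)
  have hc : ContinuousOn Ψ Fr := by
    intro z hz
    rcases eq_or_ne z 0 with rfl | hz0
    · have : ∀ᶠ w in 𝓝[Fr] (0:ℂ), Ψ w = 0 := by
        filter_upwards [inter_mem_nhdsWithin Fr (Metric.ball_mem_nhds (0:ℂ) hδ)] with w hw
        exact hnear w hw.1 (by simpa using hw.2)
      exact (continuousWithinAt_const (b := (0:ℂ))).congr_of_eventuallyEq this hΨ0
    · have h1 : ContinuousWithinAt Ψ (Fr \ {0}) z :=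
        (hKc z ⟨hz, hz0⟩).congr (fun w hw => hΨ1 w hw) (hΨ1 z ⟨hz, hz0⟩)
      refine h1.mono_of_mem_nhdsWithin ?_
      exact inter_mem_nhdsWithin Fr (isOpen_compl_singleton.mem_nhds hz0)
  have hexp : ∀ z ∈ Fr, Complex.exp (Ψ z) = 1 := by
    intro z hz
    rcases eq_or_ne z 0 with rfl | hz0
    · rw [hΨ0, Complex.exp_zero]
    · rw [hΨ1 z ⟨hz, hz0⟩]; exact he _ ⟨z, ⟨hz, hz0⟩, rfl⟩
  have := CONST D.conn hc hexp hz.1 D.zero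
  rw [hΨ0, hΨ1 z hz] at this
  exact this

theorem Chain_of_cover {Y : Set ℂ} (hY : ∀ y ∈ Y, ∃ Y' ⊆ Y, y ∈ Y' ∧ Chain Y') : Chain Y := by
  intro ψ hψ he ⟨M, hM⟩ y hy
  obtain ⟨Y', hs, hy', hc⟩ := hY y hy
  exact hc ψ (hψ.mono hs) (fun y hy => he y (hs hy)) ⟨M, fun y hy => hM y (hs hy)⟩ y hy'

theorem Bs_chain (D : Dat Fr h f) {t : ℝ} (ht : t ∈ Icc (0:ℝ) 1) : Chain (Bs Fr f t) := by
  apply Chain_of_cover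
  rintro y ⟨z, hz, k, hk, rfl⟩
  exact ⟨Sh Fr f t k, fun x ⟨w, hw, he⟩ => ⟨w, hw, k, hk, he⟩, ⟨z, hz, rfl⟩, Sh_chain D ht k⟩

theorem Cs_chain (D : Dat Fr h f) {t : ℝ} (ht : t ∈ Icc (0:ℝ) 1) : Chain (Cs Fr f t) := by
  apply Chain_of_cover
  rintro y ⟨z, hz, k, hk, rfl⟩
  exact ⟨Sh Fr f t k, fun x ⟨w, hw, he⟩ => ⟨w, hw, k, hk, he⟩, ⟨z, hz, rfl⟩, Sh_chain D ht k⟩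

theorem NEAR (D : Dat Fr h f) : ∃ r0 : ℝ, ∀ t ∈ Icc (0:ℝ) 1, ∀ q : ℂ, q.re ≤ 0 →
    infDist q (Bs Fr f t) ≤ r0 ∨ infDist q (Cs Fr f t) ≤ r0 := by
  obtain ⟨z0, hz0⟩ := D.ne
  have hc0 : ContinuousOn (fun t => h z0 t) (Icc 0 1) :=
    D.hcont.comp (f := fun t => (z0, t)) (by fun_prop) (fun t ht => ⟨hz0.1, ht⟩)
  obtain ⟨η, hη, hm⟩ := pos_lb (isCompact_Icc (a := (0:ℝ)) (b := 1)) hc0.norm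
    (fun t ht => norm_pos_iff.mpr (h_ne D.zero D.hinj D.hfix hz0 ht))
  have hη1 : η < 1 := (hm 0 (by simp)).trans_lt (D.hb z0 hz0.1 0 (by simp))
  have hlog : Real.log η < 0 := Real.log_neg hη hη1
  refine ⟨-Real.log η + Real.pi, fun t ht q hq => ?_⟩
  set x := min q.re (Real.log η) with hx
  have hc : ContinuousOn (fun z => ‖h z t‖) Fr :=
    (D.hcont.comp (f := fun z => (z, t)) (by fun_prop) (fun z hz => ⟨hz, ht⟩)).norm
  obtain ⟨z, hz, hze⟩ := D.conn.intermediate_value D.zero hz0.1 hc (show Real.exp x ∈ _ by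
    refine ⟨?_, ?_⟩
    · simp only [D.hfix t ht, norm_zero]; exact (Real.exp_pos x).le
    · refine le_trans ?_ (hm t ht)
      rw [← Real.le_log_iff_exp_le hη]
      exact min_le_right _ _)
  have hzK : z ∈ Fr \ {0} := by
    refine ⟨hz, ?_⟩
    rintro rfl
    simp only [D.hfix t ht, norm_zero] at hze
    exact (Real.exp_pos x).ne hze
  have hre : (f z t).re = x := by
    rw [re_of_exp (D.hfe z hzK t ht)]
    simp only at hze
    rw [hze, Real.log_exp]
  set k : ℤ := round ((q.im - (f z t).im) / (2 * Real.pi)) with hk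
  have hround := abs_sub_round ((q.im - (f z t).im) / (2 * Real.pi))
  rw [← hk] at hround
  have him : |q.im - (f z t + tpi k).im| ≤ Real.pi := by
    rw [Complex.add_im, tpi_im]
    have : q.im - ((f z t).im + 2 * Real.pi * k) = (2 * Real.pi) * ((q.im - (f z t).im) / (2 * Real.pi) - k) := by
      field_simp; ring
    rw [this, abs_mul, abs_of_pos (by positivity)]
    have := mul_le_mul_of_nonneg_left hround (show 0 ≤ 2 * Real.pi by positivity)
    linarith
  have hre2 : |q.re - (f z t + tpi k).re| ≤ -Real.log η := by
    rw [Complex.add_re, tpi_re, hre, add_zero, abs_of_nonneg (by have := min_le_left q.re (Real.log η); linarith)]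
    rcases min_choice q.re (Real.log η) with hmn | hmn
    · rw [hx, hmn]; linarith
    · rw [hx, hmn]; linarith
  have hd : dist q (f z t + tpi k) ≤ -Real.log η + Real.pi := by
    rw [Complex.dist_eq]
    refine (Complex.norm_le_abs_re_add_abs_im _).trans ?_
    rw [Complex.sub_re, Complex.sub_im]
    linarith
  rcases le_or_gt k 0 with hk0 | hk0
  · left
    exact (infDist_le_dist_of_mem (show f z t + tpi k ∈ Bs Fr f t from ⟨z, hzK, k, hk0, rfl⟩)).trans hd
  · right
    exact (infDist_le_dist_of_mem (show f z t + tpi k ∈ Cs Fr f t from ⟨z, hzK, k, hk0, rfl⟩)).trans hd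
end part9

section part10
variable {Fr : Set ℂ} {h f : ℂ → ℝ → ℂ}

theorem CFG_AT (D : Dat Fr h f) {Λt : ℂ → ℂ → ℂ → ℝ → ℂ}
    (hΛ : ContinuousOn (fun p : (ℂ × ℂ × ℂ) × ℝ => Λt p.1.1 p.1.2.1 p.1.2.2 p.2)
        (((Fr \ {0}) ×ˢ (Fr \ {0}) ×ˢ Vset) ×ˢ Icc (0:ℝ) 1))
    (hΛe : ∀ z ∈ Fr \ {0}, ∀ w ∈ Fr \ {0}, ∀ v ∈ Vset, ∀ t ∈ Icc (0:ℝ) 1,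
        Complex.exp (Λt z w v t) = f w t - f z t + v)
    (hn1 : ∀ t ∈ Icc (0:ℝ) 1, ∀ w ∈ Fr \ {0}, ∃ η > 0, ∀ z ∈ Fr \ {0}, ‖h z t‖ < η → ∀ v ∈ Vset,
        |(Λt z w v t).im| < Real.pi / 2)
    (hn2 : ∀ t ∈ Icc (0:ℝ) 1, ∀ z ∈ Fr \ {0}, ∃ η > 0, ∀ w ∈ Fr \ {0}, ‖h w t‖ < η → ∀ v ∈ Vset,
        |(Λt z w v t).im - Real.pi| < Real.pi / 2)
    {r0 : ℝ} {t : ℝ} (ht : t ∈ Icc (0:ℝ) 1)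
    (hnear : ∀ q : ℂ, q.re ≤ 0 → infDist q (Bs Fr f t) ≤ r0 ∨ infDist q (Cs Fr f t) ≤ r0) :
    ∃ Λ, Cfg (Bs Fr f t) (Cs Fr f t) Λ r0 := by
  obtain ⟨S, Z, hS, hZc, hZ1, hZ2⟩ := ZINV D
  have key2 : ∀ z ∈ Fr \ {0}, ∀ k, (f z t + tpi k, t) ∈ S ∧ Z (f z t + tpi k) t = z := by
    intro z hz k
    exact hZ2 z hz t ht _ (by rw [Complex.exp_add, tpi_exp, mul_one, D.hfe z hz t ht])
  have hBS : ∀ b ∈ Bs Fr f t, (b, t) ∈ S := by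
    rintro b ⟨z, hz, k, hk, rfl⟩; exact (key2 z hz k).1
  have hCS : ∀ b ∈ Cs Fr f t, (b, t) ∈ S := by
    rintro b ⟨z, hz, k, hk, rfl⟩; exact (key2 z hz k).1
  set v : ℂ → ℂ → ℂ := fun b c => (c - f (Z c t) t) - (b - f (Z b t) t) with hv
  have hvV : ∀ b ∈ Bs Fr f t, ∀ c ∈ Cs Fr f t, v b c ∈ Vset := by
    rintro b ⟨z, hz, k, hk, rfl⟩ c ⟨w, hw, l, hl, rfl⟩
    refine ⟨(l - k - 1).toNat, ?_⟩
    simp only [hv, (key2 z hz k).2, (key2 w hw l).2]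
    have e1 : (((l - k - 1).toNat : ℤ) : ℝ) = ((l - k - 1 : ℤ) : ℝ) := by
      rw [Int.toNat_of_nonneg (by omega)]
    have e2 : (((l - k - 1).toNat : ℕ) : ℝ) = (l:ℝ) - k - 1 := by
      rw [← Int.cast_natCast, e1]; push_cast; ring
    rw [e2, add_sub_cancel_left, add_sub_cancel_left, ← tpi_sub, tpi]
    push_cast; ring
  have hZS : ContinuousOn (fun b => Z b t) {b | (b, t) ∈ S} :=
    hZc.comp (f := fun b => (b, t)) (by fun_prop) (fun b hb => hb)
  have hFS : ContinuousOn (fun b => f (Z b t) t) {b | (b, t) ∈ S} :=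
    D.hf.comp (f := fun b => (Z b t, t)) (hZS.prodMk continuousOn_const) (fun b hb => ⟨(hZ1 _ hb).2.1, ht⟩)
  have hnorm : ∀ b, (b, t) ∈ S → ∀ η > 0, b.re < Real.log η → ‖h (Z b t) t‖ < η := by
    intro b hb η hη hre
    have := (hZ1 _ hb).2.2
    simp only at this
    rw [this, Complex.norm_exp, ← Real.lt_log_iff_exp_lt hη]
    exact hre
  obtain ⟨z0, hz0⟩ := D.ne
  refine ⟨fun b c => Λt (Z b t) (Z c t) (v b c) t, Bs_closed D ht, Cs_closed D ht,
    ⟨_, z0, hz0, 0, le_rfl, rfl⟩, ⟨_, z0, hz0, 1, one_pos, rfl⟩, BC_disj D ht, ?_, ?_, ?_, ?_,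
    Bs_chain D ht, Cs_chain D ht, hnear, ?_, ?_⟩
  · have hb1 : ContinuousOn (fun p : ℂ × ℂ => Z p.1 t) (Bs Fr f t ×ˢ Cs Fr f t) :=
      hZS.comp continuousOn_fst (fun p hp => hBS _ hp.1)
    have hb2 : ContinuousOn (fun p : ℂ × ℂ => Z p.2 t) (Bs Fr f t ×ˢ Cs Fr f t) :=
      hZS.comp continuousOn_snd (fun p hp => hCS _ hp.2)
    have hb3 : ContinuousOn (fun p : ℂ × ℂ => f (Z p.1 t) t) (Bs Fr f t ×ˢ Cs Fr f t) :=
      hFS.comp (f := fun p : ℂ × ℂ => p.1) continuousOn_fst (fun p hp => hBS _ hp.1)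
    have hb4 : ContinuousOn (fun p : ℂ × ℂ => f (Z p.2 t) t) (Bs Fr f t ×ˢ Cs Fr f t) :=
      hFS.comp (f := fun p : ℂ × ℂ => p.2) continuousOn_snd (fun p hp => hCS _ hp.2)
    refine hΛ.comp (f := fun p : ℂ × ℂ => ((Z p.1 t, Z p.2 t, v p.1 p.2), t)) ?_ ?_
    · refine ContinuousOn.prodMk (hb1.prodMk (hb2.prodMk ?_)) continuousOn_const
      exact (continuousOn_snd.sub hb4).sub (continuousOn_fst.sub hb3)
    · intro p hp
      exact ⟨⟨(hZ1 _ (hBS _ hp.1)).2.1, (hZ1 _ (hCS _ hp.2)).2.1, hvV _ hp.1 _ hp.2⟩, ht⟩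
  · intro b hb c hc
    rw [hΛe _ (hZ1 _ (hBS _ hb)).2.1 _ (hZ1 _ (hCS _ hc)).2.1 _ (hvV _ hb _ hc) t ht]
    simp only [hv]; ring
  · intro c hc
    obtain ⟨η, hη, hm⟩ := hn1 t ht _ (hZ1 _ (hCS _ hc)).2.1
    refine ⟨-Real.log η, fun b hb hre => ?_⟩
    exact hm _ (hZ1 _ (hBS _ hb)).2.1 (hnorm b (hBS _ hb) η hη (by linarith)) _ (hvV _ hb _ hc)
  · intro b hb
    obtain ⟨η, hη, hm⟩ := hn2 t ht _ (hZ1 _ (hBS _ hb)).2.1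
    refine ⟨-Real.log η, fun c hc hre => ?_⟩
    exact hm _ (hZ1 _ (hCS _ hc)).2.1 (hnorm c (hCS _ hc) η hη (by linarith)) _ (hvV _ hb _ hc)
  · rintro b ⟨z, hz, k, hk, rfl⟩
    rw [Complex.add_re, tpi_re, add_zero]; exact f_re D ht hz
  · rintro b ⟨z, hz, k, hk, rfl⟩
    rw [Complex.add_re, tpi_re, add_zero]; exact f_re D ht hz

theorem TIP (D : Dat Fr h f) {t : ℝ} (ht : t ∈ Icc (0:ℝ) 1) : ∃ z ∈ Fr \ {0}, ∀ w ∈ Fr \ {0}, (f w t).re ≤ (f z t).re := by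
  have hc : ContinuousOn (fun z => ‖h z t‖) Fr :=
    (D.hcont.comp (f := fun z => (z, t)) (by fun_prop) (fun z hz => ⟨hz, ht⟩)).norm
  obtain ⟨z, hz, hm⟩ := D.cpt.exists_isMaxOn ⟨0, D.zero⟩ hc
  obtain ⟨z0, hz0⟩ := D.ne
  have hz0' : z ∈ Fr \ {0} := by
    refine ⟨hz, ?_⟩
    rintro rfl
    have : ‖h z0 t‖ ≤ ‖h 0 t‖ := hm hz0.1
    rw [D.hfix t ht, norm_zero, norm_le_zero_iff] at this
    exact h_ne D.zero D.hinj D.hfix hz0 ht this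
  refine ⟨z, hz0', fun w hw => ?_⟩
  rw [re_of_exp (D.hfe z hz0' t ht), re_of_exp (D.hfe w hw t ht)]
  exact Real.log_le_log (norm_pos_iff.mpr (h_ne D.zero D.hinj D.hfix hw ht)) (hm hw.1)

theorem tip_dist {Y : Set ℂ} (hY : IsClosed Y) (hYn : Y.Nonempty) {a : ℂ} (ha : a ∉ Y) (hre : ∀ y ∈ Y, y.re ≤ a.re)
    {s : ℝ} (hs : 0 ≤ s) : s < infDist (a + s) Y := by
  obtain ⟨y, hy, hd⟩ := hY.exists_infDist_eq_dist hYn (a + s)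
  rw [hd, Complex.dist_eq]
  by_contra hc
  push Not at hc
  have h1 := Complex.abs_re_le_norm (a + s - y)
  have h2 : (a + s - y).re = a.re + s - y.re := by simp
  have h3 := hre y hy
  rw [h2, abs_of_nonneg (by linarith)] at h1
  have h4 : y.re = a.re := by linarith
  have h5 := Complex.sq_norm (a + s - y)
  rw [Complex.normSq_apply, h2] at h5
  have h6 : ‖a + s - y‖ = s := le_antisymm hc (by linarith)
  rw [h6, h4] at h5
  have h7 : (a + s - y).im = 0 := by nlinarith
  have h8 : a.im = y.im := by simp at h7; linarith
  exact ha (by rw [Complex.ext h4.symm h8]; exact hy)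

theorem tip_PS {Y W : Set ℂ} (hY : IsClosed Y) (hYn : Y.Nonempty) {a : ℂ} (ha : a ∉ Y) (haW : a ∈ W)
    (hre : ∀ y ∈ Y, y.re ≤ a.re)
    {s : ℝ} (hs : 0 ≤ s) : a + s ∈ PS W Y ∧ a + s ∉ PS Y W := by
  have h1 := tip_dist hY hYn ha hre hs
  have h2 : infDist (a + s) W ≤ s := by
    refine (infDist_le_dist_of_mem haW).trans ?_
    rw [Complex.dist_eq]; simp [abs_of_nonneg hs]
  refine ⟨?_, ?_⟩
  · show infDist (a + s) W ≤ infDist (a + s) Y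
    linarith
  · intro hc
    have : infDist (a + s) Y ≤ infDist (a + s) W := hc
    linarith

theorem INJ (D : Dat Fr h f) {t : ℝ} (ht : t ∈ Icc (0:ℝ) 1) {L : ℂ → ℂ → ℂ}
    (H : Cfx (Bs Fr f t) (Cs Fr f t) L) {q q' : ℂ} (hqP : q ∈ PS (Bs Fr f t) (Cs Fr f t))
    (hqN : q ∈ PS (Cs Fr f t) (Bs Fr f t)) (hqP' : q' ∈ PS (Bs Fr f t) (Cs Fr f t))
    (hqN' : q' ∈ PS (Cs Fr f t) (Bs Fr f t)) {k : ℤ} (hk : 0 < k) (he : q = q' + tpi k) : False := by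
  obtain ⟨za, hza, hmax⟩ := TIP D ht
  set B := Bs Fr f t with hB
  set C := Cs Fr f t with hC
  have clB : IsClosed B := Bs_closed D ht
  have clC : IsClosed C := Cs_closed D ht
  have neB : B.Nonempty := ⟨_, za, hza, 0, le_rfl, rfl⟩
  have neC : C.Nonempty := ⟨_, za, hza, 1, one_pos, rfl⟩
  have hd : Disjoint B C := BC_disj D ht
  set T : Set ℂ := {y | y ∈ PS C B ∧ y ≠ q ∧ y - tpi k ∈ PS B C ∧ y - tpi k ≠ q'} with hT
  set ψ : ℂ → ℂ := fun y => L (y - tpi k) q' - L q y + Real.pi * Complex.I with hψ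
  have hψc : ContinuousOn ψ T := by
    refine (ContinuousOn.sub ?_ ?_).add continuousOn_const
    · exact H.hL.comp (f := fun y => (y - tpi k, q')) (by fun_prop) (fun y hy => ⟨hy.2.2.1, hqN', hy.2.2.2⟩)
    · exact H.hL.comp (f := fun y => (q, y)) (by fun_prop) (fun y hy => ⟨hqP, hy.1, hy.2.1.symm⟩)
  have hψe : ∀ y ∈ T, Complex.exp (ψ y) = 1 := by
    intro y hy
    simp only [hψ]
    rw [Complex.exp_add, Complex.exp_sub, H.hLe _ hy.2.2.1 _ hqN' hy.2.2.2, H.hLe _ hqP _ hy.1 hy.2.1.symm,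
      Complex.exp_pi_mul_I]
    have h1 : q' - (y - tpi k) = q - y := by rw [he]; ring
    have h2 : y - q ≠ 0 := sub_ne_zero.mpr hy.2.1
    rw [h1]; field_simp; ring
  have hST : Sh Fr f t 1 ⊆ T := by
    rintro y ⟨z, hz, rfl⟩
    have m1 : f z t + tpi 1 ∈ C := ⟨z, hz, 1, one_pos, rfl⟩
    have m2 : f z t + tpi 1 - tpi k ∈ B := ⟨z, hz, 1 - k, by omega, by rw [tpi_sub]; ring⟩
    refine ⟨PS_left m1, ?_, PS_left m2, ?_⟩
    · rintro h1; exact PS_right clB neB hd hqP (h1 ▸ m1)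
    · rintro h1; exact PS_right clC neC hd.symm hqN' (h1 ▸ m2)
  obtain ⟨M1, hM1⟩ := H.nL q' hqN'
  obtain ⟨M2, hM2⟩ := H.nU q hqP
  have h0 := Sh_chain D ht 1 ψ (hψc.mono hST) (fun y hy => hψe y (hST hy)) ⟨max M1 M2, by
    intro y hy hre
    have hyT := hST hy
    have r1 := hM1 (y - tpi k) hyT.2.2.1 hyT.2.2.2 (by
      rw [Complex.sub_re, tpi_re]; have := le_max_left M1 M2; linarith)
    have r2 := hM2 y hyT.1 hyT.2.1.symm (by have := le_max_right M1 M2; linarith)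
    apply exp_one_im (hψe y hyT)
    simp only [hψ, Complex.add_im, Complex.sub_im, Complex.im_ofReal_mul, Complex.I_im, mul_one]
    rw [abs_lt] at *
    constructor <;> linarith [Real.pi_pos, r1.1, r1.2, r2.1, r2.2]⟩
  set a := f za t + tpi 1 with ha
  set s1 : ℝ := |a.re| + |q.re| + 1 with hs1
  have hs1p : 0 ≤ s1 := by positivity
  have hre : ∀ (k : ℤ) (y : ℂ), y ∈ B ∪ C → y.re ≤ (f za t + tpi k).re := by
    rintro k y (⟨z, hz, l, -, rfl⟩ | ⟨z, hz, l, -, rfl⟩) <;>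
    · simp only [Complex.add_re, tpi_re, add_zero]; exact hmax z hz
  have haC : a ∈ C := ⟨za, hza, 1, one_pos, rfl⟩
  have haB : f za t + tpi (1 - k) ∈ B := ⟨za, hza, 1 - k, by omega, rfl⟩
  have hpath : ∀ s ∈ Icc (0:ℝ) s1, a + (s:ℂ) ∈ T := by
    intro s hs
    have p1 := tip_PS (W := C) clB neB (Set.disjoint_right.mp hd haC) haC (fun y hy => hre 1 y (Or.inl hy)) hs.1
    have p2 := tip_PS (W := B) clC neC (Set.disjoint_left.mp hd haB) haB (fun y hy => hre (1 - k) y (Or.inr hy)) hs.1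
    have e : f za t + tpi (1 - k) + (s:ℂ) = a + s - tpi k := by rw [ha, tpi_sub]; ring
    rw [e] at p2
    exact ⟨p1.1, fun hh => p1.2 (hh ▸ hqP), p2.1, fun hh => p2.2 (hh ▸ hqN')⟩
  have hcst := CONST (S := Icc (0:ℝ) s1) (ψ := fun s : ℝ => ψ (a + s)) isPreconnected_Icc
    (hψc.comp (f := fun s : ℝ => a + (s:ℂ)) (by fun_prop) hpath) (fun s hs => hψe _ (hpath s hs))
    (x := s1) (y := 0) ⟨hs1p, le_rfl⟩ ⟨le_rfl, hs1p⟩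
  simp only [Complex.ofReal_zero, add_zero] at hcst
  rw [h0 a ⟨za, hza, rfl⟩] at hcst
  have hT1 := hpath s1 ⟨hs1p, le_rfl⟩
  have i1 := neg_abs_le a.re
  have i2 := le_abs_self q.re
  have i3 := abs_nonneg q.re
  have r1 := H.tL _ hT1.1 (by simp only [Complex.add_re, Complex.ofReal_re]; linarith) q hqP
    (by simp only [Complex.add_re, Complex.ofReal_re]; linarith)
  have hqre : q'.re = q.re := by rw [he, Complex.add_re, tpi_re, add_zero]
  have r2 := H.tU _ hT1.2.2.1 (by simp only [Complex.sub_re, tpi_re, Complex.add_re, Complex.ofReal_re]; linarith) q' hqN'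
    (by simp only [Complex.sub_re, tpi_re, Complex.add_re, Complex.ofReal_re]; linarith)
  have := congrArg Complex.im hcst
  simp only [hψ, Complex.add_im, Complex.sub_im, Complex.im_ofReal_mul, Complex.I_im, mul_one, Complex.zero_im] at this
  rw [abs_lt] at r1 r2
  linarith [Real.pi_pos, r1.1, r1.2, r2.1, r2.2]

/-- the equidistant set in the closed left half plane -/
def EH (B C : Set ℂ) : Set ℂ := {q | q ∈ PS B C ∧ q ∈ PS C B ∧ q.re ≤ 0}

theorem PS_closed (B C : Set ℂ) : IsClosed (PS B C) :=
  isClosed_le (continuous_infDist_pt B) (continuous_infDist_pt C)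

theorem PS_total (B C : Set ℂ) (x : ℂ) : x ∈ PS B C ∨ x ∈ PS C B :=
  le_total (infDist x B) (infDist x C)

theorem EH_closed (B C : Set ℂ) : IsClosed (EH B C) :=
  (PS_closed B C).inter ((PS_closed C B).inter (isClosed_le Complex.continuous_re continuous_const))

theorem spk_re_le' {d q : ℂ} {m s : ℝ} (hs : s ∈ Icc (0:ℝ) 1) (hd : d.re ≤ m) (hq : q.re ≤ m) :
    (spk d q s).re ≤ m := by
  have : (spk d q s).re = (1 - s) * d.re + s * q.re := by
    simp [spk]; ring
  rw [this]
  nlinarith [hs.1, hs.2]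

theorem CONNL {B C : Set ℂ} {Λ : ℂ → ℂ → ℂ} {r0 : ℝ} (H : Cfg B C Λ r0) :
    IsPreconnected ({0} ∪ Complex.exp '' EH B C) := by
  rw [isPreconnected_closed_iff]
  have main : ∀ L1 L2 : Set ℂ, IsClosed L1 → IsClosed L2 → {0} ∪ Complex.exp '' EH B C ⊆ L1 ∪ L2 →
      (0:ℂ) ∈ L1 → (({0} ∪ Complex.exp '' EH B C) ∩ L2).Nonempty →
      (({0} ∪ Complex.exp '' EH B C) ∩ (L1 ∩ L2)).Nonempty := by
    intro L1 L2 h1 h2 hcov h01 hne2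
    by_contra hemp
    rw [not_nonempty_iff_eq_empty] at hemp
    have h02 : (0:ℂ) ∉ L2 := fun h => by
      have : (0:ℂ) ∈ ({0} ∪ Complex.exp '' EH B C) ∩ (L1 ∩ L2) := ⟨Or.inl rfl, h01, h⟩
      rw [hemp] at this; exact this
    obtain ⟨ε, hε, hball⟩ := Metric.isOpen_iff.mp h2.isOpen_compl 0 h02
    set m : ℝ := min (Real.log ε) 0 with hm
    have hfar : ∀ q : ℂ, q.re < m → Complex.exp q ∉ L2 := by
      intro q hq
      apply hball
      rw [mem_ball_zero_iff, Complex.norm_exp, ← Real.lt_log_iff_exp_lt hε]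
      exact hq.trans_le (min_le_left _ _)
    have hm0 : m ≤ 0 := min_le_right _ _
    set H0 : Set ℂ := {q | q.re ≤ 0} with hH0
    have clH : IsClosed H0 := isClosed_le Complex.continuous_re continuous_const
    have cvH : Convex ℝ H0 := convex_halfSpace_re_le 0
    obtain ⟨ψP, ψN, cP, cN, eP, eN, a1, a2⟩ := UNIC (H := H0) (P := PS B C ∩ H0) (N := PS C B ∩ H0)
      (E1 := EH B C ∩ Complex.exp ⁻¹' L1) (E2 := EH B C ∩ Complex.exp ⁻¹' L2) cvH
      ((PS_closed B C).inter clH) ((PS_closed C B).inter clH)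
      (by
        rw [← union_inter_distrib_right]
        apply inter_eq_self_of_subset_right
        intro x _; exact PS_total B C x)
      (by
        rw [← inter_union_distrib_left]
        ext x
        constructor
        · rintro ⟨⟨p1, p2⟩, p3, -⟩
          have hx : x ∈ EH B C := ⟨p1, p3, p2⟩
          exact ⟨hx, hcov (Or.inr ⟨x, hx, rfl⟩)⟩
        · rintro ⟨⟨p1, p2, p3⟩, -⟩
          exact ⟨⟨p1, p3⟩, p2, p3⟩)
      ((EH_closed B C).inter (h1.preimage Complex.continuous_exp))
      ((EH_closed B C).inter (h2.preimage Complex.continuous_exp))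
      (by
        rw [Set.disjoint_left]
        rintro x ⟨hx, hx1⟩ ⟨-, hx2⟩
        have : Complex.exp x ∈ ({0} ∪ Complex.exp '' EH B C) ∩ (L1 ∩ L2) := ⟨Or.inr ⟨x, hx, rfl⟩, hx1, hx2⟩
        rw [hemp] at this; exact this)
    -- glue on the far half plane
    classical
    set W : Set ℂ := {q | q.re < m} with hW
    have hWH : W ⊆ H0 := fun q hq => (le_of_lt hq).trans hm0
    set Ψ : ℂ → ℂ := fun x => if x ∈ PS B C then ψP x else ψN x with hΨ
    have ΨP : ∀ x ∈ PS B C, Ψ x = ψP x := fun x hx => by simp [hΨ, hx]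
    have ΨN : ∀ x ∈ PS C B, x ∈ W → Ψ x = ψN x := by
      intro x hx hxW
      by_cases hxP : x ∈ PS B C
      · rw [ΨP x hxP]
        apply a1
        have hxE : x ∈ EH B C := ⟨hxP, hx, hWH hxW⟩
        refine ⟨hxE, ?_⟩
        rcases hcov (Or.inr ⟨x, hxE, rfl⟩) with h | h
        · exact h
        · exact absurd h (hfar x hxW)
      · simp [hΨ, hxP]
    have hΨc : ContinuousOn Ψ W := by
      intro x hx
      have hWo : W ∈ 𝓝 x := (isOpen_lt Complex.continuous_re continuous_const).mem_nhds hx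
      have g1 : ContinuousWithinAt Ψ (W ∩ PS B C) x := by
        by_cases hxP : x ∈ PS B C
        · exact ((cP x ⟨hxP, hWH hx⟩).mono (fun y hy => ⟨hy.2, hWH hy.1⟩)).congr (fun y hy => ΨP y hy.2) (ΨP x hxP)
        · apply continuousWithinAt_of_notMem_closure
          intro hcl
          exact hxP ((PS_closed B C).closure_subset (closure_mono inter_subset_right hcl))
      have g2 : ContinuousWithinAt Ψ (W ∩ PS C B) x := by
        by_cases hxP : x ∈ PS C B
        · exact ((cN x ⟨hxP, hWH hx⟩).mono (fun y hy => ⟨hy.2, hWH hy.1⟩)).congr (fun y hy => ΨN y hy.2 hy.1) (ΨN x hxP hx)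
        · apply continuousWithinAt_of_notMem_closure
          intro hcl
          exact hxP ((PS_closed C B).closure_subset (closure_mono inter_subset_right hcl))
      refine (g1.union g2).mono ?_
      intro y hy
      rcases PS_total B C y with h | h
      · exact Or.inl ⟨hy, h⟩
      · exact Or.inr ⟨hy, h⟩
    have hΨe : ∀ x ∈ W, Complex.exp (Ψ x) = 1 := by
      intro x hx
      rcases PS_total B C x with h | h
      · rw [ΨP x h]; exact eP x ⟨h, hWH hx⟩
      · rw [ΨN x h hx]; exact eN x ⟨h, hWH hx⟩
    have hWc : IsPreconnected W := (convex_halfSpace_re_lt m).isPreconnected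
    set m0 : ℂ := Ψ ((m - 1 : ℝ):ℂ) with hm0
    have hwm : ((m - 1 : ℝ):ℂ) ∈ W := by show ((m - 1 : ℝ):ℂ).re < m; rw [Complex.ofReal_re]; linarith
    have hcst : ∀ x ∈ W, Ψ x = m0 := fun x hx => CONST hWc hΨc hΨe hx hwm
    have em0 : Complex.exp m0 = 1 := hΨe _ hwm
    have hBs : B ⊆ PS B C ∩ H0 := fun b hb => ⟨PS_left hb, (H.reB b hb).le⟩
    have hCs : C ⊆ PS C B ∩ H0 := fun b hb => ⟨PS_left hb, (H.reC b hb).le⟩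
    have vB : ∀ b ∈ B, ψP b - m0 = 0 := H.chB (fun b => ψP b - m0) ((cP.mono hBs).sub continuousOn_const)
      (fun b hb => by rw [Complex.exp_sub, em0, eP b (hBs hb), div_one])
      ⟨-m, fun b hb hre => by
        rw [neg_neg] at hre
        rw [← hcst b hre, ΨP b (hBs hb).1, sub_self]⟩
    have vC : ∀ b ∈ C, ψN b - m0 = 0 := H.chC (fun b => ψN b - m0) ((cN.mono hCs).sub continuousOn_const)
      (fun b hb => by rw [Complex.exp_sub, em0, eN b (hCs hb), div_one])
      ⟨-m, fun b hb hre => by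
        rw [neg_neg] at hre
        rw [← hcst b hre, ΨN b (hCs hb).1 hre, sub_self]⟩
    obtain ⟨y, hyL, hy2⟩ := hne2
    rcases hyL with hy0 | ⟨q, hq, rfl⟩
    · exact h02 ((show y = 0 from hy0) ▸ hy2)
    have hqe := a2 q ⟨hq, hy2⟩
    have wP : ψP q = m0 := by
      obtain ⟨b, hb, hbq⟩ := H.clB.exists_infDist_eq_dist H.neB q
      have hmm : ∀ s ∈ Icc (0:ℝ) 1, spk b q s ∈ PS B C ∩ H0 := fun s hs =>
        ⟨PS_spk H.clC H.neC H.disj hb hbq.symm hq.1 hs, spk_re_le' hs (H.reB b hb).le hq.2.2⟩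
      have := CONST (S := Icc (0:ℝ) 1) (ψ := fun s => ψP (spk b q s)) isPreconnected_Icc
        (cP.comp (f := spk b q) (spk_cont b q).continuousOn hmm) (fun s hs => eP _ (hmm s hs))
        (x := 1) (y := 0) (by simp) (by simp)
      simp only [spk_one, spk_zero] at this
      rw [this]; exact sub_eq_zero.mp (vB b hb)
    have wN : ψN q = m0 := by
      obtain ⟨b, hb, hbq⟩ := H.clC.exists_infDist_eq_dist H.neC q
      have hmm : ∀ s ∈ Icc (0:ℝ) 1, spk b q s ∈ PS C B ∩ H0 := fun s hs =>
        ⟨PS_spk H.clB H.neB H.disj.symm hb hbq.symm hq.2.1 hs, spk_re_le' hs (H.reC b hb).le hq.2.2⟩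
      have := CONST (S := Icc (0:ℝ) 1) (ψ := fun s => ψN (spk b q s)) isPreconnected_Icc
        (cN.comp (f := spk b q) (spk_cont b q).continuousOn hmm) (fun s hs => eN _ (hmm s hs))
        (x := 1) (y := 0) (by simp) (by simp)
      simp only [spk_one, spk_zero] at this
      rw [this]; exact sub_eq_zero.mp (vC b hb)
    rw [wP, wN] at hqe
    have : (2 * Real.pi * Complex.I : ℂ) = 0 := by linear_combination -hqe
    exact Complex.two_pi_I_ne_zero this
  intro L1 L2 h1 h2 hcov hne1 hne2
  rcases hcov (Or.inl rfl) with h0 | h0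
  · exact main L1 L2 h1 h2 hcov h0 hne2
  · rw [inter_comm L1 L2]
    exact main L2 L1 h2 h1 (by rwa [union_comm L2 L1]) h0 hne1
end part10

section part11
theorem ARC_ORD {Y : Type*} [LinearOrder Y] [TopologicalSpace Y] [OrderTopology Y] [CompactSpace Y]
    [DenselyOrdered Y] [TopologicalSpace.SeparableSpace Y] [Nontrivial Y] :
    ∃ τ : Y → Icc (0:ℝ) 1, Continuous τ ∧ Function.Injective τ ∧ Monotone τ := by
  obtain ⟨D, hDc, hDd⟩ := TopologicalSpace.exists_countable_dense Y
  obtain ⟨bot, -, hbot⟩ := (isCompact_univ (X := Y)).exists_isLeast univ_nonempty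
  obtain ⟨top, -, htop⟩ := (isCompact_univ (X := Y)).exists_isGreatest univ_nonempty
  set D' : Set Y := D ∩ {x | bot < x ∧ x < top} with hD'
  have hbt : ∀ a b : Y, a < b → ∃ d ∈ D', a < d ∧ d < b := by
    intro a b hab
    obtain ⟨x, hx⟩ := exists_between hab
    obtain ⟨d, hd, hdI⟩ := hDd.exists_mem_open isOpen_Ioo ⟨x, hx⟩
    exact ⟨d, ⟨hd, (hbot (mem_univ a)).trans_lt hdI.1, hdI.2.trans_le (htop (mem_univ b))⟩, hdI.1, hdI.2⟩
  obtain ⟨u, v, huv⟩ := exists_pair_lt Y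
  have hne : Nonempty D' := by
    obtain ⟨d, hd, -⟩ := hbt u v huv; exact ⟨⟨d, hd⟩⟩
  have hcount : Countable D' := (hDc.mono inter_subset_left).to_subtype
  have hdense : DenselyOrdered D' := ⟨fun a b hab => by
    obtain ⟨d, hd, h1, h2⟩ := hbt a b hab
    exact ⟨⟨d, hd⟩, h1, h2⟩⟩
  have hmin : NoMinOrder D' := ⟨fun a => by
    obtain ⟨d, hd, h1, h2⟩ := hbt bot a a.2.2.1
    exact ⟨⟨d, hd⟩, h2⟩⟩
  have hmax : NoMaxOrder D' := ⟨fun a => by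
    obtain ⟨d, hd, h1, h2⟩ := hbt a top a.2.2.2
    exact ⟨⟨d, hd⟩, h1⟩⟩
  have hne2 : Nonempty (Ioo (0:ℚ) 1) := ⟨⟨1/2, by norm_num, by norm_num⟩⟩
  obtain ⟨e⟩ := Order.iso_of_countable_dense D' (Ioo (0:ℚ) 1)
  set er : D' → ℝ := fun d => ((e d : ℚ) : ℝ) with her
  have er_lt : ∀ a b : D', (a:Y) < b → er a < er b := by
    intro a b hab
    have : e a < e b := e.lt_iff_lt.mpr hab
    simp only [her]
    exact_mod_cast this
  have er_le : ∀ a b : D', (a:Y) ≤ b → er a ≤ er b := by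
    intro a b hab
    have : e a ≤ e b := e.le_iff_le.mpr hab
    simp only [her]
    exact_mod_cast this
  have er0 : ∀ a, 0 < er a := fun a => by have := (e a).2.1; simp only [her]; exact_mod_cast this
  have er1 : ∀ a, er a < 1 := fun a => by have := (e a).2.2; simp only [her]; exact_mod_cast this
  set T : Y → Set ℝ := fun y => {0} ∪ er '' {d | (d:Y) ≤ y} with hT
  have Tne : ∀ y, (T y).Nonempty := fun y => ⟨0, Or.inl rfl⟩
  have Tub : ∀ y, ∀ x ∈ T y, x ≤ 1 := by
    rintro y x (rfl | ⟨d, -, rfl⟩)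
    · norm_num
    · exact (er1 d).le
  have Tbd : ∀ y, BddAbove (T y) := fun y => ⟨1, Tub y⟩
  set τ : Y → Icc (0:ℝ) 1 := fun y => ⟨sSup (T y), le_csSup (Tbd y) (Or.inl rfl), csSup_le (Tne y) (Tub y)⟩ with hτ
  have hmono : Monotone τ := by
    intro a b hab
    apply csSup_le_csSup (Tbd b) (Tne a)
    rintro x (rfl | ⟨d, hd, rfl⟩)
    · exact Or.inl rfl
    · exact Or.inr ⟨d, le_trans hd hab, rfl⟩
  have hval : ∀ d : D', (τ d : ℝ) = er d := by
    intro d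
    apply le_antisymm
    · apply csSup_le (Tne _)
      rintro x (rfl | ⟨d', hd', rfl⟩)
      · exact (er0 d).le
      · exact er_le _ _ hd'
    · exact le_csSup (Tbd _) (Or.inr ⟨d, le_refl (d:Y), rfl⟩)
  refine ⟨τ, ?_, ?_, hmono⟩
  · refine hmono.continuous_of_denseRange ?_
    refine dense_of_exists_between ?_
    intro a b hab
    obtain ⟨q, hq1, hq2⟩ := exists_rat_btwn (show (a:ℝ) < b from hab)
    have hq : q ∈ Ioo (0:ℚ) 1 := ⟨by
      have := a.2.1.trans_lt hq1; exact_mod_cast this, by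
      have := hq2.trans_le b.2.2; exact_mod_cast this⟩
    refine ⟨τ (e.symm ⟨q, hq⟩), ⟨_, rfl⟩, ?_, ?_⟩
    · show (a:ℝ) < τ (e.symm ⟨q, hq⟩)
      rw [hval]; simp [her, hq1]
    · show (τ (e.symm ⟨q, hq⟩) : ℝ) < b
      rw [hval]; simp [her, hq2]
  · apply StrictMono.injective
    intro a b hab
    obtain ⟨d, hd, h1, h2⟩ := hbt a b hab
    obtain ⟨d', hd', h1', h2'⟩ := hbt d b h2
    show (τ a : ℝ) < τ b
    have i1 : (τ a : ℝ) ≤ τ d := hmono h1.le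
    have i2 : (τ d' : ℝ) ≤ τ b := hmono h2'.le
    have i3 := er_lt ⟨d, hd⟩ ⟨d', hd'⟩ h1'
    rw [← hval, ← hval] at i3
    exact i1.trans_lt (i3.trans_le i2)

theorem ARC_LT {Y : Type*} [TopologicalSpace Y] [CompactSpace Y] [PreconnectedSpace Y]
    [TopologicalSpace.SeparableSpace Y] [Nontrivial Y] (lt : Y → Y → Prop)
    (tri : ∀ a b, a ≠ b → lt a b ∨ lt b a) (asym : ∀ a b, lt a b → ¬ lt b a)
    (o1 : ∀ a, IsOpen {x | lt x a}) (o2 : ∀ a, IsOpen {x | lt a x}) (m : Y) (hm : ∀ x, x ≠ m → lt m x) :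
    ∃ τ : Y → Icc (0:ℝ) 1, Continuous τ ∧ Function.Injective τ ∧ ∀ x, τ m ≤ τ x := by
  have irr : ∀ a, ¬ lt a a := fun a h => asym a a h h
  have clopen : ∀ U V : Set Y, IsOpen U → IsOpen V → (∀ x, x ∈ U ∨ x ∈ V) → (∀ x, x ∈ U → x ∈ V → False) →
      U.Nonempty → V.Nonempty → False := by
    intro U V hU hV hc hd ⟨x, hx⟩ ⟨y, hy⟩
    obtain ⟨z, -, hz1, hz2⟩ := (isPreconnected_univ (α := Y)) U V hU hV (fun z _ => hc z) ⟨x, mem_univ _, hx⟩ ⟨y, mem_univ _, hy⟩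
    exact hd z hz1 hz2
  have trans : ∀ a b c, lt a b → lt b c → lt a c := by
    intro a b c hab hbc
    rcases eq_or_ne a c with rfl | hac
    · exact absurd hbc (asym _ _ hab)
    rcases tri a c hac with h | h
    · exact h
    exfalso
    refine clopen ({x | lt x b} ∩ {x | lt c x}) ({x | lt b x} ∪ {x | lt x c}) ((o1 b).inter (o2 c)) ((o2 b).union (o1 c))
      ?_ ?_ ⟨a, hab, h⟩ ⟨b, Or.inr hbc⟩
    · intro x
      rcases eq_or_ne x b with rfl | hxb
      · exact Or.inr (Or.inr hbc)
      rcases eq_or_ne x c with rfl | hxc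
      · exact Or.inr (Or.inl hbc)
      rcases tri x b hxb with h1 | h1
      · rcases tri x c hxc with h2 | h2
        · exact Or.inr (Or.inr h2)
        · exact Or.inl ⟨h1, h2⟩
      · exact Or.inr (Or.inl h1)
    · rintro x ⟨h1, h2⟩ (h3 | h3)
      · exact asym _ _ h1 h3
      · exact asym _ _ h2 h3
  classical
  letI : LinearOrder Y :=
    { le := fun a b => a = b ∨ lt a b
      lt := lt
      le_refl := fun a => Or.inl rfl
      le_trans := by
        rintro a b c (rfl | h1) (rfl | h2)
        · exact Or.inl rfl
        · exact Or.inr h2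
        · exact Or.inr h1
        · exact Or.inr (trans _ _ _ h1 h2)
      lt_iff_le_not_ge := by
        intro a b
        constructor
        · intro h
          refine ⟨Or.inr h, ?_⟩
          rintro (rfl | h2)
          · exact irr _ h
          · exact asym _ _ h h2
        · rintro ⟨rfl | h1, h2⟩
          · exact absurd (Or.inl rfl) h2
          · exact h1
      le_antisymm := by
        rintro a b (rfl | h1) (h2 | h2)
        · rfl
        · rfl
        · exact h2.symm
        · exact absurd h2 (asym _ _ h1)
      le_total := by
        intro a b
        rcases eq_or_ne a b with rfl | h
        · exact Or.inl (Or.inl rfl)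
        · rcases tri a b h with h | h
          · exact Or.inl (Or.inr h)
          · exact Or.inr (Or.inr h)
      toDecidableLE := Classical.decRel _ }
  haveI : OrderTopology Y := by
    rename_i tY _ _ _ _
    have hle : tY ≤ Preorder.topology Y := by
      apply le_generateFrom
      rintro s ⟨a, rfl | rfl⟩
      · exact o2 a
      · exact o1 a
    refine ⟨?_⟩
    have h2 : @T2Space Y (Preorder.topology Y) := by
      letI := Preorder.topology Y
      haveI : OrderTopology Y := ⟨rfl⟩
      infer_instance
    apply le_antisymm hle
    intro s hs
    have hc : @IsCompact Y tY sᶜ := (@IsClosed.isCompact Y tY _ _ (@IsOpen.isClosed_compl Y tY _ hs))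
    have hc2 : @IsCompact Y (Preorder.topology Y) (id '' sᶜ) :=
      @IsCompact.image Y Y tY (Preorder.topology Y) _ _ hc (continuous_id_iff_le.mpr hle)
    rw [image_id] at hc2
    have hc3 := @IsCompact.isClosed Y (Preorder.topology Y) h2 _ hc2
    exact (@isClosed_compl_iff Y (Preorder.topology Y) _).mp hc3
  haveI : DenselyOrdered Y := ⟨by
    intro a b hab
    by_contra hc
    push Not at hc
    refine clopen {x | lt x b} {x | lt a x} (o1 b) (o2 a) ?_ ?_ ⟨a, hab⟩ ⟨b, hab⟩
    · intro x
      rcases lt_or_ge x b with h | h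
      · exact Or.inl h
      · exact Or.inr (lt_of_lt_of_le hab h)
    · intro x h1 h2
      exact absurd (hc x h2) (not_le.mpr h1)⟩
  obtain ⟨τ, h1, h2, h3⟩ := ARC_ORD (Y := Y)
  refine ⟨τ, h1, h2, fun x => h3 ?_⟩
  rcases eq_or_ne x m with rfl | h
  · exact le_rfl
  · exact (show m < x from hm x h).le
end part11

section part12
theorem EHO_cpt {E : Set ℂ} (hE : IsClosed E) (hre : ∀ q ∈ E, q.re ≤ 0)
    (hbd : ∀ M : ℝ, ∃ Y0 : ℝ, ∀ q ∈ E, -M ≤ q.re → |q.im| ≤ Y0) (M : ℝ) : IsCompact (E ∩ {q | -M ≤ q.re}) := by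
  refine isCompact_of_isClosed_isBounded (hE.inter (isClosed_le continuous_const Complex.continuous_re)) ?_
  obtain ⟨Y0, hY⟩ := hbd M
  rw [isBounded_iff_forall_norm_le]
  refine ⟨|M| + Y0, fun q hq => ?_⟩
  have h1 := Complex.norm_le_abs_re_add_abs_im q
  have h2 := hY q hq.1 hq.2
  have h3 : |q.re| ≤ |M| := by
    have h4 : -M ≤ q.re := hq.2
    rw [abs_of_nonpos (hre q hq.1)]
    exact le_trans (by linarith) (le_abs_self M)
  linarith

theorem EHO_Lcpt {E : Set ℂ} (hE : IsClosed E) (hre : ∀ q ∈ E, q.re ≤ 0)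
    (hbd : ∀ M : ℝ, ∃ Y0 : ℝ, ∀ q ∈ E, -M ≤ q.re → |q.im| ≤ Y0) : IsCompact ({0} ∪ Complex.exp '' E) := by
  refine isCompact_of_isClosed_isBounded ?_ ?_
  · rw [← isOpen_compl_iff, isOpen_iff_mem_nhds]
    intro z hz
    have hz0 : z ≠ 0 := fun h => hz (Or.inl h)
    have hn : 0 < ‖z‖ := norm_pos_iff.mpr hz0
    set M := -(Real.log (‖z‖ / 2)) with hM
    have hK := (EHO_cpt hE hre hbd M).image Complex.continuous_exp
    have h1 : (Complex.exp '' (E ∩ {q | -M ≤ q.re}))ᶜ ∈ 𝓝 z := hK.isClosed.isOpen_compl.mem_nhds (by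
      rintro ⟨q, hq, rfl⟩
      exact hz (Or.inr ⟨q, hq.1, rfl⟩))
    have h2 : {w : ℂ | ‖z‖ / 2 < ‖w‖} ∈ 𝓝 z :=
      (isOpen_lt continuous_const continuous_norm).mem_nhds (by show ‖z‖ / 2 < ‖z‖; linarith)
    filter_upwards [h1, h2] with w hw1 hw2
    rintro (h | ⟨q, hq, rfl⟩)
    · have : w = 0 := h
      simp only [this, norm_zero, mem_ofPred_eq] at hw2; linarith
    · refine hw1 ⟨q, ⟨hq, ?_⟩, rfl⟩
      have hw3 : ‖z‖ / 2 < ‖Complex.exp q‖ := hw2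
      rw [Complex.norm_exp] at hw3
      show -M ≤ q.re
      rw [hM, neg_neg]
      have := Real.log_le_log (by linarith) hw3.le
      rwa [Real.log_exp] at this
  · rw [isBounded_iff_forall_norm_le]
    refine ⟨1, ?_⟩
    rintro x (h | ⟨q, hq, rfl⟩)
    · have : x = 0 := h
      simp [this]
    · rw [Complex.norm_exp]; exact Real.exp_le_one_iff.mpr (hre q hq)

theorem lg_cont {E : Set ℂ} (hE : IsClosed E) (hre : ∀ q ∈ E, q.re ≤ 0)
    (hbd : ∀ M : ℝ, ∃ Y0 : ℝ, ∀ q ∈ E, -M ≤ q.re → |q.im| ≤ Y0) {lg : ℂ → ℂ}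
    (hlg : ∀ q ∈ E, lg (Complex.exp q) = q) : ContinuousOn lg (Complex.exp '' E) := by
  rintro _ ⟨q, hq, rfl⟩
  set M := -q.re + 1 with hM
  have h1 := INVC (EHO_cpt hE hre hbd M) Complex.continuous_exp.continuousOn lg (fun x hx => hlg x hx.1)
  have h2 := h1 (Complex.exp q) ⟨q, ⟨hq, by show -M ≤ q.re; rw [hM]; linarith⟩, rfl⟩
  refine h2.mono_of_mem_nhdsWithin ?_
  have h3 : {w : ℂ | Real.exp (-M) < ‖w‖} ∈ 𝓝 (Complex.exp q) :=
    (isOpen_lt continuous_const continuous_norm).mem_nhds (by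
      show Real.exp (-M) < ‖Complex.exp q‖
      rw [Complex.norm_exp, Real.exp_lt_exp, hM]; linarith)
  filter_upwards [self_mem_nhdsWithin, mem_nhdsWithin_of_mem_nhds h3] with w hw1 hw2
  obtain ⟨x, hx, rfl⟩ := hw1
  refine ⟨x, ⟨hx, ?_⟩, rfl⟩
  have hw3 : Real.exp (-M) < ‖Complex.exp x‖ := hw2
  rw [Complex.norm_exp, Real.exp_lt_exp] at hw3
  exact hw3.le

theorem im_ne {a b d : ℂ} (ha : Complex.exp a = d) (hb : Complex.exp b = -d) : a.im ≠ b.im := by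
  intro h
  have h1 : Complex.exp (a - b) = -1 := by
    rw [Complex.exp_sub, ha, hb, div_neg, div_self]
    rw [← ha]; exact Complex.exp_ne_zero _
  have h2 := congrArg Complex.re h1
  rw [Complex.exp_re] at h2
  simp [h] at h2
  have := Real.exp_pos (a.re - b.re)
  linarith

theorem ARC_PAR {A : Set ℂ} (hA : IsCompact A) (hc : IsPreconnected A) {m : A} (hnt : Nontrivial A)
    {τ : A → Icc (0:ℝ) 1} (hτ : Continuous τ) (hi : Function.Injective τ) (hmin : ∀ x, τ m ≤ τ x) :
    ∃ γ : ℝ → ℂ, ContinuousOn γ (Set.Icc 0 1) ∧ Set.InjOn γ (Set.Icc 0 1) ∧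
    γ '' Set.Icc 0 1 = A ∧ γ 0 = m := by
  classical
  haveI : Nonempty A := ⟨m⟩
  haveI : CompactSpace A := isCompact_iff_compactSpace.mp hA
  haveI : PreconnectedSpace A := isPreconnected_iff_preconnectedSpace.mp hc
  set σ : A → ℝ := fun x => (τ x : ℝ) with hσ
  have hσc : Continuous σ := continuous_subtype_val.comp hτ
  have hσi : Function.Injective σ := Subtype.val_injective.comp hi
  obtain ⟨M, -, hM⟩ := (isCompact_univ (X := A)).exists_isMaxOn univ_nonempty hσc.continuousOn
  have hM' : ∀ x, σ x ≤ σ M := fun x => hM (mem_univ x)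
  have hm' : ∀ x, σ m ≤ σ x := fun x => hmin x
  have hlt : σ m < σ M := by
    obtain ⟨x, y, hxy⟩ := hnt
    by_contra hcon
    have e1 : ∀ x, σ x = σ m := fun x => le_antisymm ((hM' x).trans (not_lt.mp hcon)) (hm' x)
    exact hxy (hσi ((e1 x).trans (e1 y).symm))
  have hrange : σ '' univ = Icc (σ m) (σ M) := by
    apply Subset.antisymm
    · rintro _ ⟨x, -, rfl⟩
      exact ⟨hm' x, hM' x⟩
    · exact (isPreconnected_univ.image σ hσc.continuousOn).Icc_subset ⟨m, trivial, rfl⟩ ⟨M, trivial, rfl⟩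
  set g := Function.invFun σ with hg
  have hgl : ∀ x, g (σ x) = x := Function.leftInverse_invFun hσi
  have hgc : ContinuousOn g (Icc (σ m) (σ M)) := by
    rw [← hrange]
    exact INVC isCompact_univ hσc.continuousOn g (fun x _ => hgl x)
  have hgr : ∀ s ∈ Icc (σ m) (σ M), σ (g s) = s := by
    intro s hs
    rw [← hrange] at hs
    obtain ⟨x, -, rfl⟩ := hs
    rw [hgl]
  have hmap : ∀ s ∈ Icc (0:ℝ) 1, σ m + s * (σ M - σ m) ∈ Icc (σ m) (σ M) := by
    intro s hs
    constructor <;> nlinarith [hs.1, hs.2]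
  refine ⟨fun s => (g (σ m + s * (σ M - σ m)) : ℂ), ?_, ?_, ?_, ?_⟩
  · refine continuous_subtype_val.comp_continuousOn ?_
    exact hgc.comp (f := fun s : ℝ => σ m + s * (σ M - σ m)) (by fun_prop) hmap
  · intro s hs s' hs' he
    have h1 := Subtype.val_injective he
    have h2 := congrArg σ h1
    rw [hgr _ (hmap s hs), hgr _ (hmap s' hs')] at h2
    have h3 : (σ M - σ m) ≠ 0 := by linarith
    exact mul_right_cancel₀ h3 (by linarith)
  · apply Subset.antisymm
    · rintro _ ⟨s, hs, rfl⟩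
      exact (g (σ m + s * (σ M - σ m))).2
    · intro x hx
      refine ⟨(σ ⟨x, hx⟩ - σ m) / (σ M - σ m), ⟨?_, ?_⟩, ?_⟩
      · exact div_nonneg (by linarith [hm' ⟨x, hx⟩]) (by linarith)
      · rw [div_le_one (by linarith)]; linarith [hM' ⟨x, hx⟩]
      · have : σ m + (σ ⟨x, hx⟩ - σ m) / (σ M - σ m) * (σ M - σ m) = σ ⟨x, hx⟩ := by
          rw [div_mul_cancel₀ _ (by linarith)]; ring
        simp only [this, hgl]
  · simp [hgl]

theorem SLICE {B C : Set ℂ} {L : ℂ → ℂ → ℂ} (H : Cfx B C L)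
    (hbd : ∀ M : ℝ, ∃ Y0 : ℝ, ∀ q ∈ EH B C, -M ≤ q.re → |q.im| ≤ Y0)
    (hinj : InjOn Complex.exp (EH B C)) (hne : (EH B C).Nonempty)
    (hconn : IsPreconnected ({0} ∪ Complex.exp '' EH B C)) :
    ∃ γ : ℝ → ℂ, ContinuousOn γ (Set.Icc 0 1) ∧ Set.InjOn γ (Set.Icc 0 1) ∧
    γ '' Set.Icc 0 1 = {0} ∪ Complex.exp '' EH B C ∧ γ 0 = 0 := by
  classical
  set E := EH B C with hEdef
  have hE : IsClosed E := EH_closed B C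
  have hre : ∀ q ∈ E, q.re ≤ 0 := fun q hq => hq.2.2
  have hcpt := EHO_Lcpt hE hre hbd
  set lg := Function.invFunOn Complex.exp E with hlgd
  have hlg : ∀ q ∈ E, lg (Complex.exp q) = q := fun q hq => hinj.leftInvOn_invFunOn hq
  have hlgc := lg_cont hE hre hbd hlg
  set A : Set ℂ := {0} ∪ Complex.exp '' E with hA
  have hA0 : ∀ x : A, (x:ℂ) ≠ 0 → (x:ℂ) ∈ Complex.exp '' E := fun x hx => x.2.resolve_left hx
  have hlgE : ∀ x : A, (x:ℂ) ≠ 0 → lg x ∈ E ∧ Complex.exp (lg x) = x := by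
    intro x hx
    obtain ⟨q, hq, he⟩ := hA0 x hx
    rw [← he, hlg q hq]; exact ⟨hq, rfl⟩
  have hlgne : ∀ x y : A, (x:ℂ) ≠ 0 → (y:ℂ) ≠ 0 → x ≠ y → lg x ≠ lg y := by
    intro x y hx hy hxy he
    apply hxy
    apply Subtype.ext
    rw [← (hlgE x hx).2, ← (hlgE y hy).2, he]
  haveI : CompactSpace A := isCompact_iff_compactSpace.mp hcpt
  haveI : PreconnectedSpace A := isPreconnected_iff_preconnectedSpace.mp hconn
  let m : A := ⟨0, Or.inl rfl⟩
  have hm0 : ∀ x : A, x ≠ m → (x:ℂ) ≠ 0 := fun x hx h => hx (Subtype.ext h)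
  haveI hnt : Nontrivial A := by
    obtain ⟨q, hq⟩ := hne
    exact ⟨m, ⟨Complex.exp q, Or.inr ⟨q, hq, rfl⟩⟩, fun h => Complex.exp_ne_zero q (congrArg Subtype.val h).symm⟩
  set G : A → A → ℝ := fun x a => (L (lg x) (lg a)).im - (L (lg a) (lg x)).im with hG
  have hGne : ∀ x y : A, (x:ℂ) ≠ 0 → (y:ℂ) ≠ 0 → x ≠ y → G x y ≠ 0 := by
    intro x y hx hy hxy h
    have hn := hlgne x y hx hy hxy
    refine im_ne (H.hLe _ (hlgE x hx).1.1 _ (hlgE y hy).1.2.1 hn) (b := L (lg y) (lg x)) ?_ (sub_eq_zero.mp h)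
    rw [H.hLe _ (hlgE y hy).1.1 _ (hlgE x hx).1.2.1 hn.symm]; ring
  have hGs : ∀ x y, G x y = - G y x := by intro x y; simp only [hG]; ring
  set W : A → Set A := fun a => {x | (x:ℂ) ≠ 0 ∧ x ≠ a} with hW
  have hWo : ∀ a, IsOpen (W a) := by
    intro a
    have h1 : IsOpen {x : A | (x:ℂ) ≠ 0} := isOpen_ne.preimage continuous_subtype_val
    exact h1.inter isOpen_ne
  have hGc : ∀ a : A, (a:ℂ) ≠ 0 → ContinuousOn (fun x => G x a) (W a) := by
    intro a ha
    have hl : ContinuousOn (fun x : A => lg x) (W a) :=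
      hlgc.comp continuous_subtype_val.continuousOn (fun x hx => hA0 x hx.1)
    refine ContinuousOn.sub (Complex.continuous_im.comp_continuousOn ?_) (Complex.continuous_im.comp_continuousOn ?_)
    · exact H.hL.comp (f := fun x : A => (lg x, lg a)) (hl.prodMk continuousOn_const)
        (fun x hx => ⟨(hlgE x hx.1).1.1, (hlgE a ha).1.2.1, hlgne x a hx.1 ha hx.2⟩)
    · exact H.hL.comp (f := fun x : A => (lg a, lg x)) (continuousOn_const.prodMk hl)
        (fun x hx => ⟨(hlgE a ha).1.1, (hlgE x hx.1).1.2.1, (hlgne x a hx.1 ha hx.2).symm⟩)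
  have hnear : ∀ a : A, (a:ℂ) ≠ 0 → ∃ η > 0, ∀ x : A, ‖(x:ℂ)‖ < η → x ≠ a ∧ ((x:ℂ) ≠ 0 → G x a < 0) := by
    intro a ha
    obtain ⟨M1, hM1⟩ := H.nL _ (hlgE a ha).1.2.1
    obtain ⟨M2, hM2⟩ := H.nU _ (hlgE a ha).1.1
    refine ⟨min ‖(a:ℂ)‖ (min (Real.exp (-M1)) (Real.exp (-M2))),
      lt_min (norm_pos_iff.mpr ha) (lt_min (Real.exp_pos _) (Real.exp_pos _)), ?_⟩
    intro x hx
    rw [lt_min_iff, lt_min_iff] at hx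
    obtain ⟨hx1, hx2, hx3⟩ := hx
    have hxa : x ≠ a := by rintro rfl; exact lt_irrefl _ hx1
    refine ⟨hxa, fun hx0 => ?_⟩
    have hn := hlgne x a hx0 ha hxa
    rw [← (hlgE x hx0).2, Complex.norm_exp, Real.exp_lt_exp] at hx2 hx3
    have i1 := hM1 _ (hlgE x hx0).1.1 hn hx2
    have i2 := hM2 _ (hlgE x hx0).1.2.1 hn.symm hx3
    rw [abs_lt] at i1 i2
    simp only [hG]
    linarith [i1.2, i2.1]
  obtain ⟨τ, h1, h2, h3⟩ := ARC_LT (Y := A)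
    (fun x y => ((x:ℂ) = 0 ∧ (y:ℂ) ≠ 0) ∨ ((x:ℂ) ≠ 0 ∧ (y:ℂ) ≠ 0 ∧ x ≠ y ∧ G x y < 0))
    (by
      intro a b hab
      by_cases ha : (a:ℂ) = 0
      · have hb : (b:ℂ) ≠ 0 := fun h => hab (Subtype.ext (ha.trans h.symm))
        exact Or.inl (Or.inl ⟨ha, hb⟩)
      by_cases hb : (b:ℂ) = 0
      · exact Or.inr (Or.inl ⟨hb, ha⟩)
      rcases lt_or_gt_of_ne (hGne a b ha hb hab) with h | h
      · exact Or.inl (Or.inr ⟨ha, hb, hab, h⟩)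
      · exact Or.inr (Or.inr ⟨hb, ha, hab.symm, by rw [hGs]; linarith⟩))
    (by
      rintro a b (⟨h1, h2⟩ | ⟨h1, h2, h3, h4⟩) (⟨h5, h6⟩ | ⟨h5, h6, h7, h8⟩)
      · exact h2 h5
      · exact h6 h1
      · exact h2 h5
      · rw [hGs] at h8; linarith)
    (by
      intro a
      by_cases ha : (a:ℂ) = 0
      · convert isOpen_empty using 1
        ext x
        simp [ha]
      obtain ⟨η, hη, hn⟩ := hnear a ha
      have e : {x : A | ((x:ℂ) = 0 ∧ (a:ℂ) ≠ 0) ∨ ((x:ℂ) ≠ 0 ∧ (a:ℂ) ≠ 0 ∧ x ≠ a ∧ G x a < 0)} =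
          {x : A | ‖(x:ℂ)‖ < η} ∪ (W a ∩ (fun x => G x a) ⁻¹' Iio 0) := by
        ext x
        constructor
        · rintro (⟨h1, h2⟩ | ⟨h1, h2, h3, h4⟩)
          · left
            show ‖(x:ℂ)‖ < η
            rw [h1, norm_zero]; exact hη
          · exact Or.inr ⟨⟨h1, h3⟩, h4⟩
        · rintro (h | ⟨⟨h1, h3⟩, h4⟩)
          · by_cases hx : (x:ℂ) = 0
            · exact Or.inl ⟨hx, ha⟩
            · exact Or.inr ⟨hx, ha, (hn x h).1, (hn x h).2 hx⟩
          · exact Or.inr ⟨h1, ha, h3, h4⟩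
      rw [e]
      exact (isOpen_lt (by fun_prop) continuous_const).union ((hGc a ha).isOpen_inter_preimage (hWo a) isOpen_Iio))
    (by
      intro a
      by_cases ha : (a:ℂ) = 0
      · have : IsOpen {x : A | (x:ℂ) ≠ 0} := isOpen_ne.preimage continuous_subtype_val
        convert this using 1
        ext x
        simp [ha]
      have e : {x : A | ((a:ℂ) = 0 ∧ (x:ℂ) ≠ 0) ∨ ((a:ℂ) ≠ 0 ∧ (x:ℂ) ≠ 0 ∧ a ≠ x ∧ G a x < 0)} =
          (W a ∩ (fun x => G x a) ⁻¹' Ioi 0) := by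
        ext x
        constructor
        · rintro (⟨h1, h2⟩ | ⟨h1, h2, h3, h4⟩)
          · exact absurd h1 ha
          · refine ⟨⟨h2, h3.symm⟩, ?_⟩
            show 0 < G x a
            rw [hGs]; linarith
        · rintro ⟨⟨h1, h3⟩, h4⟩
          refine Or.inr ⟨ha, h1, h3.symm, ?_⟩
          have h5 : 0 < G x a := h4
          rw [hGs]; linarith
      rw [e]
      exact (hGc a ha).isOpen_inter_preimage (hWo a) isOpen_Ioi)
    m (fun x hx => Or.inl ⟨rfl, hm0 x hx⟩)
  exact ARC_PAR hcpt hconn hnt h1 h2 h3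
end part12

section part13
/-- parametrized lower semicontinuity -/
def LSC (A : ℝ → Set ℂ) : Prop := ∀ t₀ ∈ Icc (0:ℝ) 1, ∀ a ∈ A t₀, ∀ ε > (0:ℝ),
  ∀ᶠ t in 𝓝[Icc 0 1] t₀, ∃ a' ∈ A t, dist a a' < ε

theorem PROJ {S : Set (ℂ × ℝ)} (hS : IsCompact S) {t₀ : ℝ} (h : ∀ x, (x, t₀) ∉ S) :
    ∀ᶠ t in 𝓝[Icc (0:ℝ) 1] t₀, ∀ x, (x, t) ∉ S := by
  have hc := (hS.image continuous_snd).isClosed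
  have : (Prod.snd '' S)ᶜ ∈ 𝓝 t₀ := hc.isOpen_compl.mem_nhds (by
    rintro ⟨⟨x, t⟩, hx, rfl⟩
    exact h x hx)
  filter_upwards [mem_nhdsWithin_of_mem_nhds this] with t ht x hx
  exact ht ⟨_, hx, rfl⟩

theorem JC {A : ℝ → Set ℂ} (hcl : IsClosed {p : ℂ × ℝ | p.2 ∈ Icc (0:ℝ) 1 ∧ p.1 ∈ A p.2})
    (hne : ∀ t ∈ Icc (0:ℝ) 1, (A t).Nonempty) (hl : LSC A) :
    ContinuousOn (fun p : ℂ × ℝ => infDist p.1 (A p.2)) (univ ×ˢ Icc (0:ℝ) 1) := by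
  have main : ∀ x : ℂ, ∀ t₀ ∈ Icc (0:ℝ) 1, ∀ ε > 0, ∀ᶠ t in 𝓝[Icc 0 1] t₀,
      |infDist x (A t) - infDist x (A t₀)| < ε := by
    intro x t₀ ht₀ ε hε
    obtain ⟨a, ha, had⟩ := (infDist_lt_iff (hne t₀ ht₀)).mp (show infDist x (A t₀) < infDist x (A t₀) + ε / 2 by linarith)
    have hK : IsCompact ({p : ℂ × ℝ | p.2 ∈ Icc (0:ℝ) 1 ∧ p.1 ∈ A p.2} ∩
        (closedBall x (infDist x (A t₀) - ε / 2)) ×ˢ Icc (0:ℝ) 1) :=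
      ((isCompact_closedBall _ _).prod isCompact_Icc).inter_left hcl
    have hP := PROJ hK (t₀ := t₀) (by
      rintro y ⟨⟨h1, h2⟩, h3, h4⟩
      have h5 := infDist_le_dist_of_mem (x := x) h2
      have h6 : dist y x ≤ infDist x (A t₀) - ε / 2 := h3
      rw [dist_comm] at h6
      simp only at h5
      linarith)
    filter_upwards [hl t₀ ht₀ a ha (ε / 2) (by linarith), hP, self_mem_nhdsWithin] with t h1 h2 htI
    obtain ⟨a', ha', hd⟩ := h1
    have e1 := infDist_le_dist_of_mem (x := x) ha'
    have e2 := dist_triangle x a a'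
    have e3 : infDist x (A t₀) - ε / 2 ≤ infDist x (A t) := by
      rw [le_infDist (hne t htI)]
      intro y hy
      by_contra hc
      refine h2 y ⟨⟨htI, hy⟩, ?_, htI⟩
      show dist y x ≤ _
      rw [dist_comm]; exact (not_le.mp hc).le
    rw [abs_lt]
    constructor <;> linarith
  rintro ⟨x, t₀⟩ ⟨-, ht₀⟩
  rw [ContinuousWithinAt, Metric.tendsto_nhds]
  intro ε hε
  have h1 := main x t₀ ht₀ (ε / 2) (by linarith)
  rw [nhdsWithin_prod_eq, nhdsWithin_univ]
  have h2 : ∀ᶠ y in 𝓝 x, dist y x < ε / 2 := Metric.ball_mem_nhds x (by linarith)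
  filter_upwards [h2.prod_mk h1] with p hp
  rw [Real.dist_eq]
  have h3 := infDist_le_infDist_add_dist (s := A p.2) (x := p.1) (y := x)
  have h4 := infDist_le_infDist_add_dist (s := A p.2) (x := x) (y := p.1)
  have h5 := abs_lt.mp hp.2
  have h6 := hp.1
  rw [dist_comm x] at h4
  rw [abs_lt]
  constructor <;> linarith

theorem HAUS {A : ℝ → Set ℂ} (hcp : IsCompact {p : ℂ × ℝ | p.2 ∈ Icc (0:ℝ) 1 ∧ p.1 ∈ A p.2})
    (hne : ∀ t ∈ Icc (0:ℝ) 1, (A t).Nonempty) (hl : LSC A) :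
    ∀ t₀ ∈ Set.Icc (0:ℝ) 1, ∀ ε > (0:ℝ), ∃ δ > (0:ℝ), ∀ t ∈ Set.Icc (0:ℝ) 1,
        |t - t₀| < δ → Metric.hausdorffDist (A t) (A t₀) < ε := by
  intro t₀ ht₀ ε hε
  have hJ := JC hcp.isClosed hne hl
  have hA0 : IsCompact (A t₀) := by
    have := (hcp.inter_right (isClosed_eq (f := fun p : ℂ × ℝ => p.2) (g := fun _ => t₀) (by fun_prop) (by fun_prop))).image continuous_fst
    convert this using 1
    ext x
    constructor
    · intro hx; exact ⟨(x, t₀), ⟨⟨ht₀, hx⟩, rfl⟩, rfl⟩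
    · rintro ⟨⟨y, s⟩, ⟨⟨h1, h2⟩, h3⟩, rfl⟩
      have : s = t₀ := h3
      subst this; exact h2
  have hA0c := hA0.isClosed
  have P1 := PROJ (hcp.inter_right (isClosed_le (f := fun _ => ε / 2) (g := fun p : ℂ × ℝ => infDist p.1 (A t₀))
    continuous_const ((continuous_infDist_pt _).comp continuous_fst))) (t₀ := t₀) (by
      rintro x ⟨⟨h1, h2⟩, h3⟩
      have h4 : ε / 2 ≤ infDist x (A t₀) := h3
      rw [infDist_zero_of_mem h2] at h4
      linarith)
  have hS : IsCompact ((A t₀ ×ˢ Icc (0:ℝ) 1) ∩ (fun p : ℂ × ℝ => infDist p.1 (A p.2)) ⁻¹' Ici (ε / 2)) := by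
    refine (hA0.prod isCompact_Icc).of_isClosed_subset ?_ inter_subset_left
    exact (hJ.mono (prod_mono (subset_univ _) (Subset.refl _))).preimage_isClosed_of_isClosed
      (hA0c.prod isClosed_Icc) isClosed_Ici
  have P2 := PROJ hS (t₀ := t₀) (by
      rintro x ⟨⟨h1, h2⟩, h3⟩
      have h4 : ε / 2 ≤ infDist x (A t₀) := h3
      rw [infDist_zero_of_mem h1] at h4
      linarith)
  have P3 := P1.and P2
  rw [eventually_nhdsWithin_iff, Metric.eventually_nhds_iff] at P3
  obtain ⟨δ, hδ, hd⟩ := P3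
  refine ⟨δ, hδ, fun t ht htd => ?_⟩
  obtain ⟨q1, q2⟩ := hd (y := t) (by rwa [Real.dist_eq]) ht
  refine lt_of_le_of_lt (hausdorffDist_le_of_mem_dist (r := ε / 2) (by linarith) ?_ ?_) (by linarith)
  · intro x hx
    have h1 : infDist x (A t₀) < ε / 2 := by
      by_contra hc
      exact q1 x ⟨⟨ht, hx⟩, not_lt.mp hc⟩
    obtain ⟨y, hy, hyd⟩ := (infDist_lt_iff (hne t₀ ht₀)).mp h1
    exact ⟨y, hy, hyd.le⟩
  · intro x hx
    have h1 : infDist x (A t) < ε / 2 := by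
      by_contra hc
      exact q2 x ⟨⟨hx, ht⟩, not_lt.mp hc⟩
    obtain ⟨y, hy, hyd⟩ := (infDist_lt_iff (hne t ht)).mp h1
    exact ⟨y, hy, hyd.le⟩

theorem LCOMP {E : ℝ → Set ℂ} (hE : IsClosed {p : ℂ × ℝ | p.2 ∈ Icc (0:ℝ) 1 ∧ p.1 ∈ E p.2})
    (hre : ∀ t ∈ Icc (0:ℝ) 1, ∀ q ∈ E t, q.re ≤ 0)
    (hbd : ∀ M : ℝ, ∃ Y0 : ℝ, ∀ t ∈ Icc (0:ℝ) 1, ∀ q ∈ E t, -M ≤ q.re → |q.im| ≤ Y0) :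
    IsCompact {p : ℂ × ℝ | p.2 ∈ Icc (0:ℝ) 1 ∧ p.1 ∈ ({0} ∪ Complex.exp '' E p.2 : Set ℂ)} := by
  have hcp : ∀ M : ℝ, IsCompact ({p : ℂ × ℝ | p.2 ∈ Icc (0:ℝ) 1 ∧ p.1 ∈ E p.2} ∩ {p | -M ≤ p.1.re}) := by
    intro M
    obtain ⟨Y0, hY⟩ := hbd M
    refine ((isCompact_closedBall (0:ℂ) (|M| + Y0)).prod (isCompact_Icc (a := (0:ℝ)) (b := 1))).of_isClosed_subset
      (hE.inter (isClosed_le continuous_const (Complex.continuous_re.comp continuous_fst))) ?_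
    rintro ⟨q, t⟩ ⟨⟨h1, h2⟩, h3⟩
    refine ⟨?_, h1⟩
    rw [mem_closedBall_zero_iff]
    simp only at h1 h2
    have h3 : -M ≤ q.re := h3
    have i1 := Complex.norm_le_abs_re_add_abs_im q
    have i2 := hY t h1 q h2 h3
    have i3 : |q.re| ≤ |M| := by
      rw [abs_of_nonpos (hre t h1 q h2)]
      exact le_trans (by linarith) (le_abs_self M)
    simp only
    linarith
  refine ((isCompact_closedBall (0:ℂ) 1).prod (isCompact_Icc (a := (0:ℝ)) (b := 1))).of_isClosed_subset ?_ ?_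
  · rw [← isOpen_compl_iff, isOpen_iff_mem_nhds]
    rintro ⟨z, t⟩ hz
    by_cases htI : t ∈ Icc (0:ℝ) 1
    · have hz0 : z ≠ 0 := fun h => hz ⟨htI, Or.inl h⟩
      have hn : 0 < ‖z‖ := norm_pos_iff.mpr hz0
      set M := -(Real.log (‖z‖ / 2)) with hM
      have hK := (hcp M).image (f := fun p : ℂ × ℝ => (Complex.exp p.1, p.2)) (by fun_prop)
      have h1 : ((fun p : ℂ × ℝ => (Complex.exp p.1, p.2)) '' ({p : ℂ × ℝ | p.2 ∈ Icc (0:ℝ) 1 ∧ p.1 ∈ E p.2} ∩ {p | -M ≤ p.1.re}))ᶜ ∈ 𝓝 (z, t) :=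
        hK.isClosed.isOpen_compl.mem_nhds (by
          rintro ⟨⟨q, s⟩, ⟨hq, -⟩, he⟩
          simp only [Prod.mk.injEq] at he
          obtain ⟨rfl, rfl⟩ := he
          exact hz ⟨hq.1, Or.inr ⟨q, hq.2, rfl⟩⟩)
      have h2 : {w : ℂ × ℝ | ‖z‖ / 2 < ‖w.1‖} ∈ 𝓝 (z, t) :=
        (isOpen_lt continuous_const (continuous_norm.comp continuous_fst)).mem_nhds (by show ‖z‖ / 2 < ‖z‖; linarith)
      filter_upwards [h1, h2] with w hw1 hw2
      rintro ⟨hwI, h | ⟨q, hq, he⟩⟩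
      · have : w.1 = 0 := h
        have hw2 : ‖z‖ / 2 < ‖w.1‖ := hw2
        rw [this, norm_zero] at hw2; linarith
      · refine hw1 ⟨(q, w.2), ⟨⟨hwI, hq⟩, ?_⟩, Prod.ext he rfl⟩
        have hw3 : ‖z‖ / 2 < ‖w.1‖ := hw2
        rw [← he, Complex.norm_exp] at hw3
        show -M ≤ q.re
        rw [hM, neg_neg]
        have := Real.log_le_log (by linarith) hw3.le
        rwa [Real.log_exp] at this
    · have : {w : ℂ × ℝ | w.2 ∈ (Icc (0:ℝ) 1)ᶜ} ∈ 𝓝 (z, t) :=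
        (isClosed_Icc.isOpen_compl.preimage continuous_snd).mem_nhds htI
      filter_upwards [this] with w hw hw2
      exact hw hw2.1
  · rintro ⟨x, t⟩ ⟨htI, h | ⟨q, hq, he⟩⟩
    · have : x = 0 := h
      subst this
      exact ⟨by simp, htI⟩
    · refine ⟨?_, htI⟩
      rw [mem_closedBall_zero_iff, ← he, Complex.norm_exp]
      exact Real.exp_le_one_iff.mpr (hre t htI q hq)

theorem LSC_exp {E : ℝ → Set ℂ} (hE : LSC E) : LSC (fun t => {0} ∪ Complex.exp '' E t) := by
  rintro t₀ ht₀ a (h | ⟨q, hq, rfl⟩) ε hε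
  · have : a = 0 := h
    subst this
    exact Eventually.of_forall fun t => ⟨0, Or.inl rfl, by simpa using hε⟩
  · obtain ⟨δ, hδ, hd⟩ := Metric.continuous_iff.mp Complex.continuous_exp q ε hε
    filter_upwards [hE t₀ ht₀ q hq δ hδ] with t ⟨q', hq', hdd⟩
    refine ⟨Complex.exp q', Or.inr ⟨q', hq', rfl⟩, ?_⟩
    rw [dist_comm] at hdd ⊢
    exact hd q' hdd

theorem EH_tot_closed {B C : ℝ → Set ℂ}
    (hB : ContinuousOn (fun p : ℂ × ℝ => infDist p.1 (B p.2)) (univ ×ˢ Icc (0:ℝ) 1))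
    (hC : ContinuousOn (fun p : ℂ × ℝ => infDist p.1 (C p.2)) (univ ×ˢ Icc (0:ℝ) 1)) :
    IsClosed {p : ℂ × ℝ | p.2 ∈ Icc (0:ℝ) 1 ∧ p.1 ∈ EH (B p.2) (C p.2)} := by
  have h1 := (hB.sub hC).preimage_isClosed_of_isClosed (isClosed_univ.prod isClosed_Icc) (isClosed_singleton (x := (0:ℝ)))
  have h2 : IsClosed {p : ℂ × ℝ | p.1.re ≤ 0} := isClosed_le (by fun_prop) continuous_const
  convert h1.inter h2 using 1
  ext ⟨q, t⟩
  constructor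
  · rintro ⟨h1, h2, h3, h4⟩
    exact ⟨⟨⟨trivial, h1⟩, sub_eq_zero.mpr (le_antisymm h2 h3)⟩, h4⟩
  · rintro ⟨⟨⟨-, h1⟩, h2⟩, h4⟩
    have h5 := sub_eq_zero.mp h2
    exact ⟨h1, le_of_eq h5, le_of_eq h5.symm, h4⟩

theorem LSC_EH {B C : ℝ → Set ℂ}
    (hB : ContinuousOn (fun p : ℂ × ℝ => infDist p.1 (B p.2)) (univ ×ˢ Icc (0:ℝ) 1))
    (hC : ContinuousOn (fun p : ℂ × ℝ => infDist p.1 (C p.2)) (univ ×ˢ Icc (0:ℝ) 1))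
    (hcl : ∀ t ∈ Icc (0:ℝ) 1, IsClosed (B t) ∧ IsClosed (C t) ∧ (B t).Nonempty ∧ (C t).Nonempty ∧ Disjoint (B t) (C t) ∧
      (∀ b ∈ B t, b.re < 0) ∧ ∀ b ∈ C t, b.re < 0) :
    LSC (fun t => EH (B t) (C t)) := by
  intro t₀ ht₀ q hq ε hε
  obtain ⟨clB, clC, neB, neC, disj, reB, reC⟩ := hcl t₀ ht₀
  obtain ⟨b, hb, hbd⟩ := clB.exists_infDist_eq_dist neB q
  obtain ⟨c, hc, hcd⟩ := clC.exists_infDist_eq_dist neC q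
  have hev : ∀ d : ℂ, ∀ᶠ s in 𝓝[<] (1:ℝ), dist (spk d q s) q < ε := by
    intro d
    have := ((spk_cont d q).tendsto 1).eventually (Metric.ball_mem_nhds (spk d q 1) hε)
    rw [spk_one] at this
    exact mem_nhdsWithin_of_mem_nhds this
  have hIoo : Ioo (0:ℝ) 1 ∈ 𝓝[<] (1:ℝ) := Ioo_mem_nhdsLT (by norm_num)
  obtain ⟨s, hs1, hs2, hs3⟩ := ((hev b).and ((hev c).and hIoo)).exists
  have hsI : s ∈ Icc (0:ℝ) 1 := ⟨hs3.1.le, hs3.2.le⟩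
  have hsO : s ∈ Ico (0:ℝ) 1 := ⟨hs3.1.le, hs3.2⟩
  set x := spk b q s with hx
  set y := spk c q s with hy
  have gx : infDist x (B t₀) < infDist x (C t₀) := SP clC neC disj hb hbd.symm hq.1 hsO
  have gy : infDist y (C t₀) < infDist y (B t₀) := SP clB neB disj.symm hc hcd.symm hq.2.1 hsO
  have xre : x.re ≤ 0 := spk_re_le' hsI (reB b hb).le hq.2.2
  have yre : y.re ≤ 0 := spk_re_le' hsI (reC c hc).le hq.2.2
  have pers : ∀ w : ℂ, ∀ D : ℝ → Set ℂ,
      ContinuousOn (fun p : ℂ × ℝ => infDist p.1 (D p.2)) (univ ×ˢ Icc (0:ℝ) 1) →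
      ContinuousWithinAt (fun t => infDist w (D t)) (Icc 0 1) t₀ := by
    intro w D hD
    exact (hD.comp (f := fun t : ℝ => (w, t)) (by fun_prop) (fun t ht => ⟨trivial, ht⟩)) t₀ ht₀
  have ex := (pers x B hB).eventually_lt (pers x C hC) gx
  have ey := (pers y C hC).eventually_lt (pers y B hB) gy
  filter_upwards [ex, ey] with t h1 h2
  have hseg : IsPreconnected (segment ℝ x y) := (convex_segment x y).isPreconnected
  obtain ⟨w, hw, he⟩ := hseg.intermediate_value₂ (left_mem_segment ℝ x y) (right_mem_segment ℝ x y)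
    (f := fun w => infDist w (B t)) (g := fun w => infDist w (C t)) (continuous_infDist_pt _).continuousOn
    (continuous_infDist_pt _).continuousOn h1.le h2.le
  refine ⟨w, ⟨le_of_eq he, le_of_eq he.symm, ?_⟩, ?_⟩
  · exact (convex_halfSpace_re_le 0).segment_subset xre yre hw
  · have := (convex_ball q ε).segment_subset (mem_ball.mpr hs1) (mem_ball.mpr hs2) hw
    rw [dist_comm]; exact this
end part13

section part14
section bnd
variable {Fr : Set ℂ} {h f : ℂ → ℝ → ℂ}

theorem FIM (D : Dat Fr h f) (M : ℝ) : ∃ Y0 : ℝ, ∀ z ∈ Fr \ {0}, ∀ t ∈ Icc (0:ℝ) 1, -M ≤ (f z t).re → |(f z t).im| ≤ Y0 := by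
  have hcl : IsCompact ((Fr ×ˢ Icc (0:ℝ) 1) ∩ (fun p : ℂ × ℝ => ‖h p.1 p.2‖) ⁻¹' (Ici (Real.exp (-M)))) :=
    (D.cpt.prod isCompact_Icc).of_isClosed_subset
      (D.hcont.norm.preimage_isClosed_of_isClosed (D.cpt.prod isCompact_Icc).isClosed isClosed_Ici)
      inter_subset_left
  have hsub : ((Fr ×ˢ Icc (0:ℝ) 1) ∩ (fun p : ℂ × ℝ => ‖h p.1 p.2‖) ⁻¹' (Ici (Real.exp (-M)))) ⊆
      (Fr \ {0}) ×ˢ Icc (0:ℝ) 1 := by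
    rintro ⟨z, t⟩ ⟨⟨h1, h2⟩, h3⟩
    refine ⟨⟨h1, ?_⟩, h2⟩
    intro hz
    have hz : z = 0 := hz
    have h3 : Real.exp (-M) ≤ ‖h z t‖ := h3
    rw [hz, D.hfix t h2, norm_zero] at h3
    linarith [Real.exp_pos (-M)]
  obtain ⟨Y0, hY⟩ := hcl.exists_bound_of_continuousOn (D.hf.mono hsub)
  refine ⟨Y0, fun z hz t ht hM => ?_⟩
  refine (Complex.abs_im_le_norm _).trans (hY (z, t) ⟨⟨hz.1, ht⟩, ?_⟩)
  show Real.exp (-M) ≤ ‖h z t‖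
  rw [← D.hfe z hz t ht, Complex.norm_exp, Real.exp_le_exp]
  exact hM

theorem BC_basic (D : Dat Fr h f) : ∀ t ∈ Icc (0:ℝ) 1, IsClosed (Bs Fr f t) ∧ IsClosed (Cs Fr f t) ∧
    (Bs Fr f t).Nonempty ∧ (Cs Fr f t).Nonempty ∧ Disjoint (Bs Fr f t) (Cs Fr f t) ∧
      (∀ b ∈ Bs Fr f t, b.re < 0) ∧ ∀ b ∈ Cs Fr f t, b.re < 0 := by
  intro t ht
  obtain ⟨z, hz⟩ := D.ne
  refine ⟨Bs_closed D ht, Cs_closed D ht, ⟨_, z, hz, 0, le_rfl, rfl⟩, ⟨_, z, hz, 1, by norm_num, rfl⟩, BC_disj D ht, ?_, ?_⟩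
  · rintro b ⟨w, hw, k, -, rfl⟩
    rw [Complex.add_re, tpi_re, add_zero]; exact f_re D ht hw
  · rintro b ⟨w, hw, k, -, rfl⟩
    rw [Complex.add_re, tpi_re, add_zero]; exact f_re D ht hw

theorem BND (D : Dat Fr h f) {r0 : ℝ} (hr : ∀ t ∈ Icc (0:ℝ) 1, ∀ q : ℂ, q.re ≤ 0 →
    infDist q (Bs Fr f t) ≤ r0 ∨ infDist q (Cs Fr f t) ≤ r0) (M : ℝ) :
    ∃ Y0 : ℝ, ∀ t ∈ Icc (0:ℝ) 1, ∀ q : ℂ, -M ≤ q.re → q.re ≤ 0 →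
      (q ∈ PS (Cs Fr f t) (Bs Fr f t) → -Y0 ≤ q.im) ∧ (q ∈ PS (Bs Fr f t) (Cs Fr f t) → q.im ≤ Y0) := by
  obtain ⟨Y1, hY⟩ := FIM D (M + r0)
  refine ⟨Y1 + r0, fun t ht q hq1 hq2 => ?_⟩
  obtain ⟨clB, clC, neB, neC, -, -, -⟩ := BC_basic D t ht
  have key : ∀ z ∈ Fr \ {0}, ∀ k : ℤ, dist q (f z t + tpi k) ≤ r0 →
      |q.im - (f z t).im - 2 * Real.pi * k| ≤ r0 ∧ |(f z t).im| ≤ Y1 := by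
    intro z hz k hd
    rw [Complex.dist_eq] at hd
    have h1 := (Complex.abs_im_le_norm _).trans hd
    have h2 := (Complex.abs_re_le_norm _).trans hd
    simp only [Complex.sub_im, Complex.sub_re, Complex.add_im, Complex.add_re, tpi_re, tpi_im, add_zero] at h1 h2
    refine ⟨by rw [sub_sub]; exact h1, hY z hz t ht ?_⟩
    linarith [(abs_le.mp h2).2]
  constructor
  · intro hq
    obtain ⟨c, ⟨z, hz, k, hk, rfl⟩, hcd⟩ := clC.exists_infDist_eq_dist neC q
    obtain ⟨h1, h2⟩ := key z hz k (near_re ((hr t ht q hq2).symm) hq hcd).2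
    have hk' : (0:ℝ) < k := by exact_mod_cast hk
    have := mul_pos Real.pi_pos hk'
    linarith [(abs_le.mp h1).1, (abs_le.mp h2).1]
  · intro hq
    obtain ⟨c, ⟨z, hz, k, hk, rfl⟩, hcd⟩ := clB.exists_infDist_eq_dist neB q
    obtain ⟨h1, h2⟩ := key z hz k (near_re (hr t ht q hq2) hq hcd).2
    have hk' : (k:ℝ) ≤ 0 := by exact_mod_cast hk
    have := mul_nonneg Real.pi_pos.le (sub_nonneg.mpr hk')
    linarith [(abs_le.mp h1).2, (abs_le.mp h2).2]

theorem EHbd (D : Dat Fr h f) {r0 : ℝ} (hr : ∀ t ∈ Icc (0:ℝ) 1, ∀ q : ℂ, q.re ≤ 0 →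
    infDist q (Bs Fr f t) ≤ r0 ∨ infDist q (Cs Fr f t) ≤ r0) (M : ℝ) :
    ∃ Y0 : ℝ, ∀ t ∈ Icc (0:ℝ) 1, ∀ q ∈ EH (Bs Fr f t) (Cs Fr f t), -M ≤ q.re → |q.im| ≤ Y0 := by
  obtain ⟨Y0, hY⟩ := BND D hr M
  refine ⟨Y0, fun t ht q hq hM => ?_⟩
  obtain ⟨h1, h2⟩ := hY t ht q hM hq.2.2
  exact abs_le.mpr ⟨h1 hq.2.1, h2 hq.1⟩

theorem EHq1 (D : Dat Fr h f) {r0 : ℝ} (hr : ∀ t ∈ Icc (0:ℝ) 1, ∀ q : ℂ, q.re ≤ 0 →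
    infDist q (Bs Fr f t) ≤ r0 ∨ infDist q (Cs Fr f t) ≤ r0) {t : ℝ} (ht : t ∈ Icc (0:ℝ) 1) :
    ∃ q ∈ EH (Bs Fr f t) (Cs Fr f t), q.re = 0 := by
  obtain ⟨Y0, hY⟩ := BND D hr 0
  have hre : ∀ s : ℝ, ((s:ℂ) * Complex.I).re = 0 := by intro s; simp
  have him : ∀ s : ℝ, ((s:ℂ) * Complex.I).im = s := by intro s; simp
  have h1 : ((-(Y0 + 1) : ℝ) : ℂ) * Complex.I ∈ PS (Bs Fr f t) (Cs Fr f t) := by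
    rcases PS_total (Bs Fr f t) (Cs Fr f t) (((-(Y0 + 1) : ℝ) : ℂ) * Complex.I) with h | h
    · exact h
    · have := (hY t ht _ (by rw [hre]; norm_num) (hre _).le).1 h
      rw [him] at this; linarith
  have h2 : ((Y0 + 1 : ℝ) : ℂ) * Complex.I ∈ PS (Cs Fr f t) (Bs Fr f t) := by
    rcases PS_total (Bs Fr f t) (Cs Fr f t) (((Y0 + 1 : ℝ) : ℂ) * Complex.I) with h | h
    · have := (hY t ht _ (by rw [hre]; norm_num) (hre _).le).2 h
      rw [him] at this; linarith
    · exact h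
  obtain ⟨s, -, he⟩ := (isPreconnected_univ (α := ℝ)).intermediate_value₂ (mem_univ (-(Y0 + 1))) (mem_univ (Y0 + 1))
    (f := fun s : ℝ => infDist ((s:ℂ) * Complex.I) (Bs Fr f t)) (g := fun s : ℝ => infDist ((s:ℂ) * Complex.I) (Cs Fr f t))
    ((continuous_infDist_pt _).comp (by fun_prop)).continuousOn
    ((continuous_infDist_pt _).comp (by fun_prop)).continuousOn h1 h2
  exact ⟨_, ⟨le_of_eq he, le_of_eq he.symm, (hre s).le⟩, hre s⟩

theorem EHinj (D : Dat Fr h f) {t : ℝ} (ht : t ∈ Icc (0:ℝ) 1) {L : ℂ → ℂ → ℂ}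
    (H : Cfx (Bs Fr f t) (Cs Fr f t) L) : InjOn Complex.exp (EH (Bs Fr f t) (Cs Fr f t)) := by
  intro q hq q' hq' he
  obtain ⟨k, hk⟩ := exp_eq_tpi he
  rcases lt_trichotomy k 0 with h | h | h
  · exact (INJ D ht H hq'.1 hq'.2.1 hq.1 hq.2.1 (k := -k) (by omega) (by rw [hk, tpi_neg]; ring)).elim
  · subst h
    rw [hk]; simp [tpi]
  · exact (INJ D ht H hq.1 hq.2.1 hq'.1 hq'.2.1 h hk).elim

theorem LSC_f (D : Dat Fr h f) {z : ℂ} (hz : z ∈ Fr \ {0}) (k : ℤ) {t₀ : ℝ} (ht₀ : t₀ ∈ Icc (0:ℝ) 1) {ε : ℝ} (hε : 0 < ε) :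
    ∀ᶠ t in 𝓝[Icc 0 1] t₀, dist (f z t₀ + tpi k) (f z t + tpi k) < ε := by
  have hc : ContinuousOn (fun t => f z t + tpi k) (Icc 0 1) :=
    (D.hf.comp (f := fun t : ℝ => (z, t)) (by fun_prop) (fun t ht => ⟨hz, ht⟩)).add continuousOn_const
  filter_upwards [(hc t₀ ht₀).eventually (Metric.ball_mem_nhds _ hε)] with t ht
  rw [dist_comm]; exact ht

theorem LSC_B (D : Dat Fr h f) : LSC (Bs Fr f) ∧ LSC (Cs Fr f) := by
  constructor
  · rintro t₀ ht₀ a ⟨z, hz, k, hk, rfl⟩ ε hε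
    filter_upwards [LSC_f D hz k ht₀ hε] with t ht
    exact ⟨_, ⟨z, hz, k, hk, rfl⟩, ht⟩
  · rintro t₀ ht₀ a ⟨z, hz, k, hk, rfl⟩ ε hε
    filter_upwards [LSC_f D hz k ht₀ hε] with t ht
    exact ⟨_, ⟨z, hz, k, hk, rfl⟩, ht⟩

theorem EH_avoid (D : Dat Fr h f) {t : ℝ} (ht : t ∈ Icc (0:ℝ) 1) {q : ℂ} (hq : q ∈ EH (Bs Fr f t) (Cs Fr f t)) :
    Complex.exp q ∉ (fun z => h z t) '' Fr := by
  rintro ⟨z, hz, he⟩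
  simp only at he
  obtain ⟨clB, clC, neB, neC, hd, -, -⟩ := BC_basic D t ht
  have hz0 : z ∈ Fr \ {0} := ⟨hz, by
    intro h0
    have h0 : z = 0 := h0
    rw [h0, D.hfix t ht] at he
    exact Complex.exp_ne_zero q he.symm⟩
  rw [← D.hfe z hz0 t ht] at he
  obtain ⟨k, hk⟩ := exp_eq_tpi he.symm
  rcases le_or_gt k 0 with h | h
  · exact PS_right clC neC hd.symm hq.2.1 ⟨z, hz0, k, h, hk⟩
  · exact PS_right clB neB hd hq.1 ⟨z, hz0, k, h, hk⟩

theorem DAT_HAUS (D : Dat Fr h f) {r0 : ℝ} (hr : ∀ t ∈ Icc (0:ℝ) 1, ∀ q : ℂ, q.re ≤ 0 →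
    infDist q (Bs Fr f t) ≤ r0 ∨ infDist q (Cs Fr f t) ≤ r0) :
    ∀ t₀ ∈ Set.Icc (0:ℝ) 1, ∀ ε > (0:ℝ), ∃ δ > (0:ℝ), ∀ t ∈ Set.Icc (0:ℝ) 1,
        |t - t₀| < δ → Metric.hausdorffDist ({0} ∪ Complex.exp '' EH (Bs Fr f t) (Cs Fr f t))
          ({0} ∪ Complex.exp '' EH (Bs Fr f t₀) (Cs Fr f t₀)) < ε := by
  have hb := BC_basic D
  have hB := JC (BC_closed D).1 (fun t ht => (hb t ht).2.2.1) (LSC_B D).1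
  have hC := JC (BC_closed D).2 (fun t ht => (hb t ht).2.2.2.1) (LSC_B D).2
  exact HAUS (A := fun t => {0} ∪ Complex.exp '' EH (Bs Fr f t) (Cs Fr f t))
    (LCOMP (EH_tot_closed hB hC) (fun t ht q hq => hq.2.2) (EHbd D hr))
    (fun t ht => ⟨0, Or.inl rfl⟩) (LSC_exp (LSC_EH hB hC hb))

end bnd
end part14

theorem XT_mem {h : ℂ → ℝ → ℂ} {X : Set ℂ} {t : ℝ} {z : ℂ} (hz : z ∈ frontier X) : h z t ∈ XtSet h X t :=
  fun hu => hu.1 ⟨z, hz, rfl⟩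

theorem XT_arc {h : ℂ → ℝ → ℂ} {X : Set ℂ} {t : ℝ} (h0 : (0:ℂ) ∈ frontier X) (hfix : h 0 t = 0)
    (hXtb : XtSet h X t ⊆ Metric.ball 0 1) {A : Set ℂ} {γ : ℝ → ℂ} (hc : ContinuousOn γ (Icc 0 1))
    (hi : InjOn γ (Icc 0 1)) (hA : γ '' Icc 0 1 = A) (hγ0 : γ 0 = 0)
    (hav : ∀ x ∈ A, x ≠ 0 → x ∉ (fun z => h z t) '' frontier X) (hx1 : ∃ x ∈ A, 1 ≤ ‖x‖) :
    (∃ b : ℂ, IsArcEnds A 0 b) ∧ XtSet h X t ∩ A = {0} := by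
  refine ⟨⟨γ 1, γ, hc, hi, hA, hγ0, rfl⟩, ?_⟩
  have h0X : (0:ℂ) ∈ XtSet h X t := by
    have := XT_mem (h := h) (t := t) h0
    rwa [hfix] at this
  have hI : γ '' Ioc 0 1 = A \ {0} := by
    ext x
    constructor
    · rintro ⟨s, hs, rfl⟩
      refine ⟨hA ▸ ⟨s, ⟨hs.1.le, hs.2⟩, rfl⟩, fun he => ?_⟩
      have he : γ s = 0 := he
      have := hi ⟨hs.1.le, hs.2⟩ (by simp : (0:ℝ) ∈ Icc (0:ℝ) 1) (he.trans hγ0.symm)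
      exact absurd this hs.1.ne'
    · rintro ⟨hx, hx0⟩
      rw [← hA] at hx
      obtain ⟨s, hs, rfl⟩ := hx
      refine ⟨s, ⟨lt_of_le_of_ne hs.1 ?_, hs.2⟩, rfl⟩
      rintro rfl
      exact hx0 hγ0
  have hpc : IsPreconnected (A \ {0}) := by
    rw [← hI]
    exact isPreconnected_Ioc.image γ (hc.mono Ioc_subset_Icc_self)
  have hsub : A \ {0} ⊆ ((fun z => h z t) '' frontier X)ᶜ := fun x hx => hav x hx.1 hx.2
  obtain ⟨x1, hx1A, hx1n⟩ := hx1
  have hx10 : x1 ∈ A \ {0} := ⟨hx1A, fun he => by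
    have he : x1 = 0 := he
    rw [he, norm_zero] at hx1n; linarith⟩
  have hx1u : x1 ∈ unbddComp ((fun z => h z t) '' frontier X) := by
    by_contra hcon
    have := hXtb (show x1 ∈ XtSet h X t from hcon)
    rw [mem_ball_zero_iff] at this
    linarith
  apply Subset.antisymm
  · rintro x ⟨hxX, hxA⟩
    by_contra hx0
    apply hxX
    have hxm : x ∈ A \ {0} := ⟨hxA, hx0⟩
    refine ⟨hsub hxm, ?_⟩
    have hmem : x1 ∈ connectedComponentIn ((fun z => h z t) '' frontier X)ᶜ x :=
      hpc.subset_connectedComponentIn hxm hsub hx10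
    rw [connectedComponentIn_eq hmem]
    exact hx1u.2
  · rintro x hx
    have hx : x = 0 := hx
    subst hx
    exact ⟨h0X, hA ▸ ⟨0, by simp, hγ0⟩⟩

/-- there exists a continuously varying (in the Hausdorff metric) family
of arcs `L^t` with endpoint `0` such that `X^t ∩ L^t = {0}`. -/
theorem metric_arc_exists
    (X : Set ℂ) (hXne : X.Nonempty) (hXcpt : IsCompact X) (hXconn : IsConnected X)
    (hXns : IsConnected Xᶜ) (h0 : (0:ℂ) ∈ frontier X) (hXb : X ⊆ Metric.ball 0 1)
    (h : ℂ → ℝ → ℂ)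
    (hcont : ContinuousOn (fun p : ℂ × ℝ => h p.1 p.2) (frontier X ×ˢ Set.Icc 0 1))
    (hinj : ∀ t ∈ Set.Icc (0:ℝ) 1, Set.InjOn (fun z => h z t) (frontier X))
    (hid : ∀ z ∈ frontier X, h z 0 = z)
    (hfix : ∀ t ∈ Set.Icc (0:ℝ) 1, h 0 t = 0)
    (hXtb : ∀ t ∈ Set.Icc (0:ℝ) 1, XtSet h X t ⊆ Metric.ball 0 1)
    (hacc : Accessible Xᶜ 0) :
    ∃ L : ℝ → Set ℂ,
      (∀ t ∈ Set.Icc (0:ℝ) 1,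
        (∃ b : ℂ, IsArcEnds (L t) 0 b) ∧ XtSet h X t ∩ L t = {0}) ∧
      -- continuity of t ↦ L t in the Hausdorff metric
      (∀ t₀ ∈ Set.Icc (0:ℝ) 1, ∀ ε > (0:ℝ), ∃ δ > (0:ℝ), ∀ t ∈ Set.Icc (0:ℝ) 1,
        |t - t₀| < δ → Metric.hausdorffDist (L t) (L t₀) < ε) := by
  have hXcl := hXcpt.isClosed
  have hFX : frontier X ⊆ X := hXcl.frontier_subset
  have hb : ∀ z ∈ frontier X, ∀ t ∈ Icc (0:ℝ) 1, ‖h z t‖ < 1 := by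
    intro z hz t ht
    have := hXtb t ht (XT_mem hz)
    rwa [mem_ball_zero_iff] at this
  by_cases hne : (frontier X \ {0}).Nonempty
  · obtain ⟨γ, hγc, hγi, hγ1, hγX, R, hR1, hγ0, hγr⟩ := ARC0 hXcl hXns.isPreconnected (hFX h0) hXb hacc
    obtain ⟨l, Λ, hl, hle, hΛ, hΛe, hn1, hn2⟩ := STAGE1 hγc hγi hγ0 hR1 hγr hγ1
    have hK : frontier X \ {0} ⊆ (γ '' Icc 0 1 ∪ rayR R)ᶜ := by
      rintro z ⟨hz, hz0⟩ (⟨s, hs, rfl⟩ | hzr)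
      · rcases hs.2.eq_or_lt with h1 | h1
        · rw [h1] at hz0; exact hz0 hγ1
        · exact hγX ⟨s, ⟨hs.1, h1⟩, rfl⟩ (hFX hz)
      · have h1 := hXb (hFX hz)
        rw [mem_ball_zero_iff] at h1
        have h2 := (le_abs_self _).trans (Complex.abs_re_le_norm z)
        have h3 : R ≤ z.re := hzr.2
        linarith
    have hFc : IsCompact (frontier X) := hXcpt.of_isClosed_subset isClosed_frontier hFX
    obtain ⟨f, Λt, hf, hfe, hΛt, hΛte, hm1, hm2⟩ := STAGE2 hFc h0 hcont hinj hid hfix (hl.mono hK)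
      (fun w hw => hle w (hK hw)) (hΛ.mono (prod_mono hK (prod_mono hK le_rfl)))
      (fun z hz w hw v hv => hΛe z (hK hz) w (hK hw) v hv)
      (fun w hw => by
        obtain ⟨η, hη, H⟩ := hn1 w (hK hw)
        exact ⟨η, hη, fun z hz => H z (hK hz)⟩)
      (fun w hw => by
        obtain ⟨η, hη, H⟩ := hn2 w (hK hw)
        exact ⟨η, hη, fun z hz => H z (hK hz)⟩)
    have D : Dat (frontier X) h f :=
      { cpt := hFc
        conn := frontier_conn hXcl hXconn.isPreconnected hXns.isPreconnected
        zero := h0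
        ne := hne
        hcont := hcont
        hinj := hinj
        hfix := hfix
        hf := hf
        hfe := hfe
        hb := hb }
    obtain ⟨r0, hr⟩ := NEAR D
    refine ⟨fun t => {0} ∪ Complex.exp '' EH (Bs (frontier X) f t) (Cs (frontier X) f t), ?_, DAT_HAUS D hr⟩
    intro t ht
    obtain ⟨Λ', HC⟩ := CFG_AT D hΛt hΛte hm1 hm2 ht (hr t ht)
    obtain ⟨L, HL⟩ := CFG_OUT HC
    obtain ⟨q1, hq1, hq1r⟩ := EHq1 D hr ht
    obtain ⟨σ, h1, h2, h3, h4⟩ := SLICE HL (fun M => by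
      obtain ⟨Y0, hY⟩ := EHbd D hr M
      exact ⟨Y0, hY t ht⟩) (EHinj D ht HL) ⟨q1, hq1⟩ (CONNL HC)
    refine XT_arc h0 (hfix t ht) (hXtb t ht) h1 h2 h3 h4 ?_ ⟨Complex.exp q1, Or.inr ⟨q1, hq1, rfl⟩, ?_⟩
    · rintro x (hx | ⟨q, hq, rfl⟩) hx0
      · exact absurd hx hx0
      · exact EH_avoid D ht hq
    · rw [Complex.norm_exp, hq1r, Real.exp_zero]
  · have hF0 : ∀ z ∈ frontier X, z = 0 := by
      intro z hz
      by_contra hz0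
      exact hne ⟨z, hz, hz0⟩
    refine ⟨fun _ => (fun s : ℝ => (s:ℂ)) '' Icc 0 1, ?_, ?_⟩
    · intro t ht
      refine XT_arc h0 (hfix t ht) (hXtb t ht) (γ := fun s : ℝ => (s:ℂ)) (by fun_prop)
        (Complex.ofReal_injective.injOn) rfl (by simp) ?_ ⟨1, ⟨1, by simp, by simp⟩, by simp⟩
      rintro x - hx0 ⟨z, hz, he⟩
      simp only at he
      rw [hF0 z hz, hfix t ht] at he
      exact hx0 he.symm
    · intro t₀ _ ε hε
      refine ⟨1, one_pos, fun t _ _ => ?_⟩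
      rw [hausdorffDist_self_zero]; exact hε
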